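/- Let Ω ⊆ ℝⁿ be a C¹ domain, let a : [0,∞) → ℝ be C¹ with locally Lipschitz derivative, a(t) > 0 and (t·a(t))′ > 0 for all t ≥ 0, let f ∈ C¹(ℝ), and let u ∈ C³(Ω) ∩ C¹(cl Ω) be a non-constant stable weak solution of Δ_a u + f(u) = 0 in Ω. Let Ω₀ ⊆ Ω be a nonempty open connected subset such that ∇u = 0 at every point of ∂Ω₀. If u has moderate energy growth in Ω₀, then Ω₀ = Ω, crit(u) = ∅, and there exists a unit vector e ∈ ℝⁿ with ⟨∇u, e⟩ > 0 everywhere in Ω. -/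

import Mathlib

/-!
Every directional derivative `⟪∇u, e⟫` is a weak solution of the linearized equation
`div (A(∇u) ∇v) + f'(u) v = 0`. As `∇u` vanishes on `∂Ω₀`, extending its positive part on `Ω₀` by
zero gives a locally Lipschitz function `w ≥ 0` on `Ω`. Let `Q(v, ζ)` be the bilinear form of the
linearized equation; stability says that `Q(ψ, ψ) ≥ 0` for test functions `ψ`. Take
`ψ = φ_j w + t ζ` with the cut-offs `φ_j` of moderate energy growth: testing the equation with
`φ_j² w` removes the term `∫ φ_j² (⟨A(∇u) ∇w, ∇w⟩ - f'(u) w²)`, the remaining quadratic term is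
controlled by `∫ w² ⟨A(∇u) ∇φ_j, ∇φ_j⟩ → 0`, and in the limit a multiple of `t Q(w, ζ) + O(t²)` is
nonnegative for every real `t`, so `Q(w, ζ) = 0`. Since `φ_j w` need not have compact support in
`Ω`, all this is done for `(w - ε)⁺` first. The strong maximum principle now shows that `w`, if
positive at one point, is positive on all of `Ω`, which forces `Ω₀ = Ω` and `⟪∇u, e⟫ > 0`.

It remains to find a point of `Ω₀` at which `∇u ≠ 0`. If `∇u` vanished on `Ω₀`, then `∇u` would
vanish on a ball touching the boundary of the interior of its zero set, and there `v = u - const`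
satisfies `|Δv| ≤ C (|v| + |∇v|)`; a Carleman estimate across the sphere continues `v = 0` past the
point of contact, so `u` would be constant.
-/

open MeasureTheory Set Metric Filter
open scoped RealInnerProductSpace Topology ENNReal

noncomputable section

variable {n : ℕ}

/-- The quasilinear operator matrix `A(p)` applied to a vector `v`:
`A(p)v = a(|p|) v + (a'(|p|)/|p|) ⟨p,v⟩ p` (with the second term vanishing at `p = 0`). -/
def Aop (a : ℝ → ℝ) (p v : EuclideanSpace ℝ (Fin n)) : EuclideanSpace ℝ (Fin n) :=
  a ‖p‖ • v + ((deriv a ‖p‖ / ‖p‖) * ⟪p, v⟫) • p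

/-- `λ₁(t) = a(t) + t·a'(t) = (t a(t))'`. -/
def lam1 (a : ℝ → ℝ) (t : ℝ) : ℝ := a t + t * deriv a t

/-- `λ₂(t) = a(t)`. -/
def lam2 (a : ℝ → ℝ) (t : ℝ) : ℝ := a t

/-- `λmax(t) = max{λ₁(t), λ₂(t)}`. -/
def lamMax (a : ℝ → ℝ) (t : ℝ) : ℝ := max (lam1 a t) (lam2 a t)

/-- A Lipschitz test function with compact support contained in `Ω`. -/
def IsTestOn (Ω : Set (EuclideanSpace ℝ (Fin n))) (φ : EuclideanSpace ℝ (Fin n) → ℝ) : Prop :=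
  (∃ K, LipschitzWith K φ) ∧ HasCompactSupport φ ∧ tsupport φ ⊆ Ω

/-- `u` is a weak solution of `div(a(|∇u|)∇u) + f(u) = 0` in `Ω`. -/
def IsWeakSolution (a f : ℝ → ℝ) (Ω : Set (EuclideanSpace ℝ (Fin n)))
    (u : EuclideanSpace ℝ (Fin n) → ℝ) : Prop :=
  ∀ φ : EuclideanSpace ℝ (Fin n) → ℝ, IsTestOn Ω φ →
    ∫ x in Ω, a ‖gradient u x‖ * ⟪gradient u x, gradient φ x⟫
      = ∫ x in Ω, f (u x) * φ x

/-- The stability inequality for a solution `u`. -/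
def IsStable (a f : ℝ → ℝ) (Ω : Set (EuclideanSpace ℝ (Fin n)))
    (u : EuclideanSpace ℝ (Fin n) → ℝ) : Prop :=
  ∀ φ : EuclideanSpace ℝ (Fin n) → ℝ, IsTestOn Ω φ →
    ∫ x in Ω, deriv f (u x) * φ x ^ 2
      ≤ ∫ x in Ω, ⟪Aop a (gradient u x) (gradient φ x), gradient φ x⟫

/-- `u` has moderate energy growth in `Ω₀`. -/
def ModerateEnergyGrowth (a : ℝ → ℝ) (u : EuclideanSpace ℝ (Fin n) → ℝ)
    (Ω₀ : Set (EuclideanSpace ℝ (Fin n))) : Prop :=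
  ∃ φ : ℕ → EuclideanSpace ℝ (Fin n) → ℝ,
    (∀ j, ∃ K, LipschitzWith K (φ j)) ∧
    (∀ j, HasCompactSupport (φ j)) ∧
    (∀ j x, 0 ≤ φ j x) ∧
    (∀ K : Set (EuclideanSpace ℝ (Fin n)), IsCompact K → K ⊆ closure Ω₀ →
      TendstoUniformlyOn (fun j => φ j) (fun _ => (1 : ℝ)) atTop K) ∧
    Tendsto (fun j => ∫ x in Ω₀, ‖gradient u x‖ ^ 2 *
        ⟪Aop a (gradient u x) (gradient (φ j) x), gradient (φ j) x⟫)
      atTop (nhds 0)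

/-- A `C^k` domain: nonempty, open, connected, with boundary locally given by a regular
`C^k` defining function. -/
def IsCkDomain (k : ℕ∞) (Ω : Set (EuclideanSpace ℝ (Fin n))) : Prop :=
  Ω.Nonempty ∧ IsOpen Ω ∧ IsConnected Ω ∧
    ∀ p ∈ frontier Ω, ∃ V : Set (EuclideanSpace ℝ (Fin n)),
      ∃ g : EuclideanSpace ℝ (Fin n) → ℝ,
        IsOpen V ∧ p ∈ V ∧ ContDiffOn ℝ k g V ∧ (∀ x ∈ V, gradient g x ≠ 0) ∧
        Ω ∩ V = {x ∈ V | g x < 0}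

/-- A `C^k` domain together with its interior unit normal field `η`. -/
def IsCkDomainWithNormal (k : ℕ∞) (Ω : Set (EuclideanSpace ℝ (Fin n)))
    (η : EuclideanSpace ℝ (Fin n) → EuclideanSpace ℝ (Fin n)) : Prop :=
  Ω.Nonempty ∧ IsOpen Ω ∧ IsConnected Ω ∧
    ∀ p ∈ frontier Ω, ∃ V : Set (EuclideanSpace ℝ (Fin n)),
      ∃ g : EuclideanSpace ℝ (Fin n) → ℝ,
        IsOpen V ∧ p ∈ V ∧ ContDiffOn ℝ k g V ∧ (∀ x ∈ V, gradient g x ≠ 0) ∧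
        Ω ∩ V = {x ∈ V | g x < 0} ∧
        η p = -(‖gradient g p‖⁻¹ • gradient g p)

/-- `a ∈ C^{1,1}_loc([0,∞))`: `C¹` on `[0,∞)` with locally Lipschitz derivative. -/
def C11Loc (a : ℝ → ℝ) : Prop :=
  ContDiffOn ℝ 1 a (Ici 0) ∧
    ∀ t ∈ Ici (0 : ℝ), ∃ V ∈ 𝓝[Ici (0 : ℝ)] t, ∃ K, LipschitzOnWith K (deriv a) V

open scoped Gradient NNReal ContDiff

local notation "𝔼(" n ")" => EuclideanSpace ℝ (Fin n)

section Gradient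

variable {E : Type*} [NormedAddCommGroup E] [InnerProductSpace ℝ E] [CompleteSpace E]
  {f g : E → ℝ} {x : E}

theorem gradient_add (hf : DifferentiableAt ℝ f x) (hg : DifferentiableAt ℝ g x) :
    ∇ (fun y => f y + g y) x = ∇ f x + ∇ g x := by
  simp only [gradient, fderiv_fun_add hf hg, map_add]

theorem gradient_const_mul (hf : DifferentiableAt ℝ f x) (r : ℝ) :
    ∇ (fun y => r * f y) x = r • ∇ f x := by
  simp [gradient, fderiv_const_mul hf r]

theorem gradient_sub (hf : DifferentiableAt ℝ f x) (hg : DifferentiableAt ℝ g x) :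
    ∇ (fun y => f y - g y) x = ∇ f x - ∇ g x := by
  simp only [gradient, fderiv_fun_sub hf hg, map_sub]

theorem gradient_sub_const (f : E → ℝ) (r : ℝ) : ∇ (fun y => f y - r) = ∇ f := by
  funext x
  simp only [gradient, fderiv_sub_const]

theorem gradient_mul (hf : DifferentiableAt ℝ f x) (hg : DifferentiableAt ℝ g x) :
    ∇ (fun y => f y * g y) x = f x • ∇ g x + g x • ∇ f x := by
  simp [gradient, fderiv_fun_mul hf hg]

theorem gradient_eq_zero_of_isLocalMin (h : IsLocalMin f x) : ∇ f x = 0 := by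
  rw [gradient, h.fderiv_eq_zero, map_zero]

theorem gradient_eq_zero_of_nonneg (h : ∀ y, 0 ≤ f y) (hx : f x = 0) : ∇ f x = 0 :=
  gradient_eq_zero_of_isLocalMin (Eventually.of_forall fun y => hx.trans_le (h y))

theorem gradient_eq_zero_of_notMem_tsupport (h : x ∉ tsupport f) : ∇ f x = 0 := by
  rw [(notMem_tsupport_iff_eventuallyEq.1 h).gradient_eq]
  exact gradient_const x 0

theorem exists_forall_eq_of_gradient_eq_zero {s : Set E} (hs : IsOpen s)
    (hconn : IsPreconnected s) (hf : DifferentiableOn ℝ f s) (hgrad : ∀ x ∈ s, ∇ f x = 0) :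
    ∃ k, ∀ x ∈ s, f x = k :=
  hs.exists_is_const_of_fderiv_eq_zero hconn hf fun x hx => by
    simpa [gradient] using hgrad x hx

theorem inner_gradient_of_hasFDerivAt {f' : E →L[ℝ] ℝ} (h : HasFDerivAt f f' x) (v : E) :
    ⟪v, ∇ f x⟫ = f' v := by
  rw [inner_gradient_right, h.fderiv, conj_trivial]

theorem norm_gradient (f : E → ℝ) (x : E) : ‖∇ f x‖ = ‖fderiv ℝ f x‖ :=
  LinearIsometryEquiv.norm_map _ _

theorem norm_gradient_le_of_lipschitzOnWith {K : ℝ≥0} {s : Set E} (hs : s ∈ 𝓝 x)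
    (hf : LipschitzOnWith K f s) : ‖∇ f x‖ ≤ K :=
  (norm_gradient f x).trans_le (norm_fderiv_le_of_lipschitzOn ℝ hs hf)

theorem measurable_gradient [MeasurableSpace E] [BorelSpace E] (f : E → ℝ) :
    Measurable (∇ f) :=
  ((InnerProductSpace.toDual ℝ E).symm.continuous.measurable).comp (measurable_fderiv ℝ f)

theorem contDiffAt_gradient {m k : ℕ∞ω} (hf : ContDiffAt ℝ k f x) (hmk : m + 1 ≤ k) :
    ContDiffAt ℝ m (∇ f) x :=
  (InnerProductSpace.toDual ℝ E).symm.contDiff.contDiffAt.comp x (hf.fderiv_right hmk)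

theorem contDiffOn_gradient {m k : ℕ∞ω} {s : Set E} (hs : IsOpen s) (hf : ContDiffOn ℝ k f s)
    (hmk : m + 1 ≤ k) : ContDiffOn ℝ m (∇ f) s := fun _ hx =>
  (contDiffAt_gradient (hf.contDiffAt (hs.mem_nhds hx)) hmk).contDiffWithinAt

theorem contDiff_gradient {m k : ℕ∞ω} (hf : ContDiff ℝ k f) (hmk : m + 1 ≤ k) :
    ContDiff ℝ m (∇ f) :=
  contDiff_iff_contDiffAt.2 fun _ => contDiffAt_gradient hf.contDiffAt hmk

theorem fderiv_gradient_apply (hf : ContDiffAt ℝ 2 f x) (e : E) :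
    fderiv ℝ (∇ f) x e = ∇ (fun y => ⟪∇ f y, e⟫) x := by
  have hf' : DifferentiableAt ℝ (fderiv ℝ f) x :=
    (hf.fderiv_right (m := 1) (by norm_num)).differentiableAt one_ne_zero
  have h_apply (w v : E) :
      fderiv ℝ (fun y => ⟪∇ f y, w⟫) x v = fderiv ℝ (fderiv ℝ f) x v w := by
    simp only [inner_gradient_left, fderiv_clm_apply hf' (differentiableAt_const w)]
    simp
  have hgrad : HasFDerivAt (∇ f) _ x :=
    (InnerProductSpace.toDual ℝ E).symm.hasFDerivAt.comp x hf'.hasFDerivAt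
  refine ext_inner_right ℝ fun v => ?_
  rw [inner_gradient_left, h_apply, hf.isSymmSndFDerivAt (by simp) v e, hgrad.fderiv]
  exact InnerProductSpace.toDual_symm_apply

end Gradient

section LocallyLipschitz

variable {X Y Z : Type*} [PseudoMetricSpace X] [PseudoMetricSpace Y] [PseudoMetricSpace Z]

theorem locallyLipschitzOn_comp {g : Y → Z} {f : X → Y} {s : Set X} {t : Set Y}
    (hg : LocallyLipschitzOn t g) (hf : LocallyLipschitzOn s f) (hst : MapsTo f s t) :
    LocallyLipschitzOn s fun x => g (f x) := by
  intro x hx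
  obtain ⟨Kg, V, hV, hgV⟩ := hg (hst hx)
  obtain ⟨Kf, U, hU, hfU⟩ := hf hx
  have hpre : f ⁻¹' V ∈ 𝓝[s] x :=
    (hf.continuousOn x hx).tendsto_nhdsWithin hst hV
  exact ⟨Kg * Kf, U ∩ f ⁻¹' V, inter_mem hU hpre,
    hgV.comp (hfU.mono inter_subset_left) fun _ hy => hy.2⟩

theorem locallyLipschitzOn_prodMk {f : X → Y} {g : X → Z} {s : Set X}
    (hf : LocallyLipschitzOn s f) (hg : LocallyLipschitzOn s g) :
    LocallyLipschitzOn s fun x => (f x, g x) := by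
  intro x hx
  obtain ⟨K, U, hU, hfU⟩ := hf hx
  obtain ⟨L, V, hV, hgV⟩ := hg hx
  exact ⟨max K L, U ∩ V, inter_mem hU hV,
    (hfU.mono inter_subset_left).prodMk (hgV.mono inter_subset_right)⟩

theorem locallyLipschitzOn_of_contDiffOn {E F : Type*} [NormedAddCommGroup E] [NormedSpace ℝ E]
    [NormedAddCommGroup F] [NormedSpace ℝ F] {f : E → F} {s : Set E} (hs : IsOpen s)
    (hf : ContDiffOn ℝ 1 f s) : LocallyLipschitzOn s f := by
  intro x hx
  obtain ⟨K, t, ht, hK⟩ := (hf.contDiffAt (hs.mem_nhds hx)).exists_lipschitzOnWith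
  exact ⟨K, t, mem_nhdsWithin_of_mem_nhds ht, hK⟩

theorem locallyLipschitzOn_comp₂ {E F G : Type*} [NormedAddCommGroup E] [NormedSpace ℝ E]
    [NormedAddCommGroup F] [NormedSpace ℝ F] [NormedAddCommGroup G] [NormedSpace ℝ G]
    {f : X → E} {g : X → F} {s : Set X} {b : E × F → G} (hb : ContDiff ℝ 1 b)
    (hf : LocallyLipschitzOn s f) (hg : LocallyLipschitzOn s g) :
    LocallyLipschitzOn s fun x => b (f x, g x) :=
  locallyLipschitzOn_comp hb.locallyLipschitz.locallyLipschitzOn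
    (locallyLipschitzOn_prodMk hf hg) (mapsTo_univ _ _)

theorem locallyLipschitzOn_mul {f g : X → ℝ} {s : Set X} (hf : LocallyLipschitzOn s f)
    (hg : LocallyLipschitzOn s g) : LocallyLipschitzOn s fun x => f x * g x :=
  locallyLipschitzOn_comp₂ contDiff_mul hf hg

theorem locallyLipschitzOn_sub {f g : X → ℝ} {s : Set X} (hf : LocallyLipschitzOn s f)
    (hg : LocallyLipschitzOn s g) : LocallyLipschitzOn s fun x => f x - g x :=
  locallyLipschitzOn_comp₂ (contDiff_fst.sub contDiff_snd) hf hg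

theorem locallyLipschitzOn_max_const {f : X → ℝ} {s : Set X} (hf : LocallyLipschitzOn s f)
    (r : ℝ) : LocallyLipschitzOn s fun x => max (f x) r :=
  locallyLipschitzOn_comp (t := univ) (LocallyLipschitz.id.max_const r).locallyLipschitzOn hf
    (mapsTo_univ _ _)

theorem inter_frontier_nonempty_of_isPreconnected {W : Type*} [TopologicalSpace W] {s t : Set W}
    (ht : IsPreconnected t) (h : (t ∩ s).Nonempty) (h' : (t ∩ sᶜ).Nonempty) :
    (t ∩ frontier s).Nonempty := by
  by_contra hempty
  have hcover : t ⊆ interior s ∪ interior sᶜ := by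
    rw [← compl_frontier_eq_union_interior]
    exact fun x hx hxs => hempty ⟨x, hx, hxs⟩
  obtain ⟨x, -, hx, hx'⟩ := ht _ _ isOpen_interior isOpen_interior hcover
    (h.mono fun x hx => ⟨hx.1, (hcover hx.1).resolve_right fun h => interior_subset h hx.2⟩)
    (h'.mono fun x hx => ⟨hx.1, (hcover hx.1).resolve_left fun h => hx.2 (interior_subset h)⟩)
  exact interior_subset hx' (interior_subset hx)

/- Across the boundary of `s` the Lipschitz bound comes from a point of `frontier s` on the segment
joining the two points. -/
theorem locallyLipschitzOn_indicator {E : Type*} [NormedAddCommGroup E] [NormedSpace ℝ E]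
    {f : E → ℝ} {s U : Set E} (hU : IsOpen U) (hf : LocallyLipschitzOn U f)
    (h0 : ∀ x ∈ U ∩ frontier s, f x = 0) : LocallyLipschitzOn U (s.indicator f) := by
  intro x hx
  obtain ⟨K, V, hV, hK⟩ := hf hx
  obtain ⟨r, hr, hrV⟩ := Metric.mem_nhds_iff.1
    (inter_mem (hU.mem_nhds hx) (nhdsWithin_eq_nhds.2 (hU.mem_nhds hx) ▸ hV))
  have hcross {y z : E} (hy : y ∈ ball x r) (hz : z ∈ ball x r) (hys : y ∈ s) (hzs : z ∉ s) :
      |f y| ≤ K * dist y z := by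
    obtain ⟨q, hq, hqs⟩ : (segment ℝ y z ∩ frontier s).Nonempty :=
      inter_frontier_nonempty_of_isPreconnected (convex_segment y z).isPreconnected
        ⟨y, left_mem_segment ℝ y z, hys⟩ ⟨z, right_mem_segment ℝ y z, hzs⟩
    have hqr := (convex_ball x r).segment_subset hy hz hq
    have hfq : f q = 0 := h0 q ⟨(hrV hqr).1, hqs⟩
    calc |f y| = dist (f y) (f q) := by rw [hfq, Real.dist_eq, sub_zero]
      _ ≤ K * dist y q := hK.dist_le_mul y (hrV hy).2 q (hrV hqr).2
      _ ≤ K * dist y z := by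
        gcongr
        linarith [dist_add_dist_of_mem_segment hq, dist_nonneg (x := q) (y := z)]
  refine ⟨K, ball x r, mem_nhdsWithin_of_mem_nhds (ball_mem_nhds x hr),
    LipschitzOnWith.of_dist_le_mul fun y hy z hz => ?_⟩
  by_cases hys : y ∈ s <;> by_cases hzs : z ∈ s
  · simpa [hys, hzs] using hK.dist_le_mul y (hrV hy).2 z (hrV hz).2
  · simpa [hys, hzs, Real.dist_eq] using hcross hy hz hys hzs
  · simpa [hys, hzs, Real.dist_eq, dist_comm] using hcross hz hy hzs hys
  · simp only [hys, hzs, not_false_eq_true, indicator_of_notMem, dist_self]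
    positivity

theorem exists_lipschitzWith_of_hasCompactSupport [ProperSpace X] {F : Type*}
    [NormedAddCommGroup F] {f : X → F} (hf : LocallyLipschitz f) (hc : HasCompactSupport f) :
    ∃ K, LipschitzWith K f := by
  obtain ⟨L, hL⟩ := (hf.locallyLipschitzOn (s := _)).exists_lipschitzOnWith_of_compact
    (hc.isCompact.cthickening (r := 1))
  obtain ⟨C, hC⟩ := hf.continuous.bounded_above_of_compact_support hc
  have hLC : (L : ℝ) ≤ max L C.toNNReal := by exact_mod_cast le_max_left _ _
  have hCC : C ≤ max L C.toNNReal :=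
    (Real.le_coe_toNNReal C).trans (by exact_mod_cast le_max_right _ _)
  have hmem {x y : X} (hx : x ∈ tsupport f) : dist (f x) (f y) ≤ max L C.toNNReal * dist x y := by
    by_cases hy : y ∈ cthickening 1 (tsupport f)
    · exact (hL.dist_le_mul x (self_subset_cthickening _ hx) y hy).trans (by gcongr)
    have h1 : 1 ≤ dist x y := by
      by_contra! h
      exact hy (mem_cthickening_of_dist_le y x 1 _ hx (by rw [dist_comm]; exact h.le))
    have hfy : f y = 0 := image_eq_zero_of_notMem_tsupport fun h =>
      hy (self_subset_cthickening _ h)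
    rw [hfy, dist_zero_right]
    exact ((hC x).trans hCC).trans (le_mul_of_one_le_right (by positivity) h1)
  refine ⟨max L C.toNNReal, LipschitzWith.of_dist_le_mul fun x y => ?_⟩
  by_cases hx : x ∈ tsupport f
  · exact_mod_cast hmem hx
  by_cases hy : y ∈ tsupport f
  · rw [dist_comm, dist_comm x]
    exact_mod_cast hmem hy
  · simp only [image_eq_zero_of_notMem_tsupport hx, image_eq_zero_of_notMem_tsupport hy, dist_self]
    positivity

theorem locallyLipschitz_of_tsupport_subset {F : Type*}
    [NormedAddCommGroup F] {f : X → F} {U : Set X} (hU : IsOpen U) (hf : LocallyLipschitzOn U f)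
    (hsupp : tsupport f ⊆ U) : LocallyLipschitz f := by
  intro x
  by_cases hx : x ∈ U
  · obtain ⟨L, V, hV, hL⟩ := hf hx
    exact ⟨L, V, nhdsWithin_eq_nhds.2 (hU.mem_nhds hx) ▸ hV, hL⟩
  · refine ⟨0, (tsupport f)ᶜ, (isClosed_tsupport f).isOpen_compl.mem_nhds fun h => hx (hsupp h),
      LipschitzOnWith.of_dist_le_mul fun y hy z hz => ?_⟩
    simp [image_eq_zero_of_notMem_tsupport hy, image_eq_zero_of_notMem_tsupport hz]

end LocallyLipschitz

section LocallyLipschitzOnOpen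

variable {E F : Type*} [NormedAddCommGroup E] [NormedSpace ℝ E] [NormedAddCommGroup F]
  [NormedSpace ℝ F] {f : E → F} {U K : Set E}

theorem exists_norm_fderiv_le_of_isCompact [LocallyCompactSpace E] (hU : IsOpen U)
    (hf : LocallyLipschitzOn U f) (hK : IsCompact K) (hKU : K ⊆ U) :
    ∃ C, ∀ x ∈ K, ‖fderiv ℝ f x‖ ≤ C := by
  obtain ⟨K', hK', hKK', hK'U⟩ := exists_compact_between hK hU hKU
  obtain ⟨C, hC⟩ := (hf.mono hK'U).exists_lipschitzOnWith_of_compact hK'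
  exact ⟨C, fun x hx => norm_fderiv_le_of_lipschitzOn ℝ (mem_interior_iff_mem_nhds.1 (hKK' hx)) hC⟩

theorem ae_differentiableAt_of_locallyLipschitzOn [FiniteDimensional ℝ E] [FiniteDimensional ℝ F]
    [MeasurableSpace E] [BorelSpace E] {μ : Measure E} [μ.IsAddHaarMeasure] (hU : IsOpen U)
    (hf : LocallyLipschitzOn U f) : ∀ᵐ x ∂μ.restrict U, DifferentiableAt ℝ f x := by
  rw [ae_restrict_iff' hU.measurableSet]
  refine measure_null_of_locally_null _ fun x hx => ?_
  obtain ⟨hxU, -⟩ := Classical.not_imp.1 hx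
  obtain ⟨L, V, hV, hL⟩ := hf hxU
  rw [nhdsWithin_eq_nhds.2 (hU.mem_nhds hxU)] at hV
  refine ⟨_, inter_mem self_mem_nhdsWithin
    (mem_nhdsWithin_of_mem_nhds (interior_mem_nhds.2 hV)), ?_⟩
  refine measure_mono_null (fun y hy => ?_) (hL.ae_differentiableWithinAt_of_mem (μ := μ))
  exact fun hd => hy.1 fun _ =>
    (hd (interior_subset hy.2)).differentiableAt (mem_interior_iff_mem_nhds.1 hy.2)

end LocallyLipschitzOnOpen

section Integrability

variable {E F : Type*} [TopologicalSpace E] [T2Space E] [MeasurableSpace E]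
  [OpensMeasurableSpace E] [NormedAddCommGroup F] {μ : Measure E} [IsFiniteMeasureOnCompacts μ]

theorem integrableOn_of_norm_le_of_isCompact {f : E → F} {s K : Set E} (hs : MeasurableSet s)
    (hf : AEStronglyMeasurable f (μ.restrict s)) (hK : IsCompact K) {C : ℝ}
    (hC : ∀ x ∈ s ∩ K, ‖f x‖ ≤ C) (h0 : ∀ x ∉ K, f x = 0) : IntegrableOn f s μ := by
  have hK_int : IntegrableOn f K (μ.restrict s) := by
    refine Measure.integrableOn_of_bounded (M := C) ?_ hf ?_
    · exact ((Measure.restrict_apply_le _ _).trans_lt hK.measure_lt_top).ne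
    · rw [Measure.restrict_restrict hK.measurableSet, inter_comm]
      exact ae_restrict_of_forall_mem (hs.inter hK.measurableSet) hC
  rwa [integrableOn_iff_integrable_of_support_subset] at hK_int
  exact fun x hx => by_contra fun h => hx (h0 x h)

theorem integrable_of_eq_zero_of_notMem_tsupport {f : E → F} {z : E → ℝ}
    (hz : HasCompactSupport z) (hf : Continuous f) (h0 : ∀ x ∉ tsupport z, f x = 0) :
    Integrable f μ :=
  hf.integrable_of_hasCompactSupport (HasCompactSupport.intro hz h0)

theorem integrableOn_inner_of_isCompact [InnerProductSpace ℝ F] {f g : E → F} {s K : Set E}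
    (hs : MeasurableSet s) (hf : AEStronglyMeasurable f (μ.restrict s))
    (hg : AEStronglyMeasurable g (μ.restrict s)) (hK : IsCompact K) {B C : ℝ}
    (hB : ∀ x ∈ s ∩ K, ‖f x‖ ≤ B) (hC : ∀ x ∈ s ∩ K, ‖g x‖ ≤ C) (h0 : ∀ x ∉ K, g x = 0) :
    IntegrableOn (fun x => ⟪f x, g x⟫) s μ :=
  integrableOn_of_norm_le_of_isCompact (C := B * C) hs (hf.inner hg) hK
    (fun x hx => (norm_inner_le_norm _ _).trans
      (mul_le_mul (hB x hx) (hC x hx) (norm_nonneg _) ((norm_nonneg _).trans (hB x hx))))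
    fun x hx => by rw [h0 x hx, inner_zero_right]

end Integrability

section Flux

variable {E : Type*} [NormedAddCommGroup E] [InnerProductSpace ℝ E] {a : ℝ → ℝ}

/-- The operator `v ↦ ⟨p, v⟩ p / |p|`, that is `|p|` times the orthogonal projection onto the line
spanned by `p`; it is `0` at `p = 0`. -/
def radialPart (p : E) : E →L[ℝ] E := ‖p‖⁻¹ • (innerSL ℝ p).smulRight p

theorem radialPart_apply (p v : E) : radialPart p v = (‖p‖⁻¹ * ⟪p, v⟫) • p := by
  simp [radialPart, smul_smul]

theorem norm_radialPart_le (p : E) : ‖radialPart p‖ ≤ ‖p‖ := by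
  rw [radialPart, norm_smul, ContinuousLinearMap.norm_smulRight_apply, innerSL_apply_norm, norm_inv,
    norm_norm, ← mul_assoc]
  exact (inv_mul_mul_self ‖p‖).le

/-- The quasilinear flux `p ↦ a(|p|) p`, so that `Δ_a u = div (flux a (∇u))`. -/
def flux (a : ℝ → ℝ) (p : E) : E := a ‖p‖ • p

/-- The operator `A(p)` as a continuous linear map; it is the derivative of `flux a` at `p`. -/
def fluxDeriv (a : ℝ → ℝ) (p : E) : E →L[ℝ] E :=
  a ‖p‖ • ContinuousLinearMap.id ℝ E + deriv a ‖p‖ • radialPart p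

theorem fluxDeriv_eq_Aop (a : ℝ → ℝ) (p v : EuclideanSpace ℝ (Fin n)) :
    fluxDeriv a p v = Aop a p v := by
  simp [fluxDeriv, Aop, radialPart_apply, smul_smul, div_eq_mul_inv, mul_assoc]

theorem inner_fluxDeriv (a : ℝ → ℝ) (p v w : E) :
    ⟪fluxDeriv a p v, w⟫ =
      a ‖p‖ * ⟪v, w⟫ + deriv a ‖p‖ * ‖p‖⁻¹ * (⟪p, v⟫ * ⟪p, w⟫) := by
  simp only [fluxDeriv, add_apply, smul_apply, ContinuousLinearMap.id_apply,
    radialPart_apply, inner_add_left, real_inner_smul_left]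
  ring

theorem inner_fluxDeriv_comm (a : ℝ → ℝ) (p v w : E) :
    ⟪fluxDeriv a p v, w⟫ = ⟪fluxDeriv a p w, v⟫ := by
  rw [inner_fluxDeriv, inner_fluxDeriv, real_inner_comm v w, mul_comm ⟪p, v⟫]

theorem inner_fluxDeriv_self_pos (hpos : ∀ t ≥ (0 : ℝ), 0 < a t)
    (hlam : ∀ t ≥ (0 : ℝ), 0 < lam1 a t) (p : E) {v : E} (hv : v ≠ 0) :
    0 < ⟪fluxDeriv a p v, v⟫ := by
  have hv2 : 0 < ‖v‖ ^ 2 := pow_pos (norm_pos_iff.2 hv) 2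
  have ha := mul_pos (hpos ‖p‖ (norm_nonneg p)) hv2
  have hl := mul_pos (hlam ‖p‖ (norm_nonneg p)) hv2
  rw [inner_fluxDeriv, real_inner_self_eq_norm_sq, ← sq]
  rcases le_total 0 (deriv a ‖p‖) with hd | hd
  · positivity
  have hcs : ‖p‖⁻¹ * ⟪p, v⟫ ^ 2 ≤ ‖p‖ * ‖v‖ ^ 2 := by
    calc ‖p‖⁻¹ * ⟪p, v⟫ ^ 2 ≤ ‖p‖⁻¹ * (‖p‖ * ‖v‖) ^ 2 := by
          gcongr ?_ * ?_
          exact sq_le_sq' (neg_le_of_abs_le (abs_real_inner_le_norm p v))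
            (le_of_abs_le (abs_real_inner_le_norm p v))
      _ = ‖p‖ * ‖v‖ ^ 2 := by
          rw [mul_pow, sq ‖p‖, ← mul_assoc, ← mul_assoc, inv_mul_mul_self]
  rw [lam1] at hl
  linarith [mul_le_mul_of_nonpos_left hcs hd]

theorem inner_fluxDeriv_self_nonneg (hpos : ∀ t ≥ (0 : ℝ), 0 < a t)
    (hlam : ∀ t ≥ (0 : ℝ), 0 < lam1 a t) (p v : E) : 0 ≤ ⟪fluxDeriv a p v, v⟫ := by
  rcases eq_or_ne v 0 with rfl | hv
  · simp
  · exact (inner_fluxDeriv_self_pos hpos hlam p hv).le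

theorem norm_normalize_sub_normalize_mul_le {p q : E} (hp : p ≠ 0) (hq : q ≠ 0) :
    ‖‖p‖⁻¹ • p - ‖q‖⁻¹ • q‖ * ‖q‖ ≤ 2 * ‖p - q‖ := by
  have hP : ‖‖p‖⁻¹ • p‖ = 1 := norm_smul_inv_norm (𝕜 := ℝ) hp
  have hsplit : ‖q‖ • (‖p‖⁻¹ • p - ‖q‖⁻¹ • q) = (‖q‖ - ‖p‖) • ‖p‖⁻¹ • p + (p - q) := by
    have h (z : E) (hz : z ≠ 0) : ‖z‖ • ‖z‖⁻¹ • z = z := smul_inv_smul₀ (norm_ne_zero_iff.2 hz) z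
    rw [smul_sub, h q hq, sub_smul, h p hp, sub_add_sub_cancel]
  calc ‖‖p‖⁻¹ • p - ‖q‖⁻¹ • q‖ * ‖q‖ = ‖(‖q‖ - ‖p‖) • ‖p‖⁻¹ • p + (p - q)‖ := by
        rw [← hsplit, norm_smul, norm_norm, mul_comm]
    _ ≤ |‖q‖ - ‖p‖| * 1 + ‖p - q‖ := by
        rw [← hP, ← Real.norm_eq_abs, ← norm_smul]
        exact norm_add_le _ _
    _ ≤ 2 * ‖p - q‖ := by linarith [abs_norm_sub_norm_le q p, norm_sub_rev q p]

theorem lipschitzWith_radialPart : LipschitzWith 3 (radialPart : E → E →L[ℝ] E) := by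
  refine LipschitzWith.of_dist_le_mul fun p q => ?_
  rw [dist_eq_norm, dist_eq_norm, NNReal.coe_ofNat]
  rcases eq_or_ne p 0 with rfl | hp
  · simpa [radialPart] using
      (norm_radialPart_le q).trans (le_mul_of_one_le_left (norm_nonneg q) (by norm_num))
  rcases eq_or_ne q 0 with rfl | hq
  · simpa [radialPart] using
      (norm_radialPart_le p).trans (le_mul_of_one_le_left (norm_nonneg p) (by norm_num))
  refine ContinuousLinearMap.opNorm_le_bound _ (by positivity) fun v => ?_
  have hP : ‖‖p‖⁻¹ • p‖ = 1 := norm_smul_inv_norm (𝕜 := ℝ) hp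
  have hsplit : (radialPart p - radialPart q) v =
      ⟪‖p‖⁻¹ • p, v⟫ • (p - q) + ⟪‖p‖⁻¹ • p - ‖q‖⁻¹ • q, v⟫ • q := by
    simp only [sub_apply, radialPart_apply, inner_sub_left,
      real_inner_smul_left]
    module
  calc ‖(radialPart p - radialPart q) v‖
      ≤ ‖⟪‖p‖⁻¹ • p, v⟫‖ * ‖p - q‖ + ‖⟪‖p‖⁻¹ • p - ‖q‖⁻¹ • q, v⟫‖ * ‖q‖ := by
        rw [hsplit, ← norm_smul, ← norm_smul]
        exact norm_add_le _ _
    _ ≤ (1 * ‖v‖) * ‖p - q‖ + (‖‖p‖⁻¹ • p - ‖q‖⁻¹ • q‖ * ‖v‖) * ‖q‖ := by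
        rw [← hP]
        gcongr <;> exact norm_inner_le_norm _ _
    _ ≤ 3 * ‖p - q‖ * ‖v‖ := by
        have := mul_le_mul_of_nonneg_right (norm_normalize_sub_normalize_mul_le hp hq)
          (norm_nonneg v)
        linarith

theorem C11Loc.locallyLipschitzOn (ha : C11Loc a) : LocallyLipschitzOn (Ici 0) a := fun t ht =>
  (ha.1 t ht).exists_lipschitzOnWith (convex_Ici 0)

theorem C11Loc.locallyLipschitzOn_deriv (ha : C11Loc a) :
    LocallyLipschitzOn (Ici 0) (deriv a) := fun t ht => by
  obtain ⟨V, hV, K, hK⟩ := ha.2 t ht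
  exact ⟨K, V, hV, hK⟩

theorem C11Loc.locallyLipschitz_fluxDeriv (ha : C11Loc a) :
    LocallyLipschitz (fluxDeriv a : E → E →L[ℝ] E) := by
  have h_norm {b : ℝ → ℝ} (hb : LocallyLipschitzOn (Ici 0) b) :
      LocallyLipschitzOn univ fun p : E => b ‖p‖ :=
    locallyLipschitzOn_comp hb lipschitzWith_one_norm.locallyLipschitz.locallyLipschitzOn
      fun p _ => norm_nonneg p
  rw [← locallyLipschitzOn_univ]
  exact locallyLipschitzOn_comp₂ (contDiff_fst.add contDiff_snd)
    (locallyLipschitzOn_comp₂ (b := fun z : ℝ × (E →L[ℝ] E) => z.1 • z.2) (by fun_prop)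
      (h_norm ha.locallyLipschitzOn) (LocallyLipschitz.const _).locallyLipschitzOn)
    (locallyLipschitzOn_comp₂ (b := fun z : ℝ × (E →L[ℝ] E) => z.1 • z.2) (by fun_prop)
      (h_norm ha.locallyLipschitzOn_deriv)
      lipschitzWith_radialPart.locallyLipschitz.locallyLipschitzOn)

theorem C11Loc.hasFDerivAt_flux (ha : C11Loc a) (p : E) :
    HasFDerivAt (flux a) (fluxDeriv a p) p := by
  rcases eq_or_ne p 0 with rfl | hp
  · have h_cont : Continuous fun h : E => a ‖h‖ - a 0 :=
      (ha.1.continuousOn.comp_continuous continuous_norm norm_nonneg).sub continuous_const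
    have h_small : (fun h : E => a ‖h‖ - a 0) =o[𝓝 0] fun _ => (1 : ℝ) := by
      rw [Asymptotics.isLittleO_one_iff]
      simpa using h_cont.tendsto 0
    rw [hasFDerivAt_iff_isLittleO_nhds_zero]
    simpa [flux, fluxDeriv, radialPart, sub_smul] using
      h_small.smul_isBigO (Asymptotics.isBigO_refl (fun h : E => h) (𝓝 0))
  · have h_norm : HasFDerivAt (fun q : E => ‖q‖) (‖p‖⁻¹ • innerSL ℝ p) p := by
      have h := (hasStrictFDerivAt_norm_sq p).hasFDerivAt.sqrt (by positivity)
      simp only [Real.sqrt_sq (norm_nonneg _)] at h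
      refine h.congr_fderiv ?_
      ext v
      simp
      field_simp
    have h_a : HasDerivAt a (deriv a ‖p‖) ‖p‖ :=
      ((ha.1.differentiableOn one_ne_zero ‖p‖ (norm_nonneg p)).differentiableAt
        (Ici_mem_nhds (norm_pos_iff.2 hp))).hasDerivAt
    refine ((h_a.comp_hasFDerivAt p h_norm).smul (hasFDerivAt_id p)).congr_fderiv ?_
    ext1 v
    simp [fluxDeriv, radialPart, smul_smul]

theorem C11Loc.contDiff_flux (ha : C11Loc a) : ContDiff ℝ 1 (flux a : E → E) :=
  contDiff_one_iff_hasFDerivAt.2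
    ⟨fluxDeriv a, ha.locallyLipschitz_fluxDeriv.continuous, ha.hasFDerivAt_flux⟩

end Flux

section Divergence

variable {E : Type*} [NormedAddCommGroup E] [InnerProductSpace ℝ E] {X : E → E}
  {φ : E → ℝ} {x : E}

/-- The divergence of a vector field, as the trace of its derivative; it is `0` at points where the
field is not differentiable. -/
def divergence (X : E → E) (x : E) : ℝ := LinearMap.trace ℝ E (fderiv ℝ X x)

theorem divergence_eq_sum {ι : Type*} [Fintype ι] (b : OrthonormalBasis ι ℝ E) (X : E → E)
    (x : E) : divergence X x = ∑ i, ⟪b i, fderiv ℝ X x (b i)⟫ :=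
  LinearMap.trace_eq_sum_inner _ b

theorem divergence_add {Y : E → E} (hX : DifferentiableAt ℝ X x)
    (hY : DifferentiableAt ℝ Y x) :
    divergence (fun y => X y + Y y) x = divergence X x + divergence Y x := by
  rw [divergence, fderiv_fun_add hX hY, ContinuousLinearMap.toLinearMap_add, map_add]
  rfl

theorem divergence_eq_of_hasFDerivAt {X' : E →L[ℝ] E} (h : HasFDerivAt X X' x) :
    divergence X x = LinearMap.trace ℝ E X' := by
  rw [divergence, h.fderiv]

theorem divergence_congr_of_eventuallyEq {Y : E → E} (h : X =ᶠ[𝓝 x] Y) :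
    divergence X x = divergence Y x := by
  rw [divergence, divergence, h.fderiv_eq]

variable [FiniteDimensional ℝ E]

theorem divergence_smul (hφ : DifferentiableAt ℝ φ x) (hX : DifferentiableAt ℝ X x) :
    divergence (fun y => φ y • X y) x = φ x * divergence X x + ⟪X x, ∇ φ x⟫ := by
  have hsmulRight : ((fderiv ℝ φ x).smulRight (X x) : E →ₗ[ℝ] E) =
      (fderiv ℝ φ x : E →ₗ[ℝ] ℝ).smulRight (X x) := rfl
  rw [divergence, fderiv_fun_smul hφ hX, ContinuousLinearMap.toLinearMap_add, map_add,
    ContinuousLinearMap.toLinearMap_smul, map_smul, hsmulRight, LinearMap.trace_smulRight,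
    inner_gradient_right]
  rfl

theorem divergence_smul_add_smul {Y : E → E} {ψ : E → ℝ} (hφ : DifferentiableAt ℝ φ x)
    (hX : DifferentiableAt ℝ X x) (hψ : DifferentiableAt ℝ ψ x) (hY : DifferentiableAt ℝ Y x) :
    divergence (fun y => φ y • X y + ψ y • Y y) x =
      (φ x * divergence X x + ⟪X x, ∇ φ x⟫) + (ψ x * divergence Y x + ⟪Y x, ∇ ψ x⟫) := by
  rw [← divergence_smul hφ hX, ← divergence_smul hψ hY]
  exact divergence_add (hφ.smul hX) (hψ.smul hY)

theorem abs_divergence_le (X : E → E) (x : E) :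
    |divergence X x| ≤ Module.finrank ℝ E * ‖fderiv ℝ X x‖ := by
  let b := stdOrthonormalBasis ℝ E
  rw [divergence_eq_sum b]
  calc |∑ i, ⟪b i, fderiv ℝ X x (b i)⟫| ≤ ∑ i, |⟪b i, fderiv ℝ X x (b i)⟫| :=
        Finset.abs_sum_le_sum_abs _ _
    _ ≤ ∑ _i : Fin (Module.finrank ℝ E), ‖fderiv ℝ X x‖ := by
        gcongr with i
        refine (abs_real_inner_le_norm _ _).trans ?_
        simpa [b.norm_eq_one] using (fderiv ℝ X x).le_opNorm (b i)
    _ = Module.finrank ℝ E * ‖fderiv ℝ X x‖ := by simp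

theorem continuousOn_divergence {U : Set E} (hU : IsOpen U) (hX : ContDiffOn ℝ 1 X U) :
    ContinuousOn (divergence X) U :=
  ((LinearMap.trace ℝ E).comp (ContinuousLinearMap.coeLM ℝ)).continuous_of_finiteDimensional
    |>.comp_continuousOn (hX.continuousOn_fderiv_of_isOpen hU le_rfl)

variable [MeasurableSpace E] [BorelSpace E]

theorem measurable_divergence (X : E → E) : Measurable (divergence X) :=
  ((LinearMap.trace ℝ E).comp (ContinuousLinearMap.coeLM ℝ)).continuous_of_finiteDimensional
    |>.measurable.comp (measurable_fderiv ℝ X)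

theorem integral_lineDeriv_eq_zero {μ : Measure E} [μ.IsAddHaarMeasure] {f : E → ℝ}
    (hf : LocallyLipschitz f) (hc : HasCompactSupport f) (v : E) :
    Integrable (fun x => lineDeriv ℝ f x v) μ ∧ ∫ x, lineDeriv ℝ f x v ∂μ = 0 := by
  obtain ⟨K, hK⟩ := exists_lipschitzWith_of_hasCompactSupport hf hc
  constructor
  · rw [← integrableOn_univ]
    refine integrableOn_of_norm_le_of_isCompact .univ
      (aestronglyMeasurable_lineDeriv hf.continuous _) hc
      (fun x _ => norm_lineDeriv_le_of_lipschitz ℝ hK) fun x hx => ?_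
    have h := notMem_tsupport_iff_eventuallyEq.1 hx
    rw [(h.hasFDerivAt_iff.2 (hasFDerivAt_const (0 : ℝ) x)).hasLineDerivAt v |>.lineDeriv]
    rfl
  · have hone (x : E) : lineDeriv ℝ (fun _ : E => (1 : ℝ)) x (-v) = 0 := by simp [lineDeriv]
    simpa [hone] using (LipschitzWith.integral_lineDeriv_mul_eq (f := fun _ : E => (1 : ℝ)) (μ := μ)
      (LipschitzWith.const 1) hK hc (-v)).symm

theorem integral_divergence_eq_zero {μ : Measure E} [μ.IsAddHaarMeasure]
    (hX : LocallyLipschitz X) (hc : HasCompactSupport X) : ∫ x, divergence X x ∂μ = 0 := by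
  let b := stdOrthonormalBasis ℝ E
  have hcoord (i) := integral_lineDeriv_eq_zero (μ := μ)
    (f := fun x => ⟪b i, X x⟫) ((innerSL ℝ (b i)).lipschitz.locallyLipschitz.comp hX)
    (hc.comp_left (inner_zero_right (b i))) (b i)
  have hsum : divergence X =ᵐ[μ] fun x => ∑ i, lineDeriv ℝ (fun y => ⟪b i, X y⟫) x (b i) := by
    have hdiff := ae_differentiableAt_of_locallyLipschitzOn (μ := μ) isOpen_univ
      (hX.locallyLipschitzOn (s := univ))
    rw [Measure.restrict_univ] at hdiff
    filter_upwards [hdiff] with x hx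
    rw [divergence_eq_sum b]
    refine Finset.sum_congr rfl fun i _ => ?_
    exact (((innerSL ℝ (b i)).hasFDerivAt.comp x hx.hasFDerivAt).hasLineDerivAt
      (b i)).lineDeriv.symm
  rw [integral_congr_ae hsum, integral_finsetSum _ fun i _ => (hcoord i).1]
  exact Finset.sum_eq_zero fun i _ => (hcoord i).2

end Divergence

section WeakDivergence

variable {Ω : Set 𝔼(n)} {φ : 𝔼(n) → ℝ} {X : 𝔼(n) → 𝔼(n)} {g : 𝔼(n) → ℝ}

theorem isTestOn_of_locallyLipschitzOn (hΩ : IsOpen Ω) (hφ : LocallyLipschitzOn Ω φ)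
    (hc : HasCompactSupport φ) (hsupp : tsupport φ ⊆ Ω) : IsTestOn Ω φ :=
  ⟨exists_lipschitzWith_of_hasCompactSupport (locallyLipschitz_of_tsupport_subset hΩ hφ hsupp) hc,
    hc, hsupp⟩

theorem IsTestOn.locallyLipschitz (hφ : IsTestOn Ω φ) : LocallyLipschitz φ :=
  hφ.1.choose_spec.locallyLipschitz

theorem IsTestOn.exists_norm_gradient_le (hφ : IsTestOn Ω φ) : ∃ C, ∀ x, ‖∇ φ x‖ ≤ C :=
  let ⟨K, hK⟩ := hφ.1
  ⟨K, fun _ => norm_gradient_le_of_lipschitzOnWith univ_mem hK.lipschitzOnWith⟩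

/-- `g` is the divergence of `X` on `Ω` in the weak sense, tested against the compactly supported
Lipschitz functions of `IsTestOn`. -/
def HasWeakDivOn (X : 𝔼(n) → 𝔼(n)) (g : 𝔼(n) → ℝ) (Ω : Set 𝔼(n)) : Prop :=
  ∀ φ, IsTestOn Ω φ → ∫ x in Ω, ⟪X x, ∇ φ x⟫ = -∫ x in Ω, φ x * g x

theorem integrableOn_inner_gradient {B : ℝ} (hΩ : IsOpen Ω)
    (hX : AEStronglyMeasurable X (volume.restrict Ω)) (hφ : IsTestOn Ω φ)
    (hB : ∀ x ∈ tsupport φ, ‖X x‖ ≤ B) : IntegrableOn (fun x => ⟪X x, ∇ φ x⟫) Ω :=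
  let ⟨_, hC⟩ := hφ.exists_norm_gradient_le
  integrableOn_inner_of_isCompact hΩ.measurableSet hX (measurable_gradient φ).aestronglyMeasurable
    hφ.2.1.isCompact (fun x hx => hB x hx.2) (fun x _ => hC x) fun _ =>
      gradient_eq_zero_of_notMem_tsupport

theorem integrableOn_mul_of_isTestOn {B : ℝ} (hΩ : IsOpen Ω)
    (hg : AEStronglyMeasurable g (volume.restrict Ω)) (hφ : IsTestOn Ω φ)
    (hB : ∀ x ∈ tsupport φ, ‖g x‖ ≤ B) : IntegrableOn (fun x => φ x * g x) Ω := by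
  obtain ⟨C, hC⟩ := hφ.locallyLipschitz.continuous.bounded_above_of_compact_support hφ.2.1
  exact integrableOn_inner_of_isCompact hΩ.measurableSet hg
    hφ.locallyLipschitz.continuous.aestronglyMeasurable hφ.2.1.isCompact
    (fun x hx => hB x hx.2) (fun x _ => hC x) fun x hx => image_eq_zero_of_notMem_tsupport hx

theorem hasWeakDivOn_divergence (hΩ : IsOpen Ω) (hX : LocallyLipschitzOn Ω X) :
    HasWeakDivOn X (divergence X) Ω := by
  intro φ hφ
  have hφΩ : LocallyLipschitzOn Ω φ := hφ.locallyLipschitz.locallyLipschitzOn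
  have hsupp : tsupport (fun x => φ x • X x) ⊆ tsupport φ := tsupport_smul_subset_left φ X
  have hW : LocallyLipschitz fun x => φ x • X x :=
    locallyLipschitz_of_tsupport_subset hΩ
      (locallyLipschitzOn_comp₂ (b := fun z : ℝ × 𝔼(n) => z.1 • z.2) (by fun_prop) hφΩ hX)
      (hsupp.trans hφ.2.2)
  have hzero : ∫ x in Ω, divergence (fun x => φ x • X x) x = 0 := by
    refine (setIntegral_eq_integral_of_forall_compl_eq_zero fun x hx => ?_).trans
      (integral_divergence_eq_zero hW hφ.2.1.smul_right)
    rw [divergence, fderiv_of_notMem_tsupport ℝ fun h => hx (hφ.2.2 (hsupp h))]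
    exact map_zero _
  have hsplit : ∫ x in Ω, (φ x * divergence X x + ⟪X x, ∇ φ x⟫) = 0 := by
    refine (integral_congr_ae ?_).trans hzero
    filter_upwards [ae_differentiableAt_of_locallyLipschitzOn hΩ hX,
      ae_differentiableAt_of_locallyLipschitzOn hΩ hφΩ] with x hXx hφx
    exact (divergence_smul hφx hXx).symm
  obtain ⟨C, hC⟩ := exists_norm_fderiv_le_of_isCompact hΩ hX hφ.2.1.isCompact hφ.2.2
  obtain ⟨B, hB⟩ := hφ.2.1.isCompact.exists_bound_of_continuousOn (hX.continuousOn.mono hφ.2.2)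
  rw [integral_add (integrableOn_mul_of_isTestOn hΩ
      (measurable_divergence X).aestronglyMeasurable hφ fun x hx =>
      (abs_divergence_le X x).trans (mul_le_mul_of_nonneg_left (hC x hx) (Nat.cast_nonneg _)))
    (integrableOn_inner_gradient hΩ (hX.continuousOn.aestronglyMeasurable hΩ.measurableSet) hφ
      hB)] at hsplit
  linarith

theorem IsTestOn.comp_sub_const (hφ : IsTestOn Ω φ) (c : 𝔼(n))
    (h : ∀ x ∈ tsupport φ, x + c ∈ Ω) : IsTestOn Ω fun x => φ (x - c) := by
  obtain ⟨⟨K, hK⟩, hc, -⟩ := hφ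
  refine ⟨⟨K, LipschitzWith.of_dist_le_mul fun x y => ?_⟩,
    hc.comp_homeomorph (Homeomorph.subRight c), fun x hx => ?_⟩
  · simpa only [dist_sub_right] using hK.dist_le_mul (x - c) (y - c)
  · rw [show (fun x => φ (x - c)) = φ ∘ Homeomorph.subRight c from rfl,
      tsupport_comp_eq_preimage] at hx
    simpa using h _ hx

theorem integral_inner_comp_sub_const {F : Type*} [NormedAddCommGroup F] [InnerProductSpace ℝ F]
    {K : Set 𝔼(n)} (Y Z : 𝔼(n) → F) {c : 𝔼(n)} (hKΩ : ∀ x ∈ K, x + c ∈ Ω)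
    (hZ : ∀ x ∉ K, Z x = 0) :
    ∫ x in Ω, ⟪Y x, Z (x - c)⟫ = ∫ x in K, ⟪Y (x + c), Z x⟫ := by
  rw [setIntegral_eq_integral_of_forall_compl_eq_zero fun x hx => by
      rw [hZ _ fun h => hx (by simpa using hKΩ _ h), inner_zero_right],
    setIntegral_eq_integral_of_forall_compl_eq_zero fun x hx => by rw [hZ x hx, inner_zero_right],
    ← integral_sub_right_eq_self (fun x => ⟪Y (x + c), Z x⟫) c]
  simp only [sub_add_cancel]

theorem lipschitzOnWith_inner_comp_line {E F : Type*} [NormedAddCommGroup E] [NormedSpace ℝ E]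
    [NormedAddCommGroup F] [InnerProductSpace ℝ F] {Y : E → F} {L : ℝ≥0} {t : Set E} {s : Set ℝ}
    {x e : E} {z : F} {C : ℝ} (hL : LipschitzOnWith L Y t) (hz : ‖z‖ ≤ C)
    (hst : ∀ h ∈ s, x + h • e ∈ t) :
    LipschitzOnWith (Real.nnabs (L * ‖e‖ * C)) (fun h => ⟪Y (x + h • e), z⟫) s := by
  refine LipschitzOnWith.of_dist_le_mul fun a ha b hb => ?_
  have hC0 : 0 ≤ C := (norm_nonneg _).trans hz
  calc dist ⟪Y (x + a • e), z⟫ ⟪Y (x + b • e), z⟫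
      = |⟪Y (x + a • e) - Y (x + b • e), z⟫| := by rw [Real.dist_eq, inner_sub_left]
    _ ≤ ‖Y (x + a • e) - Y (x + b • e)‖ * ‖z‖ := abs_real_inner_le_norm _ _
    _ ≤ L * ‖(x + a • e) - (x + b • e)‖ * C := by
      gcongr
      exact hL.norm_sub_le (hst a ha) (hst b hb)
    _ = Real.nnabs (L * ‖e‖ * C) * dist a b := by
      rw [add_sub_add_left_eq_sub, ← sub_smul, norm_smul, Real.coe_nnabs,
        abs_of_nonneg (by positivity), dist_eq_norm]
      ring

theorem hasDerivAt_setIntegral_inner_translate {F : Type*} [NormedAddCommGroup F]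
    [InnerProductSpace ℝ F] {K : Set 𝔼(n)} {Y Z : 𝔼(n) → F} {C : ℝ} (hΩ : IsOpen Ω)
    (hK : IsCompact K) (hKΩ : K ⊆ Ω) (hY : ContDiffOn ℝ 1 Y Ω)
    (hZ : AEStronglyMeasurable Z (volume.restrict K)) (hC : ∀ x, ‖Z x‖ ≤ C) (e : 𝔼(n)) :
    HasDerivAt (fun h : ℝ => ∫ x in K, ⟪Y (x + h • e), Z x⟫)
      (∫ x in K, ⟪fderiv ℝ Y x e, Z x⟫) 0 := by
  obtain ⟨δ, hδ, hδΩ⟩ := hK.exists_cthickening_subset_open hΩ hKΩ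
  obtain ⟨L, hL⟩ := ((locallyLipschitzOn_of_contDiffOn hΩ hY).mono
    hδΩ).exists_lipschitzOnWith_of_compact hK.cthickening
  have hmem {x : 𝔼(n)} {h : ℝ} (hx : x ∈ K) (hh : ‖h • e‖ < δ) :
      x + h • e ∈ cthickening δ K :=
    mem_cthickening_of_dist_le _ x δ K hx (by simpa [dist_eq_norm] using hh.le)
  have hnear : {h : ℝ | ‖h • e‖ < δ} ∈ 𝓝 0 :=
    (isOpen_lt (by fun_prop) continuous_const).mem_nhds (by simpa using hδ)
  have hmeas {W : 𝔼(n) → F} (hW : ContinuousOn W K) :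
      AEStronglyMeasurable (fun x => ⟪W x, Z x⟫) (volume.restrict K) :=
    (hW.aestronglyMeasurable_of_isCompact hK hK.measurableSet).inner hZ
  have htrans {h : ℝ} (hh : ‖h • e‖ < δ) : ContinuousOn (fun x => Y (x + h • e)) K :=
    (hY.continuousOn.mono hδΩ).comp (by fun_prop) fun x hx => hmem hx hh
  have hfderiv : ContinuousOn (fun x => fderiv ℝ Y x e) K :=
    ((hY.continuousOn_fderiv_of_isOpen hΩ le_rfl).clm_apply continuousOn_const).mono hKΩ
  refine (hasDerivAt_integral_of_dominated_loc_of_lip (s := {h | ‖h • e‖ < δ})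
    (bound := fun _ => L * ‖e‖ * C) hnear ?_ ?_ (hmeas hfderiv) ?_
    (integrableOn_const hK.measure_ne_top) ?_).2
  · filter_upwards [hnear] with h hh using hmeas (htrans hh)
  · obtain ⟨B, hB⟩ := hK.exists_bound_of_continuousOn (hY.continuousOn.mono hKΩ)
    refine (integrableOn_const hK.measure_ne_top (C := B * C)).mono'
      (hmeas (htrans (by simpa using hδ)))
      (ae_restrict_of_forall_mem hK.measurableSet fun x hx => ?_)
    rw [zero_smul, add_zero]
    exact (norm_inner_le_norm _ _).trans
      (mul_le_mul (hB x hx) (hC x) (norm_nonneg _) ((norm_nonneg _).trans (hB x hx)))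
  · exact ae_restrict_of_forall_mem hK.measurableSet fun x hx =>
      lipschitzOnWith_inner_comp_line hL (hC x) fun h hh => hmem hx hh
  · refine ae_restrict_of_forall_mem hK.measurableSet fun x hx => ?_
    have hline : HasDerivAt (fun h : ℝ => x + h • e) e 0 := by
      simpa using ((hasDerivAt_id (0 : ℝ)).smul_const e).const_add x
    have hYx : HasFDerivAt Y (fderiv ℝ Y x) (x + (0 : ℝ) • e) := by
      simpa using ((hY.contDiffAt (hΩ.mem_nhds (hKΩ hx))).differentiableAt one_ne_zero).hasFDerivAt
    simpa using (hYx.comp_hasDerivAt 0 hline).inner ℝ (hasDerivAt_const 0 (Z x))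

theorem HasWeakDivOn.fderiv_apply (h : HasWeakDivOn X g Ω) (hΩ : IsOpen Ω)
    (hX : ContDiffOn ℝ 1 X Ω) (hg : ContDiffOn ℝ 1 g Ω) (e : 𝔼(n)) :
    HasWeakDivOn (fun x => fderiv ℝ X x e) (fun x => fderiv ℝ g x e) Ω := by
  intro φ hφ
  have hK : IsCompact (tsupport φ) := hφ.2.1
  obtain ⟨B, hB⟩ := hφ.exists_norm_gradient_le
  obtain ⟨C, hC⟩ := hφ.locallyLipschitz.continuous.bounded_above_of_compact_support hφ.2.1
  have hXe := hasDerivAt_setIntegral_inner_translate hΩ hK hφ.2.2 hX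
    (measurable_gradient φ).aestronglyMeasurable hB e
  have hge := hasDerivAt_setIntegral_inner_translate hΩ hK hφ.2.2 hg
    hφ.locallyLipschitz.continuous.aestronglyMeasurable hC e
  have heq : (fun t : ℝ => ∫ x in tsupport φ, ⟪X (x + t • e), ∇ φ x⟫) =ᶠ[𝓝 0]
      fun t => -∫ x in tsupport φ, ⟪g (x + t • e), φ x⟫ := by
    have hnear : ∀ᶠ t : ℝ in 𝓝 0, ∀ x ∈ tsupport φ, x + t • e ∈ Ω :=
      hK.eventually_forall_of_forall_eventually fun x hx =>
        (Continuous.tendsto' (by fun_prop) _ _ (by simp)).eventually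
          (hΩ.mem_nhds (hφ.2.2 hx))
    filter_upwards [hnear] with t ht
    rw [← integral_inner_comp_sub_const X (∇ φ) ht fun _ => gradient_eq_zero_of_notMem_tsupport,
      ← integral_inner_comp_sub_const g φ ht fun _ => image_eq_zero_of_notMem_tsupport]
    simpa [gradient, fderiv_comp_sub] using h _ (hφ.comp_sub_const (t • e) ht)
  have hKx := (hXe.congr_of_eventuallyEq heq.symm).unique hge.neg
  have hΩX := integral_inner_comp_sub_const (Ω := Ω) (c := 0) (fun x => fderiv ℝ X x e) (∇ φ)
    (fun x hx => by simpa using hφ.2.2 hx) fun x hx => gradient_eq_zero_of_notMem_tsupport hx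
  have hΩg := integral_inner_comp_sub_const (Ω := Ω) (c := 0) (fun x => fderiv ℝ g x e) φ
    (fun x hx => by simpa using hφ.2.2 hx) fun x hx => image_eq_zero_of_notMem_tsupport hx
  simp only [sub_zero, add_zero] at hΩX hΩg
  exact hΩX.trans (hKx.trans (congrArg Neg.neg hΩg.symm))

theorem HasWeakDivOn.divergence_eqOn (h : HasWeakDivOn X g Ω) (hΩ : IsOpen Ω)
    (hX : ContDiffOn ℝ 1 X Ω) (hg : ContinuousOn g Ω) : EqOn (divergence X) g Ω := by
  have hdiv := continuousOn_divergence hΩ hX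
  refine Measure.eqOn_open_of_ae_eq (μ := volume) ?_ hΩ hdiv hg
  rw [EventuallyEq, ae_restrict_iff' hΩ.measurableSet]
  have hae := hΩ.ae_eq_zero_of_integral_contDiff_smul_eq_zero (μ := volume)
    ((hdiv.sub hg).locallyIntegrableOn hΩ.measurableSet) fun φ hφ hc hsupp => ?_
  · filter_upwards [hae] with x hx hxΩ using sub_eq_zero.1 (hx hxΩ)
  have htest : IsTestOn Ω φ :=
    ⟨hφ.lipschitzWith_of_hasCompactSupport hc (by simp), hc, hsupp⟩
  have hInt {k : 𝔼(n) → ℝ} (hk : ContinuousOn k Ω) : IntegrableOn (fun x => φ x * k x) Ω := by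
    obtain ⟨B, hB⟩ := hc.isCompact.exists_bound_of_continuousOn (hk.mono hsupp)
    exact integrableOn_mul_of_isTestOn hΩ (hk.aestronglyMeasurable hΩ.measurableSet) htest hB
  rw [← setIntegral_eq_integral_of_forall_compl_eq_zero (s := Ω)]
  · simp only [Pi.sub_apply, smul_eq_mul, mul_sub]
    rw [integral_sub (hInt hdiv) (hInt hg), sub_eq_zero, ← neg_inj,
      ← hasWeakDivOn_divergence hΩ (locallyLipschitzOn_of_contDiffOn hΩ hX) φ htest, h φ htest]
  · intro x hx
    rw [image_eq_zero_of_notMem_tsupport fun h => hx (hsupp h), zero_smul]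

end WeakDivergence

section DirichletForm

variable {Ω : Set 𝔼(n)} {A : 𝔼(n) → 𝔼(n) →L[ℝ] 𝔼(n)} {c φ ψ g ζ : 𝔼(n) → ℝ} {x : 𝔼(n)}

/-- The integrand of `dirichletForm`. -/
def dirichletDensity (A : 𝔼(n) → 𝔼(n) →L[ℝ] 𝔼(n)) (c φ ψ : 𝔼(n) → ℝ) (x : 𝔼(n)) : ℝ :=
  ⟪A x (∇ φ x), ∇ ψ x⟫ - c x * (φ x * ψ x)

/-- The bilinear form on `Ω` of the linear operator `φ ↦ -div (A ∇φ) - c φ`; a weak solution is a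
function on which `dirichletForm A c Ω φ` vanishes for every test function. -/
def dirichletForm (A : 𝔼(n) → 𝔼(n) →L[ℝ] 𝔼(n)) (c : 𝔼(n) → ℝ) (Ω : Set 𝔼(n))
    (φ ψ : 𝔼(n) → ℝ) : ℝ :=
  ∫ x in Ω, dirichletDensity A c φ ψ x

theorem aestronglyMeasurable_apply_gradient (hΩ : IsOpen Ω) (hA : ContinuousOn A Ω)
    (φ : 𝔼(n) → ℝ) : AEStronglyMeasurable (fun x => A x (∇ φ x)) (volume.restrict Ω) :=
  isBoundedBilinearMap_apply.continuous.comp_aestronglyMeasurable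
    ((hA.aestronglyMeasurable hΩ.measurableSet).prodMk (measurable_gradient φ).aestronglyMeasurable)

theorem integrableOn_dirichletDensity (hΩ : IsOpen Ω) (hA : ContinuousOn A Ω)
    (hc : ContinuousOn c Ω) (hφ : LocallyLipschitzOn Ω φ) (hψ : IsTestOn Ω ψ) :
    IntegrableOn (dirichletDensity A c φ ψ) Ω := by
  have hK := hψ.2.1.isCompact
  obtain ⟨M, hM⟩ := hK.exists_bound_of_continuousOn (hA.mono hψ.2.2)
  obtain ⟨D, hD⟩ := exists_norm_fderiv_le_of_isCompact hΩ hφ hK hψ.2.2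
  have hcφ : ContinuousOn (fun x => c x * φ x) Ω := hc.mul hφ.continuousOn
  obtain ⟨B, hB⟩ := hK.exists_bound_of_continuousOn (hcφ.mono hψ.2.2)
  refine ((integrableOn_inner_gradient (B := M * D) hΩ
    (aestronglyMeasurable_apply_gradient hΩ hA φ) hψ fun x hx => ?_).sub
    (integrableOn_mul_of_isTestOn hΩ (hcφ.aestronglyMeasurable hΩ.measurableSet) hψ hB)).congr
      (Eventually.of_forall fun x => ?_)
  · exact ((A x).le_opNorm _).trans (mul_le_mul (hM x hx) ((norm_gradient φ x).trans_le (hD x hx))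
      (norm_nonneg _) ((norm_nonneg _).trans (hM x hx)))
  · simp only [dirichletDensity, Pi.sub_apply]
    ring

theorem two_mul_inner_le_of_symmetric_of_nonneg {E : Type*} [NormedAddCommGroup E]
    [InnerProductSpace ℝ E] {T : E →L[ℝ] E} (hsymm : ∀ v w, ⟪T v, w⟫ = ⟪T w, v⟫)
    (hpos : ∀ v, 0 ≤ ⟪T v, v⟫) (v w : E) : 2 * ⟪T v, w⟫ ≤ ⟪T v, v⟫ + ⟪T w, w⟫ := by
  have h := hpos (v - w)
  simp only [map_sub, inner_sub_left, inner_sub_right, hsymm w v] at h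
  linarith

theorem dirichletDensity_mul_add_self_le (hsymm : ∀ v w, ⟪A x v, w⟫ = ⟪A x w, v⟫)
    (hpos : ∀ v, 0 ≤ ⟪A x v, v⟫) (hφ : DifferentiableAt ℝ φ x) (hg : DifferentiableAt ℝ g x)
    (hζ : DifferentiableAt ℝ ζ x) (t : ℝ) :
    dirichletDensity A c (fun y => φ y * g y + t * ζ y) (fun y => φ y * g y + t * ζ y) x ≤
      dirichletDensity A c g (fun y => φ y * (φ y * g y)) x + 2 * (g x ^ 2 * ⟪A x (∇ φ x), ∇ φ x⟫)
        + 2 * t * (φ x * dirichletDensity A c g ζ x)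
        + t ^ 2 * (dirichletDensity A c ζ ζ x + dirichletDensity A 0 ζ ζ x) := by
  have h := two_mul_inner_le_of_symmetric_of_nonneg hsymm hpos (g x • ∇ φ x) (t • ∇ ζ x)
  have hφg : DifferentiableAt ℝ (fun y => φ y * g y) x := hφ.mul hg
  simp only [dirichletDensity, gradient_add hφg (hζ.const_mul t), gradient_const_mul hζ,
    gradient_mul hφ hg, gradient_mul hφ hφg, map_add, map_smul, inner_add_left, inner_add_right,
    real_inner_smul_left, real_inner_smul_right, Pi.zero_apply] at h ⊢
  rw [hsymm (∇ ζ x) (∇ g x), hsymm (∇ ζ x) (∇ φ x), hsymm (∇ φ x) (∇ g x)]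
  nlinarith [h]

end DirichletForm

section Stability

variable {Ω : Set 𝔼(n)} {A : 𝔼(n) → 𝔼(n) →L[ℝ] 𝔼(n)} {c v w φ ζ : 𝔼(n) → ℝ}

theorem gradient_max_sub_zero {E : Type*} [NormedAddCommGroup E] [InnerProductSpace ℝ E]
    [CompleteSpace E] {w : E → ℝ} {x : E} (hw : ContinuousAt w x) (ε : ℝ) :
    ∇ (fun y => max (w y - ε) 0) x = if ε < w x then ∇ w x else 0 := by
  split_ifs with hx
  · rw [← gradient_sub_const w ε]
    refine EventuallyEq.gradient_eq ?_
    filter_upwards [hw.eventually (lt_mem_nhds hx)] with y hy using max_eq_left (sub_pos.2 hy).le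
  · exact gradient_eq_zero_of_nonneg (fun y => le_max_right _ _)
      (max_eq_right (sub_nonpos.2 (not_lt.1 hx)))

theorem isTestOn_mul_max_sub_zero (hΩ : IsOpen Ω) (hw : Continuous w)
    (hwΩ : LocallyLipschitzOn Ω w) (hsub : ∀ x, 0 < w x → x ∈ Ω) (hφ : LocallyLipschitz φ)
    (hc : HasCompactSupport φ) {ε : ℝ} (hε : 0 < ε) :
    IsTestOn Ω fun x => φ x * max (w x - ε) 0 := by
  have hsupp : tsupport (fun x => φ x * max (w x - ε) 0) ⊆ {x | ε ≤ w x} := by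
    refine closure_minimal (fun x hx => ?_) (isClosed_le continuous_const hw)
    by_contra hlt
    exact hx (mul_eq_zero_of_right _ (max_eq_right (sub_nonpos.2 (not_le.1 hlt).le)))
  exact isTestOn_of_locallyLipschitzOn hΩ
    (locallyLipschitzOn_mul hφ.locallyLipschitzOn (locallyLipschitzOn_max_const
      (locallyLipschitzOn_sub hwΩ (LocallyLipschitz.const ε).locallyLipschitzOn) 0))
    hc.mul_right fun x hx => hsub x (hε.trans_le (hsupp hx))

theorem IsTestOn.mul (hφ : LocallyLipschitz φ) (hζ : IsTestOn Ω ζ) :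
    IsTestOn Ω fun x => φ x * ζ x :=
  ⟨exists_lipschitzWith_of_hasCompactSupport (locallyLipschitzOn_univ.1
      (locallyLipschitzOn_mul hφ.locallyLipschitzOn hζ.locallyLipschitz.locallyLipschitzOn))
    hζ.2.1.mul_left, hζ.2.1.mul_left, (tsupport_mul_subset_right).trans hζ.2.2⟩

theorem IsTestOn.add_const_mul (hφ : IsTestOn Ω φ) (hζ : IsTestOn Ω ζ) (t : ℝ) :
    IsTestOn Ω fun x => φ x + t * ζ x := by
  have htζ := hζ.mul (LocallyLipschitz.const t)
  obtain ⟨⟨K, hK⟩, hc, hs⟩ := hφ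
  obtain ⟨⟨L, hL⟩, hc', hs'⟩ := htζ
  exact ⟨⟨K + L, hK.add hL⟩, hc.add hc', (tsupport_add _ _).trans (union_subset hs hs')⟩

/-- `w` is the restriction of `v` to a union of components of `{0 < v}`, extended by zero. -/
structure IsPositivePiece (Ω : Set 𝔼(n)) (v w : 𝔼(n) → ℝ) : Prop where
  continuous : Continuous w
  nonneg : ∀ x, 0 ≤ w x
  locallyLipschitzOn : LocallyLipschitzOn Ω w
  mem_of_pos : ∀ x, 0 < w x → x ∈ Ω
  eventuallyEq_of_pos : ∀ x, 0 < w x → w =ᶠ[𝓝 x] v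

/-- The part of the upper bound of `dirichletDensity_mul_add_self_le` for `g = (w - ε)⁺` that
survives after `φ * (φ * g)` has been tested against the equation. -/
def truncatedEnergy (A : 𝔼(n) → 𝔼(n) →L[ℝ] 𝔼(n)) (c φ w ζ : 𝔼(n) → ℝ) (t ε : ℝ) (x : 𝔼(n)) :
    ℝ :=
  ε * (c x * (φ x * (φ x * max (w x - ε) 0))) + 2 * (max (w x - ε) 0 ^ 2 * ⟪A x (∇ φ x), ∇ φ x⟫)
    + 2 * t * (φ x * dirichletDensity A c (fun y => max (w y - ε) 0) ζ x)

theorem dirichletDensity_max_sub_zero {x : 𝔼(n)} (hw : ContinuousAt w x) (ε : ℝ) :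
    dirichletDensity A c (fun y => max (w y - ε) 0) ζ x =
      if ε < w x then dirichletDensity A c w ζ x + ε * (c x * ζ x) else 0 := by
  rw [dirichletDensity, gradient_max_sub_zero hw]
  split_ifs with hx
  · rw [max_eq_left (sub_pos.2 hx).le, dirichletDensity]
    ring
  · rw [max_eq_right (sub_nonpos.2 (not_lt.1 hx)), map_zero, inner_zero_left]
    ring

theorem IsPositivePiece.dirichletDensity_eq (hw : IsPositivePiece Ω v w) {ε : ℝ} (hε : 0 ≤ ε)
    (x : 𝔼(n)) :
    dirichletDensity A c (fun y => max (w y - ε) 0) (fun y => φ y * (φ y * max (w y - ε) 0)) x =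
      dirichletDensity A c v (fun y => φ y * (φ y * max (w y - ε) 0)) x
        + ε * (c x * (φ x * (φ x * max (w x - ε) 0))) := by
  rw [dirichletDensity_max_sub_zero hw.continuous.continuousAt]
  split_ifs with hx
  · have hwv := hw.eventuallyEq_of_pos x (hε.trans_lt hx)
    rw [dirichletDensity, dirichletDensity, hwv.gradient_eq, hwv.eq_of_nhds]
  · have hmax : max (w x - ε) 0 = 0 := max_eq_right (sub_nonpos.2 (not_lt.1 hx))
    have hgrad : ∇ (fun y => φ y * (φ y * max (w y - ε) 0)) x = 0 := by
      refine gradient_eq_zero_of_nonneg (fun y => ?_) (by rw [hmax, mul_zero, mul_zero])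
      rw [← mul_assoc]
      exact mul_nonneg (mul_self_nonneg _) (le_max_right _ _)
    rw [dirichletDensity, hgrad, hmax, inner_zero_right]
    ring

theorem IsPositivePiece.abs_truncatedEnergy_le (hw : IsPositivePiece Ω v w)
    (hpos : ∀ x p, 0 ≤ ⟪A x p, p⟫) {t ε : ℝ} (hε : 0 ≤ ε) (hε1 : ε ≤ 1) (x : 𝔼(n)) :
    |truncatedEnergy A c φ w ζ t ε x| ≤ |c x * (φ x * (φ x * w x))|
      + 2 * (w x ^ 2 * ⟪A x (∇ φ x), ∇ φ x⟫)
      + 2 * |t| * (|φ x * dirichletDensity A c w ζ x| + |φ x * (ζ x * c x)|) := by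
  have hq := hpos x (∇ φ x)
  have hmax : max (w x - ε) 0 ≤ w x := max_le (by linarith) (hw.nonneg x)
  have hdens : |φ x * dirichletDensity A c (fun y => max (w y - ε) 0) ζ x| ≤
      |φ x * dirichletDensity A c w ζ x| + |φ x * (ζ x * c x)| := by
    rw [dirichletDensity_max_sub_zero hw.continuous.continuousAt]
    split_ifs with hx
    · rw [mul_add, mul_left_comm, mul_comm (c x)]
      refine (abs_add_le _ _).trans (add_le_add_right ?_ _)
      rw [abs_mul ε, abs_of_nonneg hε]
      exact mul_le_of_le_one_left (abs_nonneg _) hε1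
    · rw [mul_zero, abs_zero]
      positivity
  refine (abs_add_three _ _ _).trans (add_le_add_three ?_ ?_ ?_)
  · rw [abs_mul, abs_of_nonneg hε]
    refine (mul_le_of_le_one_left (abs_nonneg _) hε1).trans ?_
    simp only [abs_mul, abs_of_nonneg (hw.nonneg x), abs_of_nonneg (le_max_right (w x - ε) 0)]
    gcongr
  · rw [abs_of_nonneg (by positivity)]
    gcongr
  · rw [abs_mul, abs_mul, abs_two]
    gcongr

theorem IsPositivePiece.tendsto_truncatedEnergy (hw : IsPositivePiece Ω v w) (t : ℝ) (x : 𝔼(n)) :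
    Tendsto (fun ε => truncatedEnergy A c φ w ζ t ε x) (𝓝[>] 0)
      (𝓝 (2 * (w x ^ 2 * ⟪A x (∇ φ x), ∇ φ x⟫) + 2 * t * (φ x * dirichletDensity A c w ζ x))) := by
  have hlim {F : ℝ → ℝ} (hF : Continuous F) : Tendsto F (𝓝[>] 0) (𝓝 (F 0)) :=
    (hF.tendsto 0).mono_left nhdsWithin_le_nhds
  have hdens : Tendsto (fun ε => dirichletDensity A c (fun y => max (w y - ε) 0) ζ x) (𝓝[>] 0)
      (𝓝 (dirichletDensity A c w ζ x)) := by
    simp only [dirichletDensity_max_sub_zero hw.continuous.continuousAt]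
    rcases (hw.nonneg x).eq_or_lt with hx | hx
    · rw [dirichletDensity, gradient_eq_zero_of_nonneg hw.nonneg hx.symm, ← hx]
      simp only [map_zero, inner_zero_left, zero_mul, mul_zero, sub_zero]
      refine tendsto_const_nhds.congr' ?_
      filter_upwards [self_mem_nhdsWithin] with ε hε using (if_neg (not_lt.2 (le_of_lt hε))).symm
    · have := hlim (F := fun ε => dirichletDensity A c w ζ x + ε * (c x * ζ x)) (by fun_prop)
      rw [zero_mul, add_zero] at this
      refine this.congr' ?_
      filter_upwards [mem_nhdsWithin_of_mem_nhds (Iio_mem_nhds hx)] with ε hε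
        using (if_pos hε).symm
  have hrest := hlim (F := fun ε => ε * (c x * (φ x * (φ x * max (w x - ε) 0)))
    + 2 * (max (w x - ε) 0 ^ 2 * ⟪A x (∇ φ x), ∇ φ x⟫)) (by fun_prop)
  rw [sub_zero, max_eq_left (hw.nonneg x), zero_mul, zero_add] at hrest
  exact hrest.add ((hdens.const_mul _).const_mul _)

theorem integrableOn_mul_inner_apply_gradient (hΩ : IsOpen Ω) (hg : ContinuousOn g (closure Ω))
    (hA : ContinuousOn A (closure Ω)) (hφ : LocallyLipschitz φ) (hφc : HasCompactSupport φ) :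
    IntegrableOn (fun x => g x * ⟪A x (∇ φ x), ∇ φ x⟫) Ω := by
  obtain ⟨C, hC⟩ := (IsTestOn.exists_norm_gradient_le (Ω := univ)
    ⟨exists_lipschitzWith_of_hasCompactSupport hφ hφc, hφc, subset_univ _⟩)
  obtain ⟨M, hM⟩ := (hφc.isCompact.inter_right isClosed_closure).exists_bound_of_continuousOn
    ((hg.smul hA).mono inter_subset_right)
  have hM' : ∀ x ∈ Ω ∩ tsupport φ, ‖g x • A x‖ ≤ M := fun x hx =>
    hM x ⟨hx.2, subset_closure hx.1⟩
  refine (integrableOn_inner_of_isCompact hΩ.measurableSet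
    (aestronglyMeasurable_apply_gradient hΩ ((hg.smul hA).mono subset_closure) φ)
    (measurable_gradient φ).aestronglyMeasurable hφc.isCompact (B := M * C)
    (fun x hx => (ContinuousLinearMap.le_opNorm _ _).trans
      (mul_le_mul (hM' x hx) (hC x) (norm_nonneg _) ((norm_nonneg _).trans (hM' x hx))))
    (fun x _ => hC x) fun _ => gradient_eq_zero_of_notMem_tsupport).congr
      (Eventually.of_forall fun x => ?_)
  exact real_inner_smul_left _ _ _

theorem IsPositivePiece.integrableOn_energy (hw : IsPositivePiece Ω v w) (hΩ : IsOpen Ω)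
    (hA : ContinuousOn A (closure Ω)) (hφ : LocallyLipschitz φ) (hφc : HasCompactSupport φ) :
    IntegrableOn (fun x => w x ^ 2 * ⟪A x (∇ φ x), ∇ φ x⟫) Ω :=
  integrableOn_mul_inner_apply_gradient hΩ (hw.continuous.pow 2).continuousOn hA hφ hφc

theorem integrableOn_mul_of_hasCompactSupport {g : 𝔼(n) → ℝ} (hφ : Continuous φ)
    (hφc : HasCompactSupport φ) (hg : IntegrableOn g Ω) : IntegrableOn (fun x => φ x * g x) Ω :=
  let ⟨_, hC⟩ := hφ.bounded_above_of_compact_support hφc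
  hg.bdd_mul hφ.aestronglyMeasurable (Eventually.of_forall hC)

theorem IsPositivePiece.integrableOn_potential (hw : IsPositivePiece Ω v w) (hΩ : IsOpen Ω)
    (hc : ContinuousOn c (closure Ω)) (hφ : Continuous φ) (hφc : HasCompactSupport φ) :
    IntegrableOn (fun x => c x * (φ x * (φ x * w x))) Ω := by
  have hcont : ContinuousOn (fun x => c x * (φ x * (φ x * w x))) (closure Ω) :=
    hc.mul (hφ.mul (hφ.mul hw.continuous)).continuousOn
  obtain ⟨M, hM⟩ := (hφc.isCompact.inter_right isClosed_closure).exists_bound_of_continuousOn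
    (hcont.mono inter_subset_right)
  refine integrableOn_of_norm_le_of_isCompact hΩ.measurableSet
    ((hcont.mono subset_closure).aestronglyMeasurable hΩ.measurableSet) hφc.isCompact
    (fun x hx => hM x ⟨hx.2, subset_closure hx.1⟩) fun x hx => ?_
  rw [image_eq_zero_of_notMem_tsupport hx, zero_mul, mul_zero]

theorem IsPositivePiece.locallyLipschitzOn_max_sub_zero (hw : IsPositivePiece Ω v w) (ε : ℝ) :
    LocallyLipschitzOn Ω fun x => max (w x - ε) 0 :=
  locallyLipschitzOn_max_const (locallyLipschitzOn_sub hw.locallyLipschitzOn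
    (LocallyLipschitz.const ε).locallyLipschitzOn) 0

theorem IsPositivePiece.aestronglyMeasurable_truncatedEnergy (hw : IsPositivePiece Ω v w)
    (hΩ : IsOpen Ω) (hA : ContinuousOn A Ω) (hc : ContinuousOn c Ω) (hφ : Continuous φ)
    (hζ : IsTestOn Ω ζ) (t ε : ℝ) :
    AEStronglyMeasurable (truncatedEnergy A c φ w ζ t ε) (volume.restrict Ω) := by
  have hg : Continuous fun x => max (w x - ε) 0 :=
    (hw.continuous.sub continuous_const).max continuous_const
  have hq := (aestronglyMeasurable_apply_gradient hΩ hA φ).inner (𝕜 := ℝ)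
    (measurable_gradient φ).aestronglyMeasurable
  have hcm := hc.aestronglyMeasurable (μ := volume) hΩ.measurableSet
  have hφm := hφ.aestronglyMeasurable (μ := volume.restrict Ω)
  have hform := (integrableOn_dirichletDensity hΩ hA hc (hw.locallyLipschitzOn_max_sub_zero ε)
    hζ).aestronglyMeasurable
  exact (((hcm.mul (hφm.mul (hφm.mul hg.aestronglyMeasurable))).const_mul _).add
    (((hg.pow 2).aestronglyMeasurable.mul hq).const_mul _)).add ((hφm.mul hform).const_mul _)

theorem IsPositivePiece.exists_integrableOn_bound (hw : IsPositivePiece Ω v w) (hΩ : IsOpen Ω)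
    (hA : ContinuousOn A (closure Ω)) (hc : ContinuousOn c (closure Ω))
    (hpos : ∀ x p, 0 ≤ ⟪A x p, p⟫) (hφ : LocallyLipschitz φ) (hφc : HasCompactSupport φ)
    (hζ : IsTestOn Ω ζ) (t : ℝ) :
    ∃ B : 𝔼(n) → ℝ, IntegrableOn B Ω ∧
      ∀ᶠ ε in 𝓝[>] 0, ∀ x, ‖truncatedEnergy A c φ w ζ t ε x‖ ≤ B x := by
  have hc' := hc.mono subset_closure
  obtain ⟨M, hM⟩ := hζ.2.1.isCompact.exists_bound_of_continuousOn (hc'.mono hζ.2.2)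
  have hform := integrableOn_mul_of_hasCompactSupport hφ.continuous hφc
    (integrableOn_dirichletDensity hΩ (hA.mono subset_closure) hc' hw.locallyLipschitzOn hζ)
  have hcζ := integrableOn_mul_of_hasCompactSupport hφ.continuous hφc
    (integrableOn_mul_of_isTestOn hΩ (hc'.aestronglyMeasurable hΩ.measurableSet) hζ hM)
  refine ⟨_, ((hw.integrableOn_potential hΩ hc hφ.continuous hφc).abs.add
    ((hw.integrableOn_energy hΩ hA hφ hφc).const_mul 2)).add
    ((hform.abs.add hcζ.abs).const_mul (2 * |t|)), ?_⟩
  filter_upwards [Ioc_mem_nhdsGT one_pos] with ε hε x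
  exact hw.abs_truncatedEnergy_le hpos hε.1.le hε.2 x

theorem IsPositivePiece.tendsto_integral_truncatedEnergy (hw : IsPositivePiece Ω v w)
    (hΩ : IsOpen Ω) (hA : ContinuousOn A (closure Ω)) (hc : ContinuousOn c (closure Ω))
    (hpos : ∀ x p, 0 ≤ ⟪A x p, p⟫) (hφ : LocallyLipschitz φ) (hφc : HasCompactSupport φ)
    (hζ : IsTestOn Ω ζ) (t : ℝ) :
    Tendsto (fun ε => ∫ x in Ω, truncatedEnergy A c φ w ζ t ε x) (𝓝[>] 0)
      (𝓝 (2 * (∫ x in Ω, w x ^ 2 * ⟪A x (∇ φ x), ∇ φ x⟫)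
        + 2 * t * ∫ x in Ω, φ x * dirichletDensity A c w ζ x)) := by
  have hA' := hA.mono subset_closure
  have hc' := hc.mono subset_closure
  obtain ⟨B, hB, hle⟩ := hw.exists_integrableOn_bound hΩ hA hc hpos hφ hφc hζ t
  rw [← integral_const_mul, ← integral_const_mul,
    ← integral_add ((hw.integrableOn_energy hΩ hA hφ hφc).const_mul _)
      ((integrableOn_mul_of_hasCompactSupport hφ.continuous hφc
        (integrableOn_dirichletDensity hΩ hA' hc' hw.locallyLipschitzOn hζ)).const_mul _)]
  exact tendsto_integral_filter_of_dominated_convergence B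
    (Eventually.of_forall fun ε =>
      hw.aestronglyMeasurable_truncatedEnergy hΩ hA' hc' hφ.continuous hζ t ε)
    (hle.mono fun ε h => Eventually.of_forall h) hB
    (Eventually.of_forall (hw.tendsto_truncatedEnergy t))

theorem IsPositivePiece.dirichletDensity_mul_add_self_le (hw : IsPositivePiece Ω v w) {x : 𝔼(n)}
    (hsymm : ∀ p q, ⟪A x p, q⟫ = ⟪A x q, p⟫) (hpos : ∀ p, 0 ≤ ⟪A x p, p⟫) {ε : ℝ} (hε : 0 ≤ ε)
    (hφ : DifferentiableAt ℝ φ x) (hg : DifferentiableAt ℝ (fun y => max (w y - ε) 0) x)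
    (hζ : DifferentiableAt ℝ ζ x) (t : ℝ) :
    dirichletDensity A c (fun y => φ y * max (w y - ε) 0 + t * ζ y)
        (fun y => φ y * max (w y - ε) 0 + t * ζ y) x
      - dirichletDensity A c v (fun y => φ y * (φ y * max (w y - ε) 0)) x ≤
      truncatedEnergy A c φ w ζ t ε x
        + t ^ 2 * (dirichletDensity A c ζ ζ x + dirichletDensity A 0 ζ ζ x) := by
  have h := _root_.dirichletDensity_mul_add_self_le (A := A) (c := c) hsymm hpos hφ hg hζ t
  rw [hw.dirichletDensity_eq hε] at h
  simp only [truncatedEnergy]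
  linarith

theorem IsPositivePiece.zero_le_integral_truncatedEnergy_add (hw : IsPositivePiece Ω v w)
    (hΩ : IsOpen Ω) (hA : ContinuousOn A Ω) (hc : ContinuousOn c Ω)
    (hsymm : ∀ x p q, ⟪A x p, q⟫ = ⟪A x q, p⟫) (hpos : ∀ x p, 0 ≤ ⟪A x p, p⟫)
    (hstab : ∀ ψ, IsTestOn Ω ψ → 0 ≤ dirichletForm A c Ω ψ ψ)
    (hv : LocallyLipschitzOn Ω v) (hsol : ∀ ψ, IsTestOn Ω ψ → dirichletForm A c Ω v ψ = 0)
    (hφ : LocallyLipschitz φ) (hφc : HasCompactSupport φ) (hζ : IsTestOn Ω ζ) {t ε : ℝ}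
    (hε : 0 < ε) (hInt : IntegrableOn (truncatedEnergy A c φ w ζ t ε) Ω) :
    0 ≤ (∫ x in Ω, truncatedEnergy A c φ w ζ t ε x)
        + t ^ 2 * (dirichletForm A c Ω ζ ζ + dirichletForm A 0 Ω ζ ζ) := by
  have hζΩ : LocallyLipschitzOn Ω ζ := hζ.locallyLipschitz.locallyLipschitzOn
  have hφg := isTestOn_mul_max_sub_zero hΩ hw.continuous hw.locallyLipschitzOn hw.mem_of_pos hφ hφc
    hε
  have htest := hφg.add_const_mul hζ t
  have hint_c := integrableOn_dirichletDensity hΩ hA hc hζΩ hζ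
  have hint_0 := integrableOn_dirichletDensity (c := 0) hΩ hA continuousOn_const hζΩ hζ
  have hint_test := integrableOn_dirichletDensity hΩ hA hc htest.locallyLipschitz.locallyLipschitzOn
    htest
  have hint_v := integrableOn_dirichletDensity hΩ hA hc hv (hφg.mul hφ)
  calc 0 ≤ dirichletForm A c Ω (fun x => φ x * max (w x - ε) 0 + t * ζ x)
          (fun x => φ x * max (w x - ε) 0 + t * ζ x)
        - dirichletForm A c Ω v (fun x => φ x * (φ x * max (w x - ε) 0)) := by
        rw [hsol _ (hφg.mul hφ), sub_zero]
        exact hstab _ htest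
    _ ≤ ∫ x in Ω, (truncatedEnergy A c φ w ζ t ε x
          + t ^ 2 * (dirichletDensity A c ζ ζ x + dirichletDensity A 0 ζ ζ x)) := by
        rw [dirichletForm, dirichletForm, ← integral_sub hint_test hint_v]
        refine integral_mono_ae (hint_test.sub hint_v)
          (hInt.add ((hint_c.add hint_0).const_mul _)) ?_
        filter_upwards [ae_differentiableAt_of_locallyLipschitzOn hΩ hφ.locallyLipschitzOn,
          ae_differentiableAt_of_locallyLipschitzOn hΩ (hw.locallyLipschitzOn_max_sub_zero ε),
          ae_differentiableAt_of_locallyLipschitzOn hΩ hζΩ] with x hφx hgx hζx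
        exact hw.dirichletDensity_mul_add_self_le (hsymm x) (hpos x) hε.le hφx hgx hζx t
    _ = _ := by
        rw [dirichletForm, dirichletForm, ← integral_add hint_c hint_0, ← integral_const_mul]
        exact integral_add hInt ((hint_c.add hint_0).const_mul _)

theorem IsPositivePiece.zero_le_of_stable (hw : IsPositivePiece Ω v w)
    (hΩ : IsOpen Ω) (hA : ContinuousOn A (closure Ω)) (hc : ContinuousOn c (closure Ω))
    (hsymm : ∀ x p q, ⟪A x p, q⟫ = ⟪A x q, p⟫) (hpos : ∀ x p, 0 ≤ ⟪A x p, p⟫)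
    (hstab : ∀ ψ, IsTestOn Ω ψ → 0 ≤ dirichletForm A c Ω ψ ψ)
    (hv : LocallyLipschitzOn Ω v) (hsol : ∀ ψ, IsTestOn Ω ψ → dirichletForm A c Ω v ψ = 0)
    (hφ : LocallyLipschitz φ) (hφc : HasCompactSupport φ) (hζ : IsTestOn Ω ζ) (t : ℝ) :
    0 ≤ 2 * (∫ x in Ω, w x ^ 2 * ⟪A x (∇ φ x), ∇ φ x⟫)
        + 2 * t * (∫ x in Ω, φ x * dirichletDensity A c w ζ x)
        + t ^ 2 * (dirichletForm A c Ω ζ ζ + dirichletForm A 0 Ω ζ ζ) := by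
  have hA' := hA.mono subset_closure
  have hc' := hc.mono subset_closure
  obtain ⟨B, hB, hle⟩ := hw.exists_integrableOn_bound hΩ hA hc hpos hφ hφc hζ t
  refine ge_of_tendsto ((hw.tendsto_integral_truncatedEnergy hΩ hA hc hpos hφ hφc hζ t).add_const _)
    ?_
  filter_upwards [self_mem_nhdsWithin, hle] with ε hε hεB
  exact hw.zero_le_integral_truncatedEnergy_add hΩ hA' hc' hsymm hpos hstab hv hsol hφ hφc hζ hε
    (hB.mono' (hw.aestronglyMeasurable_truncatedEnergy hΩ hA' hc' hφ.continuous hζ t ε)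
      (Eventually.of_forall hεB))

theorem eq_zero_of_forall_zero_le_add_mul {L C : ℝ} (h : ∀ t : ℝ, 0 ≤ 2 * t * L + t ^ 2 * C) :
    L = 0 := by
  have := discrim_le_zero (a := C) (b := 2 * L) (c := 0) fun t => by linarith [h t]
  rw [discrim] at this
  nlinarith

theorem tendsto_integral_mul_of_tendstoUniformlyOn {φ : ℕ → 𝔼(n) → ℝ} {F : 𝔼(n) → ℝ}
    {K : Set 𝔼(n)} (hφ : ∀ j, Continuous (φ j)) (hF : IntegrableOn F Ω) (h0 : ∀ x ∉ K, F x = 0)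
    (hlim : TendstoUniformlyOn φ (fun _ => 1) atTop K) :
    Tendsto (fun j => ∫ x in Ω, φ j x * F x) atTop (𝓝 (∫ x in Ω, F x)) := by
  refine tendsto_integral_filter_of_dominated_convergence (fun x => 2 * ‖F x‖)
    (Eventually.of_forall fun j => (hφ j).aestronglyMeasurable.mul hF.aestronglyMeasurable) ?_
    (hF.norm.const_mul 2) (Eventually.of_forall fun x => ?_)
  · filter_upwards [Metric.tendstoUniformlyOn_iff.1 hlim 1 one_pos] with j hj
    refine Eventually.of_forall fun x => ?_
    by_cases hx : x ∈ K
    · rw [norm_mul]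
      refine mul_le_mul_of_nonneg_right ?_ (norm_nonneg _)
      have h1 := abs_lt.1 (hj x hx)
      exact abs_le.2 ⟨by linarith, by linarith⟩
    · rw [h0 x hx, mul_zero, norm_zero, mul_zero]
  · by_cases hx : x ∈ K
    · simpa using (hlim.tendsto_at hx).mul_const (F x)
    · simp [h0 x hx]

theorem IsPositivePiece.dirichletForm_eq_zero_of_stable (hw : IsPositivePiece Ω v w)
    (hΩ : IsOpen Ω) (hA : ContinuousOn A (closure Ω)) (hc : ContinuousOn c (closure Ω))
    (hsymm : ∀ x p q, ⟪A x p, q⟫ = ⟪A x q, p⟫) (hpos : ∀ x p, 0 ≤ ⟪A x p, p⟫)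
    (hstab : ∀ ψ, IsTestOn Ω ψ → 0 ≤ dirichletForm A c Ω ψ ψ)
    (hv : LocallyLipschitzOn Ω v) (hsol : ∀ ψ, IsTestOn Ω ψ → dirichletForm A c Ω v ψ = 0)
    {φ : ℕ → 𝔼(n) → ℝ} (hφ : ∀ j, LocallyLipschitz (φ j)) (hφc : ∀ j, HasCompactSupport (φ j))
    (hφ_lim : ∀ K, IsCompact K → K ⊆ tsupport w → TendstoUniformlyOn φ (fun _ => 1) atTop K)
    (henergy : Tendsto (fun j => ∫ x in Ω, w x ^ 2 * ⟪A x (∇ (φ j) x), ∇ (φ j) x⟫) atTop (𝓝 0))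
    (hζ : IsTestOn Ω ζ) : dirichletForm A c Ω w ζ = 0 := by
  have hvanish : ∀ x ∉ tsupport w ∩ tsupport ζ, dirichletDensity A c w ζ x = 0 := by
    intro x hx
    rcases not_and_or.1 hx with hx | hx <;>
    · rw [dirichletDensity, gradient_eq_zero_of_notMem_tsupport hx,
        image_eq_zero_of_notMem_tsupport hx]
      simp
  have hlim := tendsto_integral_mul_of_tendstoUniformlyOn (fun j => (hφ j).continuous)
    (integrableOn_dirichletDensity hΩ (hA.mono subset_closure) (hc.mono subset_closure)
      hw.locallyLipschitzOn hζ) hvanish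
    (hφ_lim _ (hζ.2.1.isCompact.inter_left (isClosed_tsupport w)) inter_subset_left)
  refine eq_zero_of_forall_zero_le_add_mul
    (C := dirichletForm A c Ω ζ ζ + dirichletForm A 0 Ω ζ ζ) fun t => ?_
  have htend := ((henergy.const_mul 2).add (hlim.const_mul (2 * t))).add_const
    (t ^ 2 * (dirichletForm A c Ω ζ ζ + dirichletForm A 0 Ω ζ ζ))
  rw [mul_zero, zero_add] at htend
  exact ge_of_tendsto' htend fun j =>
    hw.zero_le_of_stable hΩ hA hc hsymm hpos hstab hv hsol (hφ j) (hφc j) hζ t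

end Stability

section StrongMaximumPrinciple

theorem closedBall_midpoint_diff_subset_ball {E : Type*} [NormedAddCommGroup E] [NormedSpace ℝ E]
    [StrictConvexSpace ℝ E] (z x₀ : E) :
    closedBall (midpoint ℝ z x₀) (dist z x₀ / 2) \ {x₀} ⊆ ball z (dist z x₀) := by
  rintro x ⟨hx, hne⟩
  rw [mem_closedBall] at hx
  have hyz : dist (midpoint ℝ z x₀) z = dist z x₀ / 2 := by
    rw [dist_midpoint_left, Real.norm_two, div_eq_inv_mul]
  refine mem_ball.2 (lt_of_le_of_ne (by linarith [dist_triangle x (midpoint ℝ z x₀) z])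
    fun h => hne ?_)
  have hmid : midpoint ℝ z x₀ = midpoint ℝ z x :=
    eq_midpoint_of_dist_eq_half (by rw [dist_comm, hyz, dist_comm z x, h])
      (by rw [dist_comm, dist_comm z x, h]
          linarith [dist_triangle x (midpoint ℝ z x₀) z])
  exact (AffineEquiv.pointReflection_midpoint_left z x).symm.trans (midpoint_eq_iff.1 hmid)

theorem exists_closedBall_diff_singleton_subset {E : Type*} [NormedAddCommGroup E]
    [NormedSpace ℝ E] [StrictConvexSpace ℝ E] [ProperSpace E] {S Ω : Set E} (hS : IsOpen S)
    (hΩ : IsOpen Ω) (hconn : IsPreconnected Ω) (hne : (Ω ∩ S).Nonempty) (hdiff : (Ω \ S).Nonempty) :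
    ∃ y, ∃ x₀ ∈ Ω \ S, y ≠ x₀ ∧ closedBall y (dist x₀ y) \ {x₀} ⊆ S := by
  obtain ⟨p, hpΩ, hp⟩ := inter_frontier_nonempty_of_isPreconnected hconn hne hdiff
  rw [hS.frontier_eq] at hp
  obtain ⟨ε, hε, hball⟩ := Metric.isOpen_iff.1 hΩ p hpΩ
  obtain ⟨z, hzS, hz⟩ := Metric.mem_closure_iff.1 hp.1 (ε / 2) (half_pos hε)
  obtain ⟨x₀, hx₀, hd⟩ := hS.isClosed_compl.exists_infDist_eq_dist ⟨p, hp.2⟩ z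
  have hle : dist z x₀ ≤ dist z p := hd ▸ infDist_le_dist_of_mem hp.2
  have hzx : z ≠ x₀ := fun h => hx₀ (h ▸ hzS)
  refine ⟨midpoint ℝ z x₀, x₀, ⟨hball ?_, hx₀⟩, fun h => hzx ((midpoint_eq_right_iff ℝ).1 h), ?_⟩
  · rw [mem_ball]
    linarith [dist_triangle_left x₀ p z, dist_comm p z]
  · rw [dist_right_midpoint, Real.norm_two, ← div_eq_inv_mul]
    refine (closedBall_midpoint_diff_subset_ball z x₀).trans fun x hx => ?_
    by_contra hxS
    have := infDist_le_dist_of_mem (x := z) (show x ∈ Sᶜ from hxS)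
    rw [hd, dist_comm z x] at this
    exact (mem_ball.1 hx).not_ge this

variable {Ω V : Set 𝔼(n)} {A : 𝔼(n) → 𝔼(n) →L[ℝ] 𝔼(n)} {c w z φ ψ : 𝔼(n) → ℝ}

theorem dirichletDensity_eq_zero_of_notMem_tsupport {x : 𝔼(n)} (hx : x ∉ tsupport ψ) :
    dirichletDensity A c w ψ x = 0 := by
  rw [dirichletDensity, gradient_eq_zero_of_notMem_tsupport hx,
    image_eq_zero_of_notMem_tsupport hx, inner_zero_right, mul_zero, mul_zero, sub_zero]

theorem dirichletForm_eq_of_tsupport_subset (hΩ : MeasurableSet Ω) (hVΩ : V ⊆ Ω)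
    (hψ : tsupport ψ ⊆ V) : dirichletForm A c V w ψ = dirichletForm A c Ω w ψ :=
  (setIntegral_eq_of_subset_of_forall_sdiff_eq_zero hΩ hVΩ fun _ hx =>
    dirichletDensity_eq_zero_of_notMem_tsupport fun h => hx.2 (hψ h)).symm

theorem IsTestOn.integrable_sq (hψ : IsTestOn V ψ) : Integrable fun x => ψ x ^ 2 := by
  simp_rw [sq]
  exact (hψ.locallyLipschitz.continuous.mul
    hψ.locallyLipschitz.continuous).integrable_of_hasCompactSupport hψ.2.1.mul_left

theorem IsTestOn.eq_zero_of_setIntegral_sq_nonpos (hψ : IsTestOn V ψ)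
    (h : ∫ x in V, ψ x ^ 2 ≤ 0) (x : 𝔼(n)) : ψ x = 0 := by
  rw [setIntegral_eq_integral_of_forall_compl_eq_zero fun y hy => by
    rw [image_eq_zero_of_notMem_tsupport fun hy' => hy (hψ.2.2 hy'), sq, mul_zero]] at h
  have hzero := (integral_eq_zero_iff_of_nonneg (fun y => sq_nonneg (ψ y)) hψ.integrable_sq).1
    (h.antisymm (integral_nonneg fun y => sq_nonneg (ψ y)))
  have heq := congr_fun (Continuous.ae_eq_iff_eq volume
    (hψ.locallyLipschitz.continuous.pow 2) continuous_const |>.1 hzero) x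
  exact pow_eq_zero_iff two_ne_zero |>.1 heq

theorem nonpos_of_dirichletForm_nonpos (hV : IsOpen V) (hA : ContinuousOn A V)
    (hpos : ∀ x p, 0 ≤ ⟪A x p, p⟫) {M : ℝ} (hM : 0 < M) (hz : LocallyLipschitzOn V z)
    {K : Set 𝔼(n)} (hK : IsCompact K) (hKV : K ⊆ V) (hzK : ∀ x ∈ V \ K, z x ≤ 0)
    (hsub : ∀ ψ, IsTestOn V ψ → (∀ x, 0 ≤ ψ x) → dirichletForm A (fun _ => -M) V z ψ ≤ 0) :
    ∀ x ∈ V, z x ≤ 0 := by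
  obtain ⟨ψ, hψ⟩ : ∃ ψ : 𝔼(n) → ℝ, ψ = V.indicator fun x => max (z x) 0 := ⟨_, rfl⟩
  have hψV : ∀ x ∈ V, ψ x = max (z x) 0 := fun x hx => hψ ▸ indicator_of_mem hx _
  have hψ0 (x : 𝔼(n)) : 0 ≤ ψ x := hψ ▸ indicator_nonneg (fun _ _ => le_max_right _ _) x
  have hsupp : Function.support ψ ⊆ K := fun x hx => by
    by_contra hxK
    exact hx (hψ ▸ indicator_apply_eq_zero.2 fun hxV => max_eq_right (hzK x ⟨hxV, hxK⟩))
  have htest : IsTestOn V ψ :=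
    isTestOn_of_locallyLipschitzOn hV (hψ ▸ locallyLipschitzOn_indicator hV
      (locallyLipschitzOn_max_const hz 0) (by simp [hV.inter_frontier_eq]))
      (HasCompactSupport.of_support_subset_isCompact hK hsupp)
      ((closure_minimal hsupp hK.isClosed).trans hKV)
  have hdens : ∀ x ∈ V, M * ψ x ^ 2 ≤ dirichletDensity A (fun _ => -M) z ψ x := by
    intro x hx
    have hzx := hz.continuousOn.continuousAt (hV.mem_nhds hx)
    have hgrad : ∇ ψ x = if 0 < z x then ∇ z x else 0 := by
      rw [← gradient_max_sub_zero hzx, EventuallyEq.gradient_eq]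
      filter_upwards [hV.mem_nhds hx] with y hy
      rw [hψV y hy, sub_zero]
    rw [dirichletDensity, hgrad, hψV x hx]
    split_ifs with h
    · rw [max_eq_left h.le]
      linarith [hpos x (∇ z x)]
    · rw [max_eq_right (not_lt.1 h)]
      simp
  have hle : M * ∫ x in V, ψ x ^ 2 ≤ 0 := by
    rw [← integral_const_mul]
    exact (setIntegral_mono_on (htest.integrable_sq.const_mul M).integrableOn
      (integrableOn_dirichletDensity hV hA continuousOn_const hz htest) hV.measurableSet
      hdens).trans (hsub ψ htest hψ0)
  intro x hx
  rw [← max_eq_right_iff, ← hψV x hx]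
  exact htest.eq_zero_of_setIntegral_sq_nonpos (nonpos_of_mul_nonpos_right hle hM) x

theorem dirichletForm_nonpos_of_le_divergence (hV : IsOpen V) (hA : ContinuousOn A V)
    (hc : ContinuousOn c V) (hφ : LocallyLipschitzOn V φ)
    (hX : LocallyLipschitzOn V fun x => A x (∇ φ x))
    (hle : ∀ᵐ x ∂volume.restrict V, -c x * φ x ≤ divergence (fun y => A y (∇ φ y)) x)
    (hψ : IsTestOn V ψ) (hψ0 : ∀ x, 0 ≤ ψ x) : dirichletForm A c V φ ψ ≤ 0 := by
  have hInt : IntegrableOn (fun x => ⟪A x (∇ φ x), ∇ ψ x⟫) V := by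
    refine (integrableOn_dirichletDensity (c := fun _ => 0) hV hA continuousOn_const hφ hψ).congr
      (Eventually.of_forall fun x => ?_)
    simp only [dirichletDensity, zero_mul, sub_zero]
  have hdiv : IntegrableOn (fun x => ψ x * divergence (fun y => A y (∇ φ y)) x) V := by
    obtain ⟨C, hC⟩ := exists_norm_fderiv_le_of_isCompact hV hX hψ.2.1.isCompact hψ.2.2
    exact integrableOn_mul_of_isTestOn hV (measurable_divergence _).aestronglyMeasurable hψ
      fun x hx => (abs_divergence_le _ x).trans
        (mul_le_mul_of_nonneg_left (hC x hx) (Nat.cast_nonneg _))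
  calc dirichletForm A c V φ ψ
      ≤ ∫ x in V, (⟪A x (∇ φ x), ∇ ψ x⟫ + ψ x * divergence (fun y => A y (∇ φ y)) x) := by
        refine integral_mono_ae (integrableOn_dirichletDensity hV hA hc hφ hψ) (hInt.add hdiv) ?_
        filter_upwards [hle] with x hx
        have := mul_le_mul_of_nonneg_left hx (hψ0 x)
        rw [dirichletDensity]
        linarith
    _ = 0 := by
        rw [integral_add hInt hdiv, hasWeakDivOn_divergence hV hX ψ hψ, neg_add_cancel]

section Gaussian

variable {E : Type*} [NormedAddCommGroup E]

/-- The Gaussian of rate `K` centred at `y`, from which the barriers for the strong maximum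
principle are built. -/
def gaussian (K : ℝ) (y x : E) : ℝ := Real.exp (-K * ‖x - y‖ ^ 2)

theorem gaussian_pos (K : ℝ) (y x : E) : 0 < gaussian K y x := Real.exp_pos _

theorem gaussian_le_one {K : ℝ} (hK : 0 ≤ K) (y x : E) : gaussian K y x ≤ 1 :=
  Real.exp_le_one_iff.2 (by nlinarith [sq_nonneg ‖x - y‖])

variable [InnerProductSpace ℝ E]

theorem contDiff_gaussian (K : ℝ) (y : E) : ContDiff ℝ ∞ (gaussian K y) :=
  Real.contDiff_exp.comp (contDiff_const.mul ((contDiff_id.sub contDiff_const).norm_sq ℝ))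

theorem gradient_gaussian [CompleteSpace E] (K : ℝ) (y x : E) :
    ∇ (gaussian K y) x = (-2 * K * gaussian K y x) • (x - y) := by
  have h := ((((hasFDerivAt_id x).sub_const y).norm_sq).const_mul (-K)).exp
  refine ext_inner_right ℝ fun v => ?_
  rw [inner_gradient_left, show gaussian K y = fun z => Real.exp (-K * ‖id z - y‖ ^ 2) from rfl,
    h.fderiv, real_inner_smul_left]
  simp only [id_eq, ContinuousLinearMap.comp_id, smul_apply, innerSL_apply_apply, nsmul_eq_mul,
    smul_eq_mul, Nat.cast_ofNat]
  ring

end Gaussian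

theorem divergence_apply_gradient_gaussian {x : 𝔼(n)} (hA : DifferentiableAt ℝ A x) (K : ℝ)
    (y : 𝔼(n)) :
    divergence (fun z => A z (∇ (gaussian K y) z)) x = gaussian K y x *
      (4 * K ^ 2 * ⟪A x (x - y), x - y⟫ - 2 * K * divergence (fun z => A z (z - y)) x) := by
  have hE : DifferentiableAt ℝ (gaussian K y) x :=
    (contDiff_gaussian K y).differentiable (by simp) x
  simp_rw [gradient_gaussian, map_smul]
  rw [divergence_smul (X := fun z => A z (z - y)) (hE.const_mul _)
      (hA.clm_apply (differentiableAt_id.sub_const y)),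
    gradient_const_mul hE, gradient_gaussian, real_inner_smul_right, real_inner_smul_right]
  ring

theorem exists_gaussian_dirichletForm_nonpos (hΩ : IsOpen Ω) (hA : LocallyLipschitzOn Ω A)
    (hpos : ∀ x v, v ≠ 0 → 0 < ⟪A x v, v⟫) {M : ℝ} (hM : 0 ≤ M) {S : Set 𝔼(n)}
    (hS : IsCompact S) (hSΩ : S ⊆ Ω) {y : 𝔼(n)} (hy : y ∉ S) (hV : IsOpen V) (hVS : V ⊆ S) :
    ∃ K > 0, ∀ ψ, IsTestOn V ψ → (∀ x, 0 ≤ ψ x) →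
      dirichletForm A (fun _ => -M) V (gaussian K y) ψ ≤ 0 := by
  have hid : LocallyLipschitzOn Ω fun x : 𝔼(n) => x - y :=
    locallyLipschitzOn_of_contDiffOn hΩ (by fun_prop)
  have hX : LocallyLipschitzOn Ω fun x => A x (x - y) := locallyLipschitzOn_comp₂
    (b := fun z : (𝔼(n) →L[ℝ] 𝔼(n)) × 𝔼(n) => z.1 z.2) (by fun_prop) hA hid
  obtain ⟨l, hl, hlS⟩ := hS.exists_forall_le' (a := 0)
    ((hX.continuousOn.inner hid.continuousOn).mono hSΩ)
    fun x hx => hpos x _ (sub_ne_zero.2 fun h => hy (h ▸ hx))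
  obtain ⟨C, hC⟩ := exists_norm_fderiv_le_of_isCompact hΩ hX hS hSΩ
  obtain ⟨K, hK, hKM⟩ : ∃ K > 0, M ≤ 4 * K ^ 2 * l - 2 * K * (n * C) := by
    have hCM : 0 ≤ (|n * C| + M) / l := by positivity
    refine ⟨(|n * C| + M) / l + 1, by positivity, ?_⟩
    have hKl : ((|n * C| + M) / l + 1) * l = |n * C| + M + l := by field_simp
    nlinarith [le_abs_self (n * C)]
  have hVΩ := hVS.trans hSΩ
  have hE : LocallyLipschitzOn Ω (gaussian K y) :=
    locallyLipschitzOn_of_contDiffOn hΩ ((contDiff_gaussian K y).of_le (by simp)).contDiffOn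
  have hgrad : LocallyLipschitzOn Ω fun x => A x (∇ (gaussian K y) x) := by
    simp_rw [gradient_gaussian, map_smul]
    exact locallyLipschitzOn_comp₂ (b := fun z : ℝ × 𝔼(n) => (-2 * K * z.1) • z.2)
      (by fun_prop) hE hX
  refine ⟨K, hK, fun ψ => dirichletForm_nonpos_of_le_divergence hV (hA.continuousOn.mono hVΩ)
    continuousOn_const (hE.mono hVΩ) (hgrad.mono hVΩ) ?_⟩
  filter_upwards [ae_restrict_mem hV.measurableSet,
    ae_differentiableAt_of_locallyLipschitzOn hV (hA.mono hVΩ)] with x hx hAx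
  rw [divergence_apply_gradient_gaussian hAx, neg_neg, mul_comm M]
  refine mul_le_mul_of_nonneg_left (hKM.trans ?_) (gaussian_pos K y x).le
  have hdiv := (le_abs_self _).trans (abs_divergence_le (fun z => A z (z - y)) x)
  rw [finrank_euclideanSpace_fin] at hdiv
  have hle := hdiv.trans (mul_le_mul_of_nonneg_left (hC x (hVS hx)) n.cast_nonneg)
  gcongr
  exact hlS x (hVS hx)

theorem dirichletForm_le_dirichletForm_of_le {c' : 𝔼(n) → ℝ} (hV : IsOpen V)
    (hA : ContinuousOn A V) (hc : ContinuousOn c V) (hc' : ContinuousOn c' V)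
    (hcc' : ∀ x ∈ V, c' x ≤ c x) (hw : LocallyLipschitzOn V w) (hw0 : ∀ x ∈ V, 0 ≤ w x)
    (hψ : IsTestOn V ψ) (hψ0 : ∀ x, 0 ≤ ψ x) : dirichletForm A c V w ψ ≤ dirichletForm A c' V w ψ :=
  setIntegral_mono_on (integrableOn_dirichletDensity hV hA hc hw hψ)
    (integrableOn_dirichletDensity hV hA hc' hw hψ) hV.measurableSet fun x hx =>
      sub_le_sub_left (mul_le_mul_of_nonneg_right (hcc' x hx) (mul_nonneg (hw0 x hx) (hψ0 x))) _

theorem dirichletForm_mul_sub_const_sub_nonpos (hV : IsOpen V) (hA : ContinuousOn A V)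
    {M m κ : ℝ} (hM : 0 ≤ M) (hm : 0 ≤ m) (hκ : 0 ≤ κ) (hφ : LocallyLipschitzOn V φ)
    (hw : LocallyLipschitzOn V w) (hψ : IsTestOn V ψ) (hψ0 : ∀ x, 0 ≤ ψ x)
    (hsub : dirichletForm A (fun _ => -M) V φ ψ ≤ 0)
    (hsup : 0 ≤ dirichletForm A (fun _ => -M) V w ψ) :
    dirichletForm A (fun _ => -M) V (fun x => m * (φ x - κ) - w x) ψ ≤ 0 := by
  have hz : LocallyLipschitzOn V fun x => m * (φ x - κ) - w x :=
    locallyLipschitzOn_comp₂ (b := fun p : ℝ × ℝ => m * (p.1 - κ) - p.2) (by fun_prop) hφ hw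
  have hIntφ := (integrableOn_dirichletDensity (c := fun _ => -M) hV hA continuousOn_const hφ
    hψ).const_mul m
  have hintw := integrableOn_dirichletDensity (c := fun _ => -M) hV hA continuousOn_const hw hψ
  calc dirichletForm A (fun _ => -M) V (fun x => m * (φ x - κ) - w x) ψ
      ≤ ∫ x in V, (m * dirichletDensity A (fun _ => -M) φ ψ x -
          dirichletDensity A (fun _ => -M) w ψ x) := by
        refine integral_mono_ae (integrableOn_dirichletDensity hV hA continuousOn_const hz hψ)
          (hIntφ.sub hintw) ?_
        filter_upwards [ae_differentiableAt_of_locallyLipschitzOn hV hφ,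
          ae_differentiableAt_of_locallyLipschitzOn hV hw] with x hφx hwx
        have hgrad : ∇ (fun y => m * (φ y - κ) - w y) x = m • ∇ φ x - ∇ w x := by
          rw [gradient_sub ((hφx.sub_const κ).const_mul m) hwx,
            gradient_const_mul (hφx.sub_const κ), gradient_sub_const]
        simp only [dirichletDensity, hgrad, map_sub, map_smul, inner_sub_left,
          real_inner_smul_left]
        linarith [mul_nonneg (mul_nonneg (mul_nonneg hM hm) hκ) (hψ0 x)]
    _ = m * dirichletForm A (fun _ => -M) V φ ψ - dirichletForm A (fun _ => -M) V w ψ := by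
        rw [integral_sub hIntφ hintw, integral_const_mul, dirichletForm, dirichletForm]
    _ ≤ 0 := by linarith [mul_nonpos_of_nonneg_of_nonpos hm hsub]

theorem exists_pos_le_max_dist_sub {X : Type*} [PseudoMetricSpace X] {T : Set X} {w : X → ℝ}
    (hT : IsCompact T) (hw : ContinuousOn w T) {y : X} {R : ℝ}
    (hpos : ∀ x ∈ T ∩ closedBall y R, 0 < w x) :
    ∃ m > 0, ∀ x ∈ T, m ≤ max (w x) (dist x y - R) :=
  hT.exists_forall_le' (hw.sup ((continuous_id.dist continuous_const).sub
    continuous_const).continuousOn) fun x hx => lt_max_iff.2 <|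
      (le_or_gt (dist x y) R).imp (fun h => hpos x ⟨hx, h⟩) sub_pos.2

theorem mul_gaussian_sub_nonpos {E : Type*} [NormedAddCommGroup E] {x y : E}
    {K m R t : ℝ} (hK : 0 < K) (hm : 0 < m) (hR : 0 ≤ R) (ht : 0 ≤ t)
    (h : m ≤ max t (dist x y - R)) :
    m * (gaussian K y x - Real.exp (-K * (R + m) ^ 2)) - t ≤ 0 := by
  have hexp := Real.exp_pos (-K * (R + m) ^ 2)
  rcases le_max_iff.1 h with h | h
  · nlinarith [gaussian_le_one hK.le y x]
  · have hdist : (R + m) ^ 2 ≤ ‖x - y‖ ^ 2 :=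
      pow_le_pow_left₀ (by positivity) (by linarith [dist_eq_norm x y]) 2
    have hexp_le : gaussian K y x ≤ Real.exp (-K * (R + m) ^ 2) :=
      Real.exp_le_exp.2 (by nlinarith)
    linarith [mul_nonpos_of_nonneg_of_nonpos hm.le (sub_nonpos.2 hexp_le)]

theorem mul_sub_const_le_of_supersolution (hV : IsOpen V) (hA : ContinuousOn A V)
    (hpos : ∀ x p, 0 ≤ ⟪A x p, p⟫) {M m κ : ℝ} (hM : 0 < M) (hm : 0 ≤ m) (hκ : 0 ≤ κ)
    (hφ : LocallyLipschitzOn V φ)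
    (hsub : ∀ ψ, IsTestOn V ψ → (∀ x, 0 ≤ ψ x) → dirichletForm A (fun _ => -M) V φ ψ ≤ 0)
    (hc : ContinuousOn c V) (hcM : ∀ x ∈ V, -M ≤ c x) (hw : LocallyLipschitzOn V w)
    (hw0 : ∀ x ∈ V, 0 ≤ w x)
    (hsup : ∀ ψ, IsTestOn V ψ → (∀ x, 0 ≤ ψ x) → 0 ≤ dirichletForm A c V w ψ)
    {K : Set 𝔼(n)} (hK : IsCompact K) (hKV : K ⊆ V)
    (hout : ∀ x ∈ V \ K, m * (φ x - κ) - w x ≤ 0) : ∀ x ∈ V, m * (φ x - κ) - w x ≤ 0 := by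
  refine nonpos_of_dirichletForm_nonpos hV hA hpos hM ?_ hK hKV hout fun ψ hψ hψ0 =>
    dirichletForm_mul_sub_const_sub_nonpos hV hA hM.le hm hκ hφ hw hψ hψ0 (hsub ψ hψ hψ0)
      ((hsup ψ hψ hψ0).trans (dirichletForm_le_dirichletForm_of_le hV hA hc continuousOn_const hcM
        hw hw0 hψ hψ0))
  exact locallyLipschitzOn_comp₂ (b := fun p : ℝ × ℝ => m * (p.1 - κ) - p.2) (by fun_prop) hφ hw

theorem pos_of_closedBall_diff_singleton (hΩ : IsOpen Ω) (hA : LocallyLipschitzOn Ω A)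
    (hpos : ∀ x v, v ≠ 0 → 0 < ⟪A x v, v⟫) (hc : ContinuousOn c Ω) (hw : LocallyLipschitzOn Ω w)
    (hw0 : ∀ x ∈ Ω, 0 ≤ w x)
    (hsup : ∀ ψ, IsTestOn Ω ψ → (∀ x, 0 ≤ ψ x) → 0 ≤ dirichletForm A c Ω w ψ) {x₀ y : 𝔼(n)}
    (hx₀ : x₀ ∈ Ω) (hy : y ≠ x₀) (hball : ∀ x ∈ closedBall y (dist x₀ y) \ {x₀}, 0 < w x) :
    0 < w x₀ := by
  have hR : 0 < dist x₀ y := dist_pos.2 hy.symm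
  obtain ⟨r, ⟨hr, hrR⟩, hrΩ⟩ : ∃ r, (0 < r ∧ r < dist x₀ y) ∧ closedBall x₀ r ⊆ Ω :=
    (nhds_basis_closedBall.restrict (q := (· < dist x₀ y)) fun ε hε =>
      ⟨min ε (dist x₀ y / 2), lt_min hε (half_pos hR),
        (min_le_right _ _).trans_lt (half_lt_self hR),
        closedBall_subset_closedBall (min_le_left _ _)⟩).mem_iff.1
      (hΩ.mem_nhds hx₀)
  have hVΩ : ball x₀ r ⊆ Ω := ball_subset_closedBall.trans hrΩ
  have hB := isCompact_closedBall x₀ r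
  obtain ⟨M, hM, hcM⟩ : ∃ M > 0, ∀ x ∈ ball x₀ r, -M ≤ c x := by
    obtain ⟨M, hM⟩ := hB.exists_bound_of_continuousOn (hc.mono hrΩ)
    exact ⟨|M| + 1, by positivity, fun x hx => by
      linarith [(abs_le.1 (hM x (ball_subset_closedBall hx))).1, le_abs_self M]⟩
  obtain ⟨K, hK, hgauss⟩ := exists_gaussian_dirichletForm_nonpos hΩ hA hpos hM.le hB hrΩ
    (fun h => hrR.not_ge (by rwa [mem_closedBall'] at h)) isOpen_ball ball_subset_closedBall
  obtain ⟨m, hm, hmw⟩ := exists_pos_le_max_dist_sub (R := dist x₀ y) (y := y)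
    (hB.diff isOpen_ball : IsCompact (closedBall x₀ r \ ball x₀ (r / 2)))
    (hw.continuousOn.mono (sdiff_subset.trans hrΩ)) fun x hx => hball x ⟨hx.2, fun h =>
      hx.1.2 (h ▸ mem_ball_self (half_pos hr))⟩
  have hbarrier := mul_sub_const_le_of_supersolution isOpen_ball (hA.continuousOn.mono hVΩ)
    (fun x p => (eq_or_ne p 0).elim (fun h => by simp [h]) fun h => (hpos x p h).le) hM hm.le
    (Real.exp_pos (-K * (dist x₀ y + m) ^ 2)).le
    (locallyLipschitzOn_of_contDiffOn isOpen_ball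
      ((contDiff_gaussian K y).of_le (by simp)).contDiffOn) hgauss (hc.mono hVΩ) hcM (hw.mono hVΩ)
    (fun x hx => hw0 x (hVΩ hx))
    (fun ψ hψ hψ0 => by
      rw [dirichletForm_eq_of_tsupport_subset hΩ.measurableSet hVΩ hψ.2.2]
      exact hsup ψ ⟨hψ.1, hψ.2.1, hψ.2.2.trans hVΩ⟩ hψ0)
    (isCompact_closedBall x₀ (r / 2)) (closedBall_subset_ball (half_lt_self hr))
    (fun x hx => mul_gaussian_sub_nonpos hK hm hR.le (hw0 x (hVΩ hx.1)) (hmw x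
      ⟨ball_subset_closedBall hx.1, fun h => hx.2 (ball_subset_closedBall h)⟩))
    x₀ (mem_ball_self hr)
  refine lt_of_lt_of_le (mul_pos hm (sub_pos.2 (Real.exp_lt_exp.2 ?_))) (sub_nonpos.1 hbarrier)
  rw [← dist_eq_norm]
  exact mul_lt_mul_of_neg_left (pow_lt_pow_left₀ (lt_add_of_pos_right _ hm) hR.le two_ne_zero)
    (neg_lt_zero.2 hK)

theorem pos_of_supersolution (hΩ : IsOpen Ω) (hconn : IsPreconnected Ω)
    (hA : LocallyLipschitzOn Ω A) (hpos : ∀ x v, v ≠ 0 → 0 < ⟪A x v, v⟫) (hc : ContinuousOn c Ω)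
    (hw : LocallyLipschitzOn Ω w) (hw0 : ∀ x ∈ Ω, 0 ≤ w x)
    (hsup : ∀ ψ, IsTestOn Ω ψ → (∀ x, 0 ≤ ψ x) → 0 ≤ dirichletForm A c Ω w ψ)
    (hne : ∃ x ∈ Ω, 0 < w x) : ∀ x ∈ Ω, 0 < w x := by
  by_contra! h
  obtain ⟨p, hpΩ, hp⟩ := h
  obtain ⟨x₁, hx₁, hwx₁⟩ := hne
  obtain ⟨y, x₀, hx₀, hy, hball⟩ := exists_closedBall_diff_singleton_subset
    (hw.continuousOn.isOpen_inter_preimage hΩ isOpen_Ioi) hΩ hconn ⟨x₁, hx₁, hx₁, hwx₁⟩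
    ⟨p, hpΩ, fun hp' => hp.not_gt hp'.2⟩
  exact hx₀.2 ⟨hx₀.1, pos_of_closedBall_diff_singleton hΩ hA hpos hc hw hw0 hsup hx₀.1 hy
    fun x hx => (hball hx).2⟩

end StrongMaximumPrinciple

section Carleman

variable {E : Type*} [NormedAddCommGroup E] [InnerProductSpace ℝ E] {x : E}

theorem inner_fderiv_gradient_comm [CompleteSpace E] {z : E → ℝ} (hz : ContDiffAt ℝ 2 z x)
    (v w : E) : ⟪fderiv ℝ (∇ z) x v, w⟫ = ⟪fderiv ℝ (∇ z) x w, v⟫ := by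
  have hd : DifferentiableAt ℝ (∇ z) x :=
    (contDiffAt_gradient hz (m := 1) (by norm_num)).differentiableAt one_ne_zero
  rw [fderiv_gradient_apply hz v, inner_gradient_left,
    fderiv_inner_apply ℝ hd (differentiableAt_const v)]
  simp

theorem mul_norm_sq_add_sq_le_conjugated {p g g' : E} {c τ s E₀ : ℝ} (hc : 0 < c) (hτ : 1 ≤ τ)
    (hp : ‖p‖ ^ 2 ≤ 3) (hg' : g' = E₀ • g + (τ * (E₀ * s)) • p) :
    c * τ / 2 * (E₀ ^ 2 * (‖g‖ ^ 2 + s ^ 2)) ≤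
      τ * c * ‖g'‖ ^ 2 + 4 * c * τ ^ 3 * (E₀ * s) ^ 2 := by
  have hg : E₀ ^ 2 * ‖g‖ ^ 2 ≤ 2 * ‖g'‖ ^ 2 + 2 * (τ * (E₀ * s)) ^ 2 * ‖p‖ ^ 2 := by
    have h : E₀ • g = g' - (τ * (E₀ * s)) • p := by rw [hg', add_sub_cancel_right]
    have hpar := parallelogram_law_with_norm ℝ g' ((τ * (E₀ * s)) • p)
    rw [← h, norm_smul, norm_smul, Real.norm_eq_abs, Real.norm_eq_abs] at hpar
    nlinarith [sq_nonneg ‖g' + (τ * (E₀ * s)) • p‖, sq_abs E₀, sq_abs (τ * (E₀ * s))]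
  have hp' := mul_le_mul_of_nonneg_left hp (sq_nonneg (τ * (E₀ * s)))
  have hτ' : (E₀ * s) ^ 2 ≤ τ ^ 2 * (E₀ * s) ^ 2 :=
    le_mul_of_one_le_left (sq_nonneg _) (one_le_pow₀ hτ)
  calc c * τ / 2 * (E₀ ^ 2 * (‖g‖ ^ 2 + s ^ 2))
      ≤ c * τ / 2 * (2 * ‖g'‖ ^ 2 + 8 * (τ ^ 2 * (E₀ * s) ^ 2)) := by
        gcongr
        nlinarith
    _ = τ * c * ‖g'‖ ^ 2 + 4 * c * τ ^ 3 * (E₀ * s) ^ 2 := by ring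

variable [FiniteDimensional ℝ E]

/-- The vector field behind the Carleman estimate for a weight `φ` with constant Hessian `H`; in
its divergence the product of the symmetric part `Δz + τ²‖∇φ‖²z` and the antisymmetric part
`2τ⟪∇φ, ∇z⟫ + τ(tr H)z` of the conjugated Laplacian is the only term of second order, up to a
multiple of `z Δz`. -/
def carlemanField (φ : E → ℝ) (H : E →L[ℝ] E) (c τ : ℝ) (z : E → ℝ) (x : E) : E :=
  (-(4 * τ * ⟪∇ φ x, ∇ z x⟫) - (2 * τ * LinearMap.trace ℝ E H + 5 * τ * c) * z x) • ∇ z x +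
    (2 * τ * ⟪∇ z x, ∇ z x⟫ - 2 * τ ^ 3 * (⟪∇ φ x, ∇ φ x⟫ * (z x * z x))) • ∇ φ x

theorem divergence_carlemanField {φ z : E → ℝ} {H : E →L[ℝ] E} (c τ : ℝ)
    (hφ : HasFDerivAt (∇ φ) H x) (hz : ContDiff ℝ 2 z) :
    divergence (carlemanField φ H c τ z) x =
      -(2 * (divergence (∇ z) x + τ ^ 2 * ‖∇ φ x‖ ^ 2 * z x) *
        (2 * τ * ⟪∇ φ x, ∇ z x⟫ + τ * LinearMap.trace ℝ E H * z x))
      - 4 * τ * ⟪H (∇ z x), ∇ z x⟫ - 4 * τ ^ 3 * ⟪H (∇ φ x), ∇ φ x⟫ * z x ^ 2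
      - 5 * τ * c * (‖∇ z x‖ ^ 2 + z x * divergence (∇ z) x) := by
  have hgz : DifferentiableAt ℝ (∇ z) x :=
    (contDiff_gradient hz (m := 1) (by norm_num)).differentiable one_ne_zero x
  have hzd : DifferentiableAt ℝ z x := hz.differentiable two_ne_zero x
  have hcoeff : HasFDerivAt (fun y => -(4 * τ * ⟪∇ φ y, ∇ z y⟫) -
      (2 * τ * LinearMap.trace ℝ E H + 5 * τ * c) * z y) _ x :=
    ((hφ.inner ℝ hgz.hasFDerivAt).const_mul (4 * τ)).neg.sub (hzd.hasFDerivAt.const_mul _)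
  have hcoeff' : HasFDerivAt (fun y => 2 * τ * ⟪∇ z y, ∇ z y⟫ -
      2 * τ ^ 3 * (⟪∇ φ y, ∇ φ y⟫ * (z y * z y))) _ x :=
    ((hgz.hasFDerivAt.inner ℝ hgz.hasFDerivAt).const_mul (2 * τ)).sub
      (((hφ.inner ℝ hφ).mul (hzd.hasFDerivAt.mul hzd.hasFDerivAt)).const_mul (2 * τ ^ 3))
  have hsymm := inner_fderiv_gradient_comm (x := x) hz.contDiffAt (∇ z x) (∇ φ x)
  refine (divergence_smul_add_smul hcoeff.differentiableAt hgz hcoeff'.differentiableAt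
    hφ.differentiableAt).trans ?_
  rw [inner_gradient_of_hasFDerivAt hcoeff, inner_gradient_of_hasFDerivAt hcoeff',
    divergence_eq_of_hasFDerivAt hφ]
  simp only [_root_.sub_apply, _root_.neg_apply, _root_.smul_apply, _root_.add_apply,
    ContinuousLinearMap.comp_apply, smul_eq_mul, fderivInnerCLM_apply,
    ContinuousLinearMap.prod_apply, ← inner_gradient_of_hasFDerivAt hzd.hasFDerivAt, Pi.mul_apply,
    ← real_inner_self_eq_norm_sq]
  rw [real_inner_comm (H (∇ φ x)), real_inner_comm (fderiv ℝ (∇ z) x (∇ z x)),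
    real_inner_comm (fderiv ℝ (∇ z) x (∇ φ x))]
  linear_combination (-(4 * τ)) * hsymm

variable {φ z w : E → ℝ} {H : E →L[ℝ] E} {c τ : ℝ}

theorem carlemanField_eq_zero_of_notMem_tsupport (hx : x ∉ tsupport z) :
    carlemanField φ H c τ z x = 0 := by
  simp [carlemanField, gradient_eq_zero_of_notMem_tsupport hx, image_eq_zero_of_notMem_tsupport hx]

theorem divergence_gradient_eq_zero_of_notMem_tsupport (hx : x ∉ tsupport z) :
    divergence (∇ z) x = 0 := by
  have h : ∇ z =ᶠ[𝓝 x] fun _ => 0 := by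
    filter_upwards [(isClosed_tsupport z).isOpen_compl.mem_nhds hx] with y hy
    exact gradient_eq_zero_of_notMem_tsupport hy
  rw [divergence_congr_of_eventuallyEq h, divergence, fderiv_fun_const, Pi.zero_apply,
    ContinuousLinearMap.toLinearMap_zero, map_zero]

theorem contDiff_carlemanField (hφ : ContDiff ℝ 2 φ) (hz : ContDiff ℝ 2 z) :
    ContDiff ℝ 1 (carlemanField φ H c τ z) := by
  have hgφ : ContDiff ℝ 1 (∇ φ) := contDiff_gradient hφ (by norm_num)
  have hgz : ContDiff ℝ 1 (∇ z) := contDiff_gradient hz (by norm_num)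
  have hz' : ContDiff ℝ 1 z := hz.of_le (by norm_num)
  have hφz : ContDiff ℝ 1 fun x => ⟪∇ φ x, ∇ z x⟫ := hgφ.inner ℝ hgz
  have hφφ : ContDiff ℝ 1 fun x => ⟪∇ φ x, ∇ φ x⟫ := hgφ.inner ℝ hgφ
  have hzz : ContDiff ℝ 1 fun x => ⟪∇ z x, ∇ z x⟫ := hgz.inner ℝ hgz
  unfold carlemanField
  fun_prop

theorem carleman_pointwise {P q G Z D h h' : ℝ} (κ : ℝ) (hc : 0 < c) (hcτ : 5 * c ≤ τ)
    (hh : -(c * G) ≤ h) (hh' : c * (5 * P + 6) ≤ 4 * h') :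
    τ * c * G + 4 * c * τ ^ 3 * Z ^ 2 + (-(2 * (D + τ ^ 2 * P * Z) * (2 * τ * q + τ * κ * Z))
      - 4 * τ * h - 4 * τ ^ 3 * h' * Z ^ 2 - 5 * τ * c * (G + Z * D)) ≤
    (D + τ ^ 2 * P * Z - (2 * τ * q + τ * κ * Z)) ^ 2 := by
  have hτ : 0 < τ := by linarith
  /- With `S` and `T` the symmetric and antisymmetric parts, the right side is `S² + T² - 2 S T`;
  the only other term containing `D` is `5 τ c Z D`, absorbed by `S²`. -/
  have hHess : 0 ≤ τ * (h + c * G) := by nlinarith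
  have hHess' : 0 ≤ τ ^ 3 * Z ^ 2 * (4 * h' - c * (5 * P + 6)) :=
    mul_nonneg (by positivity) (by linarith)
  have habsorb : 0 ≤ τ ^ 2 * c * Z ^ 2 * (τ - 5 * c) := mul_nonneg (by positivity) (by linarith)
  have hpos : 0 ≤ τ ^ 3 * c * Z ^ 2 := by positivity
  nlinarith [sq_nonneg (2 * τ * q + τ * κ * Z), sq_nonneg (D + τ ^ 2 * P * Z + 5 / 2 * τ * c * Z)]

theorem gradient_exp_mul (hφ : DifferentiableAt ℝ φ x) (hw : DifferentiableAt ℝ w x) :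
    ∇ (fun y => Real.exp (τ * φ y) * w y) x =
      Real.exp (τ * φ x) • ∇ w x + (τ * (Real.exp (τ * φ x) * w x)) • ∇ φ x := by
  refine ext_inner_left ℝ fun v => ?_
  have h : HasFDerivAt (fun y => Real.exp (τ * φ y) * w y) _ x :=
    (hφ.hasFDerivAt.const_mul τ).exp.mul hw.hasFDerivAt
  rw [inner_gradient_of_hasFDerivAt h, inner_add_right, inner_smul_right, inner_smul_right,
    inner_gradient_right, inner_gradient_right]
  simp
  ring

theorem divergence_gradient_exp_mul (hφ : ContDiff ℝ 2 φ) (hH : HasFDerivAt (∇ φ) H x)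
    (hw : ContDiff ℝ 2 w) :
    divergence (∇ fun y => Real.exp (τ * φ y) * w y) x =
      Real.exp (τ * φ x) * (divergence (∇ w) x + 2 * τ * ⟪∇ φ x, ∇ w x⟫ +
        τ ^ 2 * ‖∇ φ x‖ ^ 2 * w x + τ * LinearMap.trace ℝ E H * w x) := by
  have hφd : Differentiable ℝ φ := hφ.differentiable two_ne_zero
  have hwd : Differentiable ℝ w := hw.differentiable two_ne_zero
  have hgw : DifferentiableAt ℝ (∇ w) x :=
    (contDiff_gradient hw (m := 1) (by norm_num)).differentiable one_ne_zero x
  have hE : HasFDerivAt (fun y => Real.exp (τ * φ y)) _ x :=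
    ((hφd x).hasFDerivAt.const_mul τ).exp
  have hEw : HasFDerivAt (fun y => τ * (Real.exp (τ * φ y) * w y)) _ x :=
    (hE.mul (hwd x).hasFDerivAt).const_mul τ
  have hgrad : (∇ fun y => Real.exp (τ * φ y) * w y) = _ :=
    funext fun y => gradient_exp_mul (hφd y) (hwd y)
  rw [hgrad,
    divergence_smul_add_smul hE.differentiableAt hgw hEw.differentiableAt hH.differentiableAt,
    inner_gradient_of_hasFDerivAt hE, inner_gradient_of_hasFDerivAt hEw,
    divergence_eq_of_hasFDerivAt hH]
  simp only [_root_.smul_apply, _root_.add_apply, smul_eq_mul,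
    ← inner_gradient_of_hasFDerivAt (hφd x).hasFDerivAt,
    ← inner_gradient_of_hasFDerivAt (hwd x).hasFDerivAt, real_inner_self_eq_norm_sq,
    real_inner_comm (∇ φ x) (∇ w x)]
  ring

variable [MeasurableSpace E] [BorelSpace E] {μ : Measure E} [μ.IsAddHaarMeasure]

theorem integral_le_integral_conjugated_laplacian (hφ : ContDiff ℝ 2 φ)
    (hH : ∀ x, HasFDerivAt (∇ φ) H x) (hlower : ∀ v, -(c * ‖v‖ ^ 2) ≤ ⟪H v, v⟫)
    (hz : ContDiff ℝ 2 z) (hzc : HasCompactSupport z)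
    (hpseudo : ∀ x ∈ tsupport z, c * (5 * ‖∇ φ x‖ ^ 2 + 6) ≤ 4 * ⟪H (∇ φ x), ∇ φ x⟫)
    (hc : 0 < c) (hcτ : 5 * c ≤ τ) :
    ∫ x, τ * c * ‖∇ z x‖ ^ 2 + 4 * c * τ ^ 3 * z x ^ 2 ∂μ ≤
      ∫ x, (divergence (∇ z) x + τ ^ 2 * ‖∇ φ x‖ ^ 2 * z x -
        (2 * τ * ⟪∇ φ x, ∇ z x⟫ + τ * LinearMap.trace ℝ E H * z x)) ^ 2 ∂μ := by
  have hgφ : Continuous (∇ φ) := (contDiff_gradient hφ (m := 1) (by norm_num)).continuous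
  have hgz : ContDiff ℝ 1 (∇ z) := contDiff_gradient hz (by norm_num)
  have hgzc := hgz.continuous
  have hdz : Continuous (divergence (∇ z)) :=
    continuousOn_univ.1 (continuousOn_divergence isOpen_univ hgz.contDiffOn)
  have hF := contDiff_carlemanField (H := H) (c := c) (τ := τ) hφ hz
  have hdF : Continuous (divergence (carlemanField φ H c τ z)) :=
    continuousOn_univ.1 (continuousOn_divergence isOpen_univ hF.contDiffOn)
  have hdiv : ∫ x, divergence (carlemanField φ H c τ z) x ∂μ = 0 :=
    integral_divergence_eq_zero hF.locallyLipschitz (hzc.mono' fun x hx => by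
      by_contra h
      exact hx (carlemanField_eq_zero_of_notMem_tsupport h))
  have hoff {x : E} (hx : x ∉ tsupport z) := And.intro (gradient_eq_zero_of_notMem_tsupport hx)
    (And.intro (image_eq_zero_of_notMem_tsupport hx)
      (divergence_gradient_eq_zero_of_notMem_tsupport hx))
  have hleft : Integrable (fun x => τ * c * ‖∇ z x‖ ^ 2 + 4 * c * τ ^ 3 * z x ^ 2) μ :=
    integrable_of_eq_zero_of_notMem_tsupport hzc (by fun_prop) fun x hx => by simp [hoff hx]
  have hdivint : Integrable (divergence (carlemanField φ H c τ z)) μ :=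
    integrable_of_eq_zero_of_notMem_tsupport hzc hdF fun x hx => by
      simp [divergence_carlemanField c τ (hH x) hz, hoff hx]
  rw [← add_zero (∫ x, _ ∂μ), ← hdiv, ← integral_add hleft hdivint]
  refine integral_mono (hleft.add hdivint) (integrable_of_eq_zero_of_notMem_tsupport hzc
    (by fun_prop) fun x hx => by simp [hoff hx]) fun x => ?_
  by_cases hx : x ∈ tsupport z
  · simp only [divergence_carlemanField c τ (hH x) hz]
    exact carleman_pointwise _ hc hcτ (hlower _) (hpseudo x hx)
  · simp [divergence_carlemanField c τ (hH x) hz, hoff hx]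

theorem carleman_estimate (hφ : ContDiff ℝ 2 φ) (hH : ∀ x, HasFDerivAt (∇ φ) H x)
    (hlower : ∀ v, -(c * ‖v‖ ^ 2) ≤ ⟪H v, v⟫) (hw : ContDiff ℝ 2 w) (hwc : HasCompactSupport w)
    (hupper : ∀ x ∈ tsupport w, ‖∇ φ x‖ ^ 2 ≤ 3)
    (hpseudo : ∀ x ∈ tsupport w, c * (5 * ‖∇ φ x‖ ^ 2 + 6) ≤ 4 * ⟪H (∇ φ x), ∇ φ x⟫)
    (hc : 0 < c) (hτ : 1 ≤ τ) (hcτ : 5 * c ≤ τ) :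
    c * τ / 2 * ∫ x, Real.exp (τ * φ x) ^ 2 * (‖∇ w x‖ ^ 2 + w x ^ 2) ∂μ ≤
      ∫ x, Real.exp (τ * φ x) ^ 2 * divergence (∇ w) x ^ 2 ∂μ := by
  obtain ⟨z, hz⟩ : ∃ z, z = fun x => Real.exp (τ * φ x) * w x := ⟨_, rfl⟩
  have hz2 : ContDiff ℝ 2 z := hz ▸ (contDiff_const.mul hφ).exp.mul hw
  have hzw : tsupport z ⊆ tsupport w := hz ▸ tsupport_mul_subset_right
  have hzc : HasCompactSupport z := hz ▸ hwc.mul_left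
  have hgz (x) : ∇ z x = _ := hz ▸ gradient_exp_mul (hφ.differentiable two_ne_zero x)
    (hw.differentiable two_ne_zero x)
  have hgwc : Continuous (∇ w) := (contDiff_gradient hw (m := 1) (by norm_num)).continuous
  have hgzc : Continuous (∇ z) := (contDiff_gradient hz2 (m := 1) (by norm_num)).continuous
  have hconj := integral_le_integral_conjugated_laplacian (μ := μ) hφ hH hlower hz2 hzc
    (fun x hx => hpseudo x (hzw hx)) hc hcτ
  rw [← integral_const_mul]
  refine (integral_mono ?_ ?_ fun x => ?_).trans (hconj.trans_eq (integral_congr_ae ?_))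
  · exact integrable_of_eq_zero_of_notMem_tsupport hwc (by fun_prop) fun x hx => by
      simp [gradient_eq_zero_of_notMem_tsupport hx, image_eq_zero_of_notMem_tsupport hx]
  · exact integrable_of_eq_zero_of_notMem_tsupport hzc (by fun_prop) fun x hx => by
      simp [gradient_eq_zero_of_notMem_tsupport hx, image_eq_zero_of_notMem_tsupport hx]
  · by_cases hx : x ∈ tsupport w
    · simpa only [hz] using mul_norm_sq_add_sq_le_conjugated hc hτ (hupper x hx) (hgz x)
    · have hxz := fun h => hx (hzw h)
      simp [gradient_eq_zero_of_notMem_tsupport hx, image_eq_zero_of_notMem_tsupport hx,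
        gradient_eq_zero_of_notMem_tsupport hxz, image_eq_zero_of_notMem_tsupport hxz]
  · refine Eventually.of_forall fun x => ?_
    have hdz : divergence (∇ z) x = _ := hz ▸ divergence_gradient_exp_mul hφ (hH x) hw
    simp only [hdz, hgz]
    simp only [hz, inner_add_right, inner_smul_right, real_inner_self_eq_norm_sq]
    ring

end Carleman

section CarlemanWeight

variable {E : Type*} [NormedAddCommGroup E] [InnerProductSpace ℝ E] {x x₀ y ν : E} {c r : ℝ}

/-- A Carleman weight near `x₀` with `∇φ(x₀) = ν`: a linear function, made convex in the direction
`ν` and slightly concave in the directions orthogonal to it. -/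
def carlemanWeight (x₀ ν : E) (c : ℝ) (x : E) : ℝ :=
  ⟪x - x₀, ν⟫ + 5 * c / 2 * ⟪x - x₀, ν⟫ ^ 2 - c / 2 * ‖x - x₀‖ ^ 2

/-- The Hessian of `carlemanWeight x₀ ν c`, which does not depend on the point. -/
def carlemanHessian (ν : E) (c : ℝ) : E →L[ℝ] E :=
  (5 * c) • (innerSL ℝ ν).smulRight ν - c • ContinuousLinearMap.id ℝ E

theorem inner_carlemanHessian_self (v : E) :
    ⟪carlemanHessian ν c v, v⟫ = 5 * c * ⟪ν, v⟫ ^ 2 - c * ‖v‖ ^ 2 := by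
  simp only [carlemanHessian, _root_.sub_apply, _root_.smul_apply, innerSL_apply_apply,
    ContinuousLinearMap.smulRight_apply, ContinuousLinearMap.id_apply, inner_sub_left,
    real_inner_smul_left, real_inner_self_eq_norm_sq]
  ring

theorem contDiff_carlemanWeight {m : WithTop ℕ∞} : ContDiff ℝ m (carlemanWeight x₀ ν c) := by
  have h : ContDiff ℝ m fun x : E => x - x₀ := contDiff_id.sub contDiff_const
  exact ((h.inner ℝ contDiff_const).add (contDiff_const.mul ((h.inner ℝ contDiff_const).pow 2))).sub
    (contDiff_const.mul (h.norm_sq ℝ))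

theorem carlemanWeight_le_neg (hxy : dist x₀ y ≤ dist x y) (hy : y ≠ x₀)
    (hx : 10 * ‖x - x₀‖ ≤ dist x₀ y) :
    carlemanWeight x₀ ((dist x₀ y)⁻¹ • (y - x₀)) (4 / dist x₀ y) x ≤
      -(‖x - x₀‖ ^ 2 / dist x₀ y) := by
  obtain ⟨R, hR⟩ : ∃ R, R = dist x₀ y := ⟨_, rfl⟩
  obtain ⟨t, ht⟩ : ∃ t, t = ⟪x - x₀, R⁻¹ • (y - x₀)⟫ := ⟨_, rfl⟩
  have hR0 : 0 < R := hR ▸ dist_pos.2 hy.symm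
  have hnorm : ‖y - x₀‖ = R := by rw [hR, dist_comm, dist_eq_norm]
  have hinner : ⟪x - x₀, y - x₀⟫ = R * t := by
    rw [ht, inner_smul_right, mul_inv_cancel_left₀ hR0.ne']
  have htabs : |t| ≤ ‖x - x₀‖ := by
    have h := abs_real_inner_le_norm (x - x₀) (R⁻¹ • (y - x₀))
    rwa [norm_smul, hnorm, norm_inv, Real.norm_of_nonneg hR0.le, inv_mul_cancel₀ hR0.ne', mul_one,
      ← ht] at h
  have hfar : 2 * R * t ≤ ‖x - x₀‖ ^ 2 := by
    have h := norm_sub_sq_real (x - x₀) (y - x₀)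
    rw [sub_sub_sub_cancel_right, hinner, hnorm] at h
    have h' : R ≤ ‖x - y‖ := by rwa [hR, ← dist_eq_norm]
    nlinarith [norm_nonneg (x - y)]
  have hmain : R * t + 10 * t ^ 2 - 2 * ‖x - x₀‖ ^ 2 ≤ -‖x - x₀‖ ^ 2 := by
    rw [← hR] at hx
    have := abs_le.1 htabs
    rcases le_total t 0 with _ | _ <;> nlinarith [norm_nonneg (x - x₀)]
  rw [carlemanWeight, ← hR, ← ht, ← neg_div, le_div_iff₀ hR0]
  calc _ = R * t + 10 * t ^ 2 - 2 * ‖x - x₀‖ ^ 2 := by field_simp; ring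
    _ ≤ _ := hmain

theorem mem_ball_of_neg_lt_carlemanWeight {ρ : ℝ} (hρ : 0 ≤ ρ) (hy : y ≠ x₀)
    (hx : 10 * ‖x - x₀‖ ≤ dist x₀ y) (hxy : dist x₀ y ≤ dist x y)
    (hlt : -(ρ ^ 2 / dist x₀ y) <
      carlemanWeight x₀ ((dist x₀ y)⁻¹ • (y - x₀)) (4 / dist x₀ y) x) :
    x ∈ ball x₀ ρ := by
  have hdiv := neg_lt_neg_iff.1 (hlt.trans_le (carlemanWeight_le_neg hxy hy hx))
  exact mem_ball_iff_norm.2 (lt_of_pow_lt_pow_left₀ 2 hρ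
    ((div_lt_div_iff_of_pos_right (dist_pos.2 hy.symm)).1 hdiv))

theorem eventually_lt_carlemanWeight {m : ℝ} (hm : m < 0) :
    ∀ᶠ x in 𝓝 x₀, m < carlemanWeight x₀ ν c x :=
  continuousAt_const.eventually_lt (contDiff_carlemanWeight (m := 0)).continuous.continuousAt
    (by simpa [carlemanWeight] using hm)

variable [FiniteDimensional ℝ E]

theorem gradient_carlemanWeight :
    ∇ (carlemanWeight x₀ ν c) = fun x => (1 + 5 * c * ⟪x - x₀, ν⟫) • ν - c • (x - x₀) := by
  funext x
  have hd : HasFDerivAt (fun y : E => y - x₀) _ x := (hasFDerivAt_id (𝕜 := ℝ) x).sub_const x₀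
  have ht := hd.inner ℝ (hasFDerivAt_const ν x)
  have h : HasFDerivAt (carlemanWeight x₀ ν c) _ x :=
    (ht.add ((ht.pow 2).const_mul (5 * c / 2))).sub (hd.norm_sq.const_mul (c / 2))
  refine ext_inner_left ℝ fun v => ?_
  rw [inner_gradient_of_hasFDerivAt h]
  simp [inner_sub_right, inner_smul_right, fderivInnerCLM_apply, real_inner_comm v]
  ring

theorem hasFDerivAt_gradient_carlemanWeight :
    HasFDerivAt (∇ (carlemanWeight x₀ ν c)) (carlemanHessian ν c) x := by
  have hd : HasFDerivAt (fun y : E => y - x₀) _ x := (hasFDerivAt_id (𝕜 := ℝ) x).sub_const x₀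
  have h := (((hd.inner ℝ (hasFDerivAt_const ν x)).const_mul (5 * c)).const_add 1).smul_const ν
  rw [gradient_carlemanWeight]
  refine (h.sub (hd.const_smul c)).congr_fderiv (ContinuousLinearMap.ext fun v => ?_)
  simp [carlemanHessian, fderivInnerCLM_apply, smul_smul, real_inner_comm]

theorem norm_gradient_carlemanWeight_sub_le (hν : ‖ν‖ = 1) (hc : 0 ≤ c) (hx : x ∈ ball x₀ r) :
    ‖∇ (carlemanWeight x₀ ν c) x - ν‖ ≤ 6 * c * r := by
  have hxr : ‖x - x₀‖ ≤ r := (mem_ball_iff_norm.1 hx).le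
  have ht : |⟪x - x₀, ν⟫| ≤ r := (abs_real_inner_le_norm _ _).trans (by rwa [hν, mul_one])
  calc ‖∇ (carlemanWeight x₀ ν c) x - ν‖
      = ‖(5 * c * ⟪x - x₀, ν⟫) • ν - c • (x - x₀)‖ := by
        simp only [gradient_carlemanWeight, add_smul, one_smul]
        congr 1
        abel
    _ ≤ 5 * c * |⟪x - x₀, ν⟫| + c * ‖x - x₀‖ := by
        refine (norm_sub_le _ _).trans_eq ?_
        rw [norm_smul, norm_smul, hν, mul_one, Real.norm_eq_abs, Real.norm_eq_abs, abs_mul,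
          abs_of_nonneg hc, abs_of_nonneg (by positivity : 0 ≤ 5 * c)]
    _ ≤ 5 * c * r + c * r := by gcongr
    _ = 6 * c * r := by ring

theorem carleman_estimate_ball [MeasurableSpace E] [BorelSpace E] {μ : Measure E}
    [μ.IsAddHaarMeasure] {w : E → ℝ} {τ : ℝ} (hν : ‖ν‖ = 1) (hc : 0 < c) (hcr : 120 * c * r ≤ 1)
    (hw : ContDiff ℝ 2 w) (hwc : HasCompactSupport w) (hwr : tsupport w ⊆ ball x₀ r)
    (hτ : 1 ≤ τ) (hcτ : 5 * c ≤ τ) :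
    c * τ / 2 * ∫ x, Real.exp (τ * carlemanWeight x₀ ν c x) ^ 2 * (‖∇ w x‖ ^ 2 + w x ^ 2) ∂μ ≤
      ∫ x, Real.exp (τ * carlemanWeight x₀ ν c x) ^ 2 * divergence (∇ w) x ^ 2 ∂μ := by
  have hclose {x} (hx : x ∈ tsupport w) : ‖∇ (carlemanWeight x₀ ν c) x - ν‖ ≤ 1 / 20 :=
    (norm_gradient_carlemanWeight_sub_le hν hc.le (hwr hx)).trans (by linarith)
  have hnorm {x} (hx : x ∈ tsupport w) : ‖∇ (carlemanWeight x₀ ν c) x‖ ≤ 21 / 20 := by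
    linarith [norm_le_norm_add_norm_sub' (∇ (carlemanWeight x₀ ν c) x) ν, hclose hx]
  refine carleman_estimate contDiff_carlemanWeight
    (fun x => hasFDerivAt_gradient_carlemanWeight) (fun v => ?_) hw hwc (fun x hx => ?_)
    (fun x hx => ?_) hc hτ hcτ
  · rw [inner_carlemanHessian_self]
    nlinarith [sq_nonneg ⟪ν, v⟫]
  · nlinarith [norm_nonneg (∇ (carlemanWeight x₀ ν c) x), hnorm hx]
  · have hinner : 19 / 20 ≤ ⟪ν, ∇ (carlemanWeight x₀ ν c) x⟫ := by
      have h := neg_le_of_abs_le (abs_real_inner_le_norm ν (∇ (carlemanWeight x₀ ν c) x - ν))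
      rw [inner_sub_right, real_inner_self_eq_norm_sq, hν] at h
      linarith [hclose hx]
    rw [inner_carlemanHessian_self]
    have hP := pow_le_pow_left₀ (norm_nonneg _) (hnorm hx) 2
    have hN := pow_le_pow_left₀ (by norm_num) hinner 2
    nlinarith

end CarlemanWeight

section ExponentialWeight

theorem exp_sq_mul_mul_max_sub_le {τ m p : ℝ} :
    Real.exp (τ * m) ^ 2 * (2 * τ * max (p - m) 0) ≤ Real.exp (τ * p) ^ 2 := by
  have hmax : 2 * τ * max (p - m) 0 ≤ Real.exp (2 * τ * (p - m)) := by
    rcases max_cases (p - m) 0 with ⟨h, -⟩ | ⟨h, -⟩ <;> rw [h]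
    · linarith [Real.add_one_le_exp (2 * τ * (p - m))]
    · simpa using (Real.exp_pos _).le
  calc Real.exp (τ * m) ^ 2 * (2 * τ * max (p - m) 0)
      ≤ Real.exp (τ * m) ^ 2 * Real.exp (2 * τ * (p - m)) := by gcongr
    _ = Real.exp (τ * p) ^ 2 := by
        rw [← Real.exp_nat_mul, ← Real.exp_nat_mul, ← Real.exp_add]
        congr 1
        push_cast
        ring

theorem exp_sq_mul_le_add {τ m p K e s : ℝ} (hτ : 0 ≤ τ) (hK : 0 ≤ K) (he : 0 ≤ e) (hs : 0 ≤ s)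
    (h : m < p → s ≤ K * e) :
    Real.exp (τ * p) ^ 2 * s ≤ K * (Real.exp (τ * p) ^ 2 * e) + Real.exp (τ * m) ^ 2 * s := by
  rcases lt_or_ge m p with hp | hp
  · calc Real.exp (τ * p) ^ 2 * s ≤ Real.exp (τ * p) ^ 2 * (K * e) := by gcongr; exact h hp
      _ = K * (Real.exp (τ * p) ^ 2 * e) := by ring
      _ ≤ _ := le_add_of_nonneg_right (by positivity)
  · calc Real.exp (τ * p) ^ 2 * s ≤ Real.exp (τ * m) ^ 2 * s := by gcongr
      _ ≤ _ := le_add_of_nonneg_left (by positivity)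

variable {X : Type*} [TopologicalSpace X] [MeasurableSpace X] [OpensMeasurableSpace X]
  {μ : Measure X} [IsFiniteMeasureOnCompacts μ] {e s φ : X → ℝ} {c k K m τ : ℝ}

theorem integral_max_sub_mul_le (he : Continuous e) (hs : Continuous s) (hφ : Continuous φ)
    (hec : HasCompactSupport e) (hsc : HasCompactSupport s) (he0 : ∀ x, 0 ≤ e x)
    (hs0 : ∀ x, 0 ≤ s x) (hτ : 0 ≤ τ) (hK : 0 ≤ K) (hKk : K + 1 ≤ k)
    (hbound : k * ∫ x, Real.exp (τ * φ x) ^ 2 * e x ∂μ ≤ ∫ x, Real.exp (τ * φ x) ^ 2 * s x ∂μ)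
    (hlocal : ∀ x, m < φ x → s x ≤ K * e x) :
    2 * τ * ∫ x, max (φ x - m) 0 * e x ∂μ ≤ ∫ x, s x ∂μ := by
  have hInt {g : X → ℝ} (hg : Continuous g) (hgc : HasCompactSupport g) : Integrable g μ :=
    hg.integrable_of_hasCompactSupport hgc
  have heint : Integrable (fun x => Real.exp (τ * φ x) ^ 2 * e x) μ :=
    hInt (by fun_prop) hec.mul_left
  have hsint : Integrable (fun x => Real.exp (τ * φ x) ^ 2 * s x) μ :=
    hInt (by fun_prop) hsc.mul_left
  have hsplit := integral_mono hsint
    ((heint.const_mul K).add ((hInt hs hsc).const_mul (Real.exp (τ * m) ^ 2)))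
    fun x => exp_sq_mul_le_add hτ hK (he0 x) (hs0 x) (hlocal x)
  rw [integral_add' (heint.const_mul K) ((hInt hs hsc).const_mul _), integral_const_mul,
    integral_const_mul] at hsplit
  have hweighted :
      ∫ x, Real.exp (τ * φ x) ^ 2 * e x ∂μ ≤ Real.exp (τ * m) ^ 2 * ∫ x, s x ∂μ := by
    have h0 : 0 ≤ ∫ x, Real.exp (τ * φ x) ^ 2 * e x ∂μ :=
      integral_nonneg fun x => mul_nonneg (sq_nonneg _) (he0 x)
    nlinarith [mul_le_mul_of_nonneg_right hKk h0]
  have hexcess : Real.exp (τ * m) ^ 2 * (2 * τ * ∫ x, max (φ x - m) 0 * e x ∂μ) ≤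
      ∫ x, Real.exp (τ * φ x) ^ 2 * e x ∂μ := by
    simp only [← integral_const_mul, ← mul_assoc]
    refine integral_mono (hInt (by fun_prop) hec.mul_left) heint fun x => ?_
    simpa only [mul_assoc] using mul_le_mul_of_nonneg_right
      (exp_sq_mul_mul_max_sub_le (m := m) (p := φ x)) (he0 x)
  exact le_of_mul_le_mul_left (hexcess.trans hweighted) (by positivity)

theorem eq_zero_of_exp_weighted_bound [μ.IsOpenPosMeasure] (he : Continuous e)
    (hs : Continuous s) (hφ : Continuous φ) (hec : HasCompactSupport e)
    (hsc : HasCompactSupport s) (he0 : ∀ x, 0 ≤ e x) (hs0 : ∀ x, 0 ≤ s x) (hc : 0 < c)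
    (hK : 0 ≤ K) (hbound : ∀ᶠ τ in atTop,
      c * τ * ∫ x, Real.exp (τ * φ x) ^ 2 * e x ∂μ ≤ ∫ x, Real.exp (τ * φ x) ^ 2 * s x ∂μ)
    (hlocal : ∀ x, m < φ x → s x ≤ K * e x) {x : X} (hx : m < φ x) : e x = 0 := by
  have hexcess0 (x) : 0 ≤ max (φ x - m) 0 * e x := mul_nonneg (le_max_right _ _) (he0 x)
  have hzero : ¬ 0 < ∫ x, max (φ x - m) 0 * e x ∂μ := fun hpos => by
    have htop : Tendsto (fun τ : ℝ => 2 * τ * ∫ x, max (φ x - m) 0 * e x ∂μ) atTop atTop :=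
      (tendsto_id.const_mul_atTop two_pos).atTop_mul_const hpos
    obtain ⟨τ, ⟨⟨hτ, hτ0⟩, hτK⟩, hgt⟩ := (((hbound.and (eventually_ge_atTop 0)).and
      (eventually_ge_atTop ((K + 1) / c))).and (htop.eventually_gt_atTop (∫ x, s x ∂μ))).exists
    exact hgt.not_ge (integral_max_sub_mul_le he hs hφ hec hsc he0 hs0 hτ0 hK
      ((div_le_iff₀' hc).1 hτK) hτ hlocal)
  by_contra hex
  refine hzero (Continuous.integral_pos_of_hasCompactSupport_nonneg_nonzero (x := x)
    (by fun_prop) hec.mul_left hexcess0 ?_)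
  exact mul_ne_zero (lt_max_of_lt_left (sub_pos.2 hx)).ne' hex

end ExponentialWeight

section UniqueContinuation

variable {E : Type*} [NormedAddCommGroup E] [InnerProductSpace ℝ E] [FiniteDimensional ℝ E]
  {x₀ y : E} {r : ℝ}

theorem exists_contDiff_eqOn_tsupport_subset_ball {v : E → ℝ} {m : ℕ∞} (hr : 0 < r)
    (hv : ContDiffOn ℝ m v (ball x₀ r)) :
    ∃ w : E → ℝ, ContDiff ℝ m w ∧ HasCompactSupport w ∧ tsupport w ⊆ ball x₀ r ∧
      tsupport w ⊆ tsupport v ∧ EqOn w v (ball x₀ (r / 2)) := by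
  let b : ContDiffBump x₀ := ⟨r / 2, 3 * r / 4, by linarith, by linarith⟩
  have hb : tsupport b ⊆ ball x₀ r :=
    b.tsupport_eq.trans_subset (closedBall_subset_ball (by simp only [b]; linarith))
  have hsupp : tsupport (fun x => b x * v x) ⊆ tsupport b := tsupport_mul_subset_left
  refine ⟨fun x => b x * v x, contDiff_iff_contDiffAt.2 fun x => ?_, b.hasCompactSupport.mul_right,
    hsupp.trans hb, tsupport_mul_subset_right, fun x hx => ?_⟩
  · by_cases hx : x ∈ tsupport b
    · exact b.contDiffAt.mul (hv.contDiffAt (isOpen_ball.mem_nhds (hb hx)))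
    · exact contDiffAt_const.congr_of_eventuallyEq
        (notMem_tsupport_iff_eventuallyEq.1 fun h => hx (hsupp h))
  · simp only
    rw [b.one_of_mem_closedBall (ball_subset_closedBall hx), one_mul]

theorem eq_zero_of_divergence_gradient_sq_le {w : E → ℝ} {ν x : E} {c m K : ℝ} (hν : ‖ν‖ = 1)
    (hc : 0 < c) (hcr : 120 * c * r ≤ 1) (hw : ContDiff ℝ 2 w) (hwc : HasCompactSupport w)
    (hwr : tsupport w ⊆ ball x₀ r) (hK : 0 ≤ K)
    (hlocal : ∀ x, m < carlemanWeight x₀ ν c x →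
      divergence (∇ w) x ^ 2 ≤ K * (‖∇ w x‖ ^ 2 + w x ^ 2))
    (hx : m < carlemanWeight x₀ ν c x) : w x = 0 := by
  borelize E
  have hgw : ContDiff ℝ 1 (∇ w) := contDiff_gradient hw (by norm_num)
  have hgwc := hgw.continuous
  have hwcont := hw.continuous
  have hdw : Continuous (divergence (∇ w)) :=
    continuousOn_univ.1 (continuousOn_divergence isOpen_univ hgw.contDiffOn)
  have hφ : Continuous (carlemanWeight x₀ ν c) := (contDiff_carlemanWeight (m := 0)).continuous
  have henergy : ‖∇ w x‖ ^ 2 + w x ^ 2 = 0 := by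
    refine eq_zero_of_exp_weighted_bound (μ := Measure.addHaar) (c := c / 2) (by fun_prop)
      (hdw.pow 2) hφ (HasCompactSupport.intro hwc fun x hx => ?_)
      (HasCompactSupport.intro hwc fun x hx => ?_) (fun x => by positivity) (fun x => sq_nonneg _)
      (half_pos hc) hK ?_ hlocal hx
    · simp [gradient_eq_zero_of_notMem_tsupport hx, image_eq_zero_of_notMem_tsupport hx]
    · simp [divergence_gradient_eq_zero_of_notMem_tsupport hx]
    · filter_upwards [eventually_ge_atTop 1, eventually_ge_atTop (5 * c)] with τ hτ hcτ
      rw [div_mul_eq_mul_div]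
      exact carleman_estimate_ball hν hc hcr hw hwc hwr hτ hcτ
  nlinarith [sq_nonneg ‖∇ w x‖]

theorem sq_le_of_abs_le_mul_abs_add {D C a b : ℝ} (h : |D| ≤ C * (|a| + b)) :
    D ^ 2 ≤ 2 * C ^ 2 * (b ^ 2 + a ^ 2) := by
  calc D ^ 2 ≤ (C * (|a| + b)) ^ 2 := sq_le_sq' (neg_le_of_abs_le h) (le_of_abs_le h)
    _ ≤ C ^ 2 * (2 * (|a| ^ 2 + b ^ 2)) := by
        rw [mul_pow]
        gcongr
        exact add_sq_le
    _ = 2 * C ^ 2 * (b ^ 2 + a ^ 2) := by rw [sq_abs]; ring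

theorem eventuallyEq_zero_of_abs_divergence_gradient_le_on_ball {v : E → ℝ} {C : ℝ}
    (hr : 0 < r) (hv : ContDiffOn ℝ 2 v (ball x₀ r)) (hrR : 480 * r ≤ dist x₀ y)
    (hball : ∀ x ∈ ball y (dist x₀ y), v x = 0)
    (hlap : ∀ x ∈ ball x₀ r, |divergence (∇ v) x| ≤ C * (|v x| + ‖∇ v x‖)) : v =ᶠ[𝓝 x₀] 0 := by
  have hR : 0 < dist x₀ y := by linarith
  have hy : y ≠ x₀ := (dist_pos.1 hR).symm
  have hν : ‖(dist x₀ y)⁻¹ • (y - x₀)‖ = 1 := by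
    rw [norm_smul, ← dist_eq_norm, dist_comm y, norm_inv, Real.norm_of_nonneg hR.le,
      inv_mul_cancel₀ hR.ne']
  have hcr : 120 * (4 / dist x₀ y) * r ≤ 1 := by
    calc 120 * (4 / dist x₀ y) * r = 480 * r / dist x₀ y := by ring
      _ ≤ 1 := (div_le_one hR).2 hrR
  obtain ⟨w, hw, hwc, hwr, hwv, hweq⟩ := exists_contDiff_eqOn_tsupport_subset_ball (m := 2) hr hv
  have hwloc {x} (hx : x ∈ ball x₀ (r / 2)) : w =ᶠ[𝓝 x] v :=
    hweq.eventuallyEq_of_mem (isOpen_ball.mem_nhds hx)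
  have hlocal (x) (hx : -((r / 2) ^ 2 / dist x₀ y) <
      carlemanWeight x₀ ((dist x₀ y)⁻¹ • (y - x₀)) (4 / dist x₀ y) x) :
      divergence (∇ w) x ^ 2 ≤ 2 * C ^ 2 * (‖∇ w x‖ ^ 2 + w x ^ 2) := by
    by_cases hxw : x ∈ tsupport w
    · have hxr := mem_ball_iff_norm.1 (hwr hxw)
      have hxy : dist x₀ y ≤ dist x y := not_lt.1 fun h =>
        notMem_tsupport_iff_eventuallyEq.2
          (eventuallyEq_of_mem (isOpen_ball.mem_nhds (mem_ball.2 h)) hball) (hwv hxw)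
      have hxb := hwloc (mem_ball_of_neg_lt_carlemanWeight (by positivity) hy (by linarith) hxy hx)
      have hle := hlap x (hwr hxw)
      rw [← divergence_congr_of_eventuallyEq hxb.gradient, ← hxb.gradient_eq, ← hxb.eq_of_nhds]
        at hle
      exact sq_le_of_abs_le_mul_abs_add hle
    · simp [divergence_gradient_eq_zero_of_notMem_tsupport hxw,
        gradient_eq_zero_of_notMem_tsupport hxw, image_eq_zero_of_notMem_tsupport hxw]
  have hm : -((r / 2) ^ 2 / dist x₀ y) < 0 := neg_lt_zero.2 (by positivity)
  filter_upwards [eventually_lt_carlemanWeight hm, hwloc (mem_ball_self (half_pos hr))]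
    with x hx hwx
  rw [← hwx]
  exact eq_zero_of_divergence_gradient_sq_le hν (by positivity) hcr hw hwc hwr (by positivity)
    hlocal hx

theorem eventuallyEq_zero_of_abs_divergence_gradient_le {v : E → ℝ} {C : ℝ}
    (hv : ContDiffAt ℝ 2 v x₀) (hy : y ≠ x₀) (hball : ∀ x ∈ ball y (dist x₀ y), v x = 0)
    (hlap : ∀ᶠ x in 𝓝 x₀, |divergence (∇ v) x| ≤ C * (|v x| + ‖∇ v x‖)) : v =ᶠ[𝓝 x₀] 0 := by
  have hR : 0 < dist x₀ y := dist_pos.2 hy.symm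
  obtain ⟨r, hr, hgood⟩ := Metric.eventually_nhds_iff_ball.1 (hlap.and (hv.eventually (by simp)))
  have hsub : ball x₀ (min r (dist x₀ y / 480)) ⊆ ball x₀ r := ball_subset_ball (min_le_left _ _)
  exact eventuallyEq_zero_of_abs_divergence_gradient_le_on_ball (lt_min hr (by positivity))
    (fun x hx => (hgood x (hsub hx)).2.contDiffWithinAt)
    (by linarith [min_le_right r (dist x₀ y / 480)]) hball fun x hx => (hgood x (hsub hx)).1

end UniqueContinuation

section Linearization

theorem abs_inv_norm_mul_inner_apply_le {E : Type*} [NormedAddCommGroup E] [InnerProductSpace ℝ E]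
    (p : E) (H : E →L[ℝ] E) : |‖p‖⁻¹ * ⟪p, H p⟫| ≤ ‖H‖ * ‖p‖ := by
  rw [abs_mul, abs_inv, abs_norm]
  calc ‖p‖⁻¹ * |⟪p, H p⟫| ≤ ‖p‖⁻¹ * (‖p‖ * (‖H‖ * ‖p‖)) := by
        gcongr
        exact (abs_real_inner_le_norm p _).trans
          (mul_le_mul_of_nonneg_left (H.le_opNorm p) (norm_nonneg p))
    _ = ‖H‖ * ‖p‖ := by
        rw [mul_left_comm ‖p‖, mul_left_comm ‖p‖⁻¹, ← mul_assoc ‖p‖⁻¹, inv_mul_mul_self]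

theorem trace_radialPart_comp {E : Type*} [NormedAddCommGroup E] [InnerProductSpace ℝ E]
    [FiniteDimensional ℝ E] (p : E) (H : E →L[ℝ] E) :
    LinearMap.trace ℝ E (radialPart p ∘L H) = ‖p‖⁻¹ * ⟪p, H p⟫ := by
  have h : ((radialPart p ∘L H : E →L[ℝ] E) : E →ₗ[ℝ] E) =
      ‖p‖⁻¹ • ((innerSL ℝ p ∘L H : E →L[ℝ] ℝ) : E →ₗ[ℝ] ℝ).smulRight p := by
    ext v
    simp [radialPart_apply, smul_smul]
  rw [h, map_smul, LinearMap.trace_smulRight]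
  simp

variable {Ω : Set 𝔼(n)} {a f : ℝ → ℝ} {u : 𝔼(n) → ℝ} {x x₀ : 𝔼(n)}

theorem C11Loc.hasFDerivAt_flux_gradient (ha : C11Loc a) (hu : ContDiffAt ℝ 2 u x) :
    HasFDerivAt (fun y => flux a (∇ u y)) (fluxDeriv a (∇ u x) ∘L fderiv ℝ (∇ u) x) x :=
  (ha.hasFDerivAt_flux _).comp x
    ((contDiffAt_gradient hu (m := 1) (by norm_num)).differentiableAt one_ne_zero).hasFDerivAt

theorem C11Loc.divergence_flux_gradient (ha : C11Loc a) (hu : ContDiffAt ℝ 2 u x) :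
    divergence (fun y => flux a (∇ u y)) x = a ‖∇ u x‖ * divergence (∇ u) x +
      deriv a ‖∇ u x‖ * (‖∇ u x‖⁻¹ * ⟪∇ u x, fderiv ℝ (∇ u) x (∇ u x)⟫) := by
  rw [divergence_eq_of_hasFDerivAt (ha.hasFDerivAt_flux_gradient hu), fluxDeriv,
    ContinuousLinearMap.add_comp, ContinuousLinearMap.smul_comp, ContinuousLinearMap.smul_comp,
    ContinuousLinearMap.id_comp, ContinuousLinearMap.toLinearMap_add,
    ContinuousLinearMap.toLinearMap_smul, ContinuousLinearMap.toLinearMap_smul, map_add, map_smul,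
    map_smul, trace_radialPart_comp]
  rfl

theorem IsWeakSolution.hasWeakDivOn (h : IsWeakSolution a f Ω u) :
    HasWeakDivOn (fun x => flux a (∇ u x)) (fun x => -f (u x)) Ω := fun φ hφ => by
  simpa only [flux, real_inner_smul_left, mul_comm (φ _), neg_mul, integral_neg, neg_neg]
    using h φ hφ

theorem C11Loc.contDiffOn_flux_gradient (ha : C11Loc a) (hΩ : IsOpen Ω) (hu : ContDiffOn ℝ 2 u Ω) :
    ContDiffOn ℝ 1 (fun x => flux a (∇ u x)) Ω :=
  ha.contDiff_flux.comp_contDiffOn (contDiffOn_gradient hΩ hu (by norm_num))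

theorem IsWeakSolution.divergence_flux_gradient_eqOn (h : IsWeakSolution a f Ω u) (hΩ : IsOpen Ω)
    (ha : C11Loc a) (hf : Continuous f) (hu : ContDiffOn ℝ 2 u Ω) :
    EqOn (divergence fun x => flux a (∇ u x)) (fun x => -f (u x)) Ω :=
  h.hasWeakDivOn.divergence_eqOn hΩ (ha.contDiffOn_flux_gradient hΩ hu)
    (hf.comp_continuousOn hu.continuousOn).neg

theorem IsWeakSolution.dirichletForm_inner_gradient_eq_zero (h : IsWeakSolution a f Ω u)
    (hΩ : IsOpen Ω) (ha : C11Loc a) (hf : ContDiff ℝ 1 f) (hu : ContDiffOn ℝ 2 u Ω) (e : 𝔼(n))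
    {ψ : 𝔼(n) → ℝ} (hψ : IsTestOn Ω ψ) :
    dirichletForm (fun x => fluxDeriv a (∇ u x)) (fun x => deriv f (u x)) Ω
      (fun x => ⟪∇ u x, e⟫) ψ = 0 := by
  have hX := ha.contDiffOn_flux_gradient hΩ hu
  have hg : ContDiffOn ℝ 1 (fun x => -f (u x)) Ω :=
    (hf.comp_contDiffOn (hu.of_le (by norm_num))).neg
  have hweak := h.hasWeakDivOn.fderiv_apply hΩ hX hg e ψ hψ
  have hXe := (hX.continuousOn_fderiv_of_isOpen hΩ le_rfl).clm_apply
    (continuousOn_const (c := e))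
  have hge := (hg.continuousOn_fderiv_of_isOpen hΩ le_rfl).clm_apply
    (continuousOn_const (c := e))
  obtain ⟨B, hB⟩ := hψ.2.1.isCompact.exists_bound_of_continuousOn (hXe.mono hψ.2.2)
  obtain ⟨C, hC⟩ := hψ.2.1.isCompact.exists_bound_of_continuousOn (hge.mono hψ.2.2)
  rw [← add_eq_zero_iff_eq_neg, ← integral_add
    (integrableOn_inner_gradient hΩ (hXe.aestronglyMeasurable hΩ.measurableSet) hψ hB)
    (integrableOn_mul_of_isTestOn hΩ (hge.aestronglyMeasurable hΩ.measurableSet) hψ hC)] at hweak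
  refine (setIntegral_congr_fun hΩ.measurableSet fun x hx => ?_).trans hweak
  have hux := hu.contDiffAt (hΩ.mem_nhds hx)
  have hfu : HasFDerivAt (fun y => -f (u y)) (-(deriv f (u x) • fderiv ℝ u x)) x :=
    ((hf.differentiable one_ne_zero _).hasDerivAt.comp_hasFDerivAt x
      (hux.differentiableAt two_ne_zero).hasFDerivAt).neg
  simp only [dirichletDensity, (ha.hasFDerivAt_flux_gradient hux).fderiv, hfu.fderiv,
    ContinuousLinearMap.comp_apply, fderiv_gradient_apply hux, _root_.neg_apply, _root_.smul_apply,
    inner_gradient_left, smul_eq_mul]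
  ring

theorem IsWeakSolution.isBigO_divergence_gradient (h : IsWeakSolution a f Ω u) (hΩ : IsOpen Ω)
    (ha : C11Loc a) (hpos : ∀ t ≥ (0 : ℝ), 0 < a t) (hf : ContDiff ℝ 1 f)
    (hu : ContDiffOn ℝ 2 u Ω) (hx₀ : x₀ ∈ Ω) (hfx₀ : f (u x₀) = 0) :
    divergence (∇ u) =O[𝓝 x₀] fun x => |u x - u x₀| + ‖∇ u x‖ := by
  have hgu : ContDiffOn ℝ 1 (∇ u) Ω := contDiffOn_gradient hΩ hu (by norm_num)
  have hmul {F : Type} [NormedAddCommGroup F] {g : 𝔼(n) → F} {k : 𝔼(n) → ℝ}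
      (hg : ContinuousOn g Ω) (hk : k =O[𝓝 x₀] fun x => |u x - u x₀| + ‖∇ u x‖) :
      (fun x => ‖g x‖ * k x) =O[𝓝 x₀] fun x => |u x - u x₀| + ‖∇ u x‖ := by
    simpa using
      ((hg.continuousAt (hΩ.mem_nhds hx₀)).tendsto.isBigO_one ℝ).norm_left.mul hk
  have hgrad : (fun x => ‖∇ u x‖) =O[𝓝 x₀] fun x => |u x - u x₀| + ‖∇ u x‖ :=
    Asymptotics.isBigO_of_le _ fun x => by
      rw [norm_norm, Real.norm_of_nonneg (by positivity)]
      exact le_add_of_nonneg_left (abs_nonneg _)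
  have hfu : (fun x => f (u x)) =O[𝓝 x₀] fun x => |u x - u x₀| + ‖∇ u x‖ := by
    have hlin : (fun x => f (u x)) =O[𝓝 x₀] fun x => u x - u x₀ := by
      simpa only [Function.comp_def, hfx₀, sub_zero] using
        (hf.differentiable one_ne_zero (u x₀)).isBigO_sub.comp_tendsto
          (hu.continuousOn.continuousAt (hΩ.mem_nhds hx₀))
    refine hlin.trans (Asymptotics.isBigO_of_le _ fun x => ?_)
    rw [Real.norm_eq_abs, Real.norm_of_nonneg (by positivity)]
    exact le_add_of_nonneg_right (norm_nonneg _)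
  have hquad : (fun x => ‖∇ u x‖⁻¹ * ⟪∇ u x, fderiv ℝ (∇ u) x (∇ u x)⟫) =O[𝓝 x₀]
      fun x => |u x - u x₀| + ‖∇ u x‖ :=
    (Asymptotics.isBigO_of_le _ fun x => by
      simpa using abs_inv_norm_mul_inner_apply_le (∇ u x) (fderiv ℝ (∇ u) x)).trans
      (hmul (hgu.continuousOn_fderiv_of_isOpen hΩ le_rfl) hgrad)
  have hcoef {b : ℝ → ℝ} (hb : ContinuousOn b (Ici 0)) : ContinuousOn (fun x => b ‖∇ u x‖) Ω :=
    hb.comp hgu.continuousOn.norm fun _ _ => norm_nonneg _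
  refine .trans (Asymptotics.IsBigO.of_norm_eventuallyLE ?_)
    (hmul ((hcoef ha.1.continuousOn).inv₀ fun _ _ => (hpos _ (norm_nonneg _)).ne')
      (hfu.norm_left.add (hmul (hcoef ha.locallyLipschitzOn_deriv.continuousOn) hquad.norm_left)))
  filter_upwards [hΩ.mem_nhds hx₀] with x hx
  have hstrong := h.divergence_flux_gradient_eqOn hΩ ha hf.continuous hu hx
  rw [ha.divergence_flux_gradient (hu.contDiffAt (hΩ.mem_nhds hx))] at hstrong
  rw [Pi.inv_apply, norm_inv, le_inv_mul_iff₀ (norm_pos_iff.2 (hpos _ (norm_nonneg _)).ne'),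
    ← norm_mul, ← norm_mul, eq_sub_of_add_eq hstrong, ← norm_neg (f (u x))]
  exact norm_sub_le _ _

theorem IsWeakSolution.eventually_gradient_eq_zero (h : IsWeakSolution a f Ω u) (hΩ : IsOpen Ω)
    (ha : C11Loc a) (hpos : ∀ t ≥ (0 : ℝ), 0 < a t) (hf : ContDiff ℝ 1 f)
    (hu : ContDiffOn ℝ 2 u Ω) {y : 𝔼(n)} (hx₀ : x₀ ∈ Ω) (hy : y ≠ x₀)
    (hball : ball y (dist x₀ y) ⊆ Ω) (hgrad : ∀ x ∈ ball y (dist x₀ y), ∇ u x = 0) :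
    ∀ᶠ x in 𝓝 x₀, ∇ u x = 0 := by
  have hux₀ := hu.contDiffAt (hΩ.mem_nhds hx₀)
  obtain ⟨k, hk⟩ := exists_forall_eq_of_gradient_eq_zero isOpen_ball
    (convex_ball y (dist x₀ y)).isPreconnected ((hu.differentiableOn two_ne_zero).mono hball) hgrad
  have hymem : y ∈ ball y (dist x₀ y) := mem_ball_self (dist_pos.2 hy.symm)
  have hkx₀ : u x₀ = k := by
    have hcl : x₀ ∈ closure (ball y (dist x₀ y)) := by
      rw [closure_ball y (dist_pos.2 hy.symm).ne']
      exact mem_closedBall.2 le_rfl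
    exact tendsto_nhds_unique_of_frequently_eq hux₀.continuousAt.tendsto tendsto_const_nhds
      ((mem_closure_iff_frequently.1 hcl).mono hk)
  have hfy : f (u y) = 0 := by
    have hflux : (fun x => flux a (∇ u x)) =ᶠ[𝓝 y] fun _ => 0 :=
      eventuallyEq_of_mem (isOpen_ball.mem_nhds hymem) fun x hx => by simp [flux, hgrad x hx]
    have hstrong := h.divergence_flux_gradient_eqOn hΩ ha hf.continuous hu (hball hymem)
    rw [divergence_congr_of_eventuallyEq hflux] at hstrong
    simpa [divergence] using hstrong.symm
  obtain ⟨C, hC⟩ := (h.isBigO_divergence_gradient hΩ ha hpos hf hu hx₀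
    (by rw [hkx₀, ← hk y hymem, hfy])).bound
  have hzero : (fun x => u x - u x₀) =ᶠ[𝓝 x₀] 0 :=
    eventuallyEq_zero_of_abs_divergence_gradient_le (C := C) (hux₀.sub contDiffAt_const) hy
      (fun x hx => by rw [hk x hx, hkx₀, sub_self]) <| by
      filter_upwards [hC] with x hx
      rwa [Real.norm_eq_abs, Real.norm_of_nonneg (by positivity), ← gradient_sub_const u (u x₀)]
        at hx
  filter_upwards [hzero.eventually_nhds] with x hx
  rw [← gradient_sub_const u (u x₀), EventuallyEq.gradient_eq hx]
  exact gradient_fun_const x 0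

theorem IsWeakSolution.exists_forall_eq_of_gradient_eqOn_zero (h : IsWeakSolution a f Ω u)
    (hΩ : IsOpen Ω) (hconn : IsPreconnected Ω) (ha : C11Loc a) (hpos : ∀ t ≥ (0 : ℝ), 0 < a t)
    (hf : ContDiff ℝ 1 f) (hu : ContDiffOn ℝ 2 u Ω) {V : Set 𝔼(n)} (hV : IsOpen V)
    (hVΩ : V ⊆ Ω) (hne : V.Nonempty) (hgrad : EqOn (∇ u) 0 V) : ∃ k, ∀ x ∈ Ω, u x = k := by
  obtain ⟨S, hS⟩ : ∃ S, S = Ω ∩ interior {x | ∇ u x = 0} := ⟨_, rfl⟩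
  have hSgrad : ∀ x ∈ S, x ∈ Ω ∧ ∇ u x = 0 := fun x hx => by
    rw [hS] at hx
    exact ⟨hx.1, interior_subset (s := {x | ∇ u x = 0}) hx.2⟩
  have hVS : V ⊆ S := hS ▸ subset_inter hVΩ (interior_maximal hgrad hV)
  rcases (Ω \ S).eq_empty_or_nonempty with hΩS | hdiff
  · exact exists_forall_eq_of_gradient_eq_zero hΩ hconn (hu.differentiableOn two_ne_zero)
      fun x hx => (hSgrad x (sdiff_eq_empty.1 hΩS hx)).2
  obtain ⟨y, x₀, hx₀, hy, hball⟩ := exists_closedBall_diff_singleton_subset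
    (hS ▸ hΩ.inter isOpen_interior) hΩ hconn (hne.mono fun x hx => ⟨hVΩ hx, hVS hx⟩) hdiff
  have hballS : ∀ x ∈ ball y (dist x₀ y), x ∈ S := fun x hx =>
    hball ⟨ball_subset_closedBall hx, fun h => (mem_ball.1 hx).ne (h ▸ rfl)⟩
  refine absurd ?_ hx₀.2
  rw [hS]
  exact ⟨hx₀.1, mem_interior_iff_mem_nhds.2 <| h.eventually_gradient_eq_zero hΩ ha hpos hf hu
    hx₀.1 hy (fun x hx => (hSgrad x (hballS x hx)).1) fun x hx => (hSgrad x (hballS x hx)).2⟩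

end Linearization

section MonotoneDirection

variable {Ω Ω₀ : Set 𝔼(n)} {a f : ℝ → ℝ} {u : 𝔼(n) → ℝ} {Du : 𝔼(n) → 𝔼(n)} {e : 𝔼(n)}

theorem dirichletForm_congr_of_eqOn {A B : 𝔼(n) → 𝔼(n) →L[ℝ] 𝔼(n)} (hΩ : IsOpen Ω)
    (h : EqOn A B Ω) (c φ ψ : 𝔼(n) → ℝ) :
    dirichletForm A c Ω φ ψ = dirichletForm B c Ω φ ψ :=
  setIntegral_congr_fun hΩ.measurableSet fun x hx => by
    simp only [dirichletDensity, h hx]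

theorem IsStable.dirichletForm_self_nonneg (h : IsStable a f Ω u) (hΩ : IsOpen Ω) (ha : C11Loc a)
    (hf : ContDiff ℝ 1 f) (hu : ContDiffOn ℝ 1 u Ω) {ψ : 𝔼(n) → ℝ} (hψ : IsTestOn Ω ψ) :
    0 ≤ dirichletForm (fun x => fluxDeriv a (∇ u x)) (fun x => deriv f (u x)) Ω ψ ψ := by
  have hA : ContinuousOn (fun x => fluxDeriv a (∇ u x)) Ω :=
    ha.locallyLipschitz_fluxDeriv.continuous.comp_continuousOn
      (contDiffOn_gradient (m := 0) hΩ hu (by norm_num)).continuousOn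
  have hc : ContinuousOn (fun x => deriv f (u x)) Ω :=
    hf.continuous_deriv_one.comp_continuousOn hu.continuousOn
  obtain ⟨M, hM⟩ := hψ.2.1.isCompact.exists_bound_of_continuousOn (hc.mono hψ.2.2)
  have hpot := integrableOn_mul_of_isTestOn hΩ (hc.aestronglyMeasurable hΩ.measurableSet)
    (hψ.mul hψ.locallyLipschitz) fun x hx => hM x (tsupport_mul_subset_left hx)
  have hgrad : IntegrableOn (fun x => ⟪fluxDeriv a (∇ u x) (∇ ψ x), ∇ ψ x⟫) Ω := by
    refine ((integrableOn_dirichletDensity hΩ hA hc hψ.locallyLipschitz.locallyLipschitzOn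
      hψ).add hpot).congr_fun (fun x _ => ?_) hΩ.measurableSet
    simp only [Pi.add_apply, dirichletDensity]
    ring
  calc 0 ≤ (∫ x in Ω, ⟪fluxDeriv a (∇ u x) (∇ ψ x), ∇ ψ x⟫)
        - ∫ x in Ω, ψ x * ψ x * deriv f (u x) := by
        simpa only [fluxDeriv_eq_Aop, mul_comm, sq, sub_nonneg] using h ψ hψ
    _ = ∫ x in Ω, dirichletDensity (fun x => fluxDeriv a (∇ u x)) (fun x => deriv f (u x))
        ψ ψ x := by
        rw [← integral_sub hgrad hpot]
        exact setIntegral_congr_fun hΩ.measurableSet fun x _ => by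
          simp only [dirichletDensity]
          ring

theorem isPositivePiece_indicator {v V : 𝔼(n) → ℝ} (hΩ : IsOpen Ω) (hsub : Ω₀ ⊆ Ω)
    (hv : LocallyLipschitzOn Ω v) (hV : ContinuousOn V (closure Ω))
    (hVv : EqOn V v Ω) (hbd : ∀ x ∈ frontier Ω₀, V x = 0) :
    IsPositivePiece Ω v (Ω₀.indicator fun x => max (V x) 0) := by
  have hcont : Continuous (Ω₀.indicator fun x => max (V x) 0) :=
    continuous_indicator (fun x hx => by simp [hbd x hx])
      ((hV.mono (closure_mono hsub)).sup continuousOn_const)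
  refine ⟨hcont, fun x => indicator_nonneg (fun x _ => le_max_right _ _) x, ?_,
    fun x hx => hsub (mem_of_indicator_ne_zero hx.ne'), fun x hx => ?_⟩
  · rw [indicator_congr fun x hx => by rw [hVv (hsub hx)]]
    refine locallyLipschitzOn_indicator hΩ (locallyLipschitzOn_max_const hv 0) fun x hx => ?_
    rw [← hVv hx.1, hbd x hx.2, max_self]
  · filter_upwards [hcont.continuousAt.eventually (lt_mem_nhds hx)] with y hy
    have hyΩ₀ : y ∈ Ω₀ := mem_of_indicator_ne_zero hy.ne'
    rw [indicator_of_mem hyΩ₀] at hy ⊢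
    rw [← hVv (hsub hyΩ₀), max_eq_left ((lt_max_iff.1 hy).resolve_right (lt_irrefl 0)).le]

theorem setIntegral_indicator_sq_mul_le {A : 𝔼(n) → 𝔼(n) →L[ℝ] 𝔼(n)} {φ : 𝔼(n) → ℝ}
    (hΩ : IsOpen Ω) (hΩ₀ : IsOpen Ω₀) (hsub : Ω₀ ⊆ Ω)
    (hDu : ContinuousOn Du (closure Ω₀))
    (hA : ContinuousOn A (closure Ω₀)) (hpos : ∀ x p, 0 ≤ ⟪A x p, p⟫) (he : ‖e‖ ≤ 1)
    (hφ : LocallyLipschitz φ) (hφc : HasCompactSupport φ) :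
    ∫ x in Ω, Ω₀.indicator (fun x => max ⟪Du x, e⟫ 0) x ^ 2 * ⟪A x (∇ φ x), ∇ φ x⟫ ≤
      ∫ x in Ω₀, ‖Du x‖ ^ 2 * ⟪A x (∇ φ x), ∇ φ x⟫ := by
  have hInt := integrableOn_mul_inner_apply_gradient hΩ₀ (hDu.norm.pow 2) hA hφ hφc
  rw [setIntegral_eq_of_subset_of_forall_sdiff_eq_zero hΩ.measurableSet hsub fun x hx => by
    rw [indicator_of_notMem hx.2, zero_pow two_ne_zero, zero_mul]]
  have hle : ∀ x ∈ Ω₀, Ω₀.indicator (fun x => max ⟪Du x, e⟫ 0) x ^ 2 * ⟪A x (∇ φ x), ∇ φ x⟫ ≤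
      ‖Du x‖ ^ 2 * ⟪A x (∇ φ x), ∇ φ x⟫ := fun x hx => by
    rw [indicator_of_mem hx]
    gcongr
    · exact hpos _ _
    · exact max_le ((real_inner_le_norm _ _).trans (mul_le_of_le_one_right (norm_nonneg _) he))
        (norm_nonneg _)
  exact integral_mono_of_nonneg
    (Eventually.of_forall fun x => mul_nonneg (sq_nonneg _) (hpos _ _)) hInt
    (ae_restrict_of_forall_mem hΩ₀.measurableSet hle)

theorem isPositivePiece_indicator_inner (hΩ : IsOpen Ω) (hsub : Ω₀ ⊆ Ω) (hu : ContDiffOn ℝ 2 u Ω)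
    (hDu : EqOn Du (∇ u) Ω) (hDuc : ContinuousOn Du (closure Ω))
    (hbd : ∀ p ∈ frontier Ω₀, Du p = 0) (e : 𝔼(n)) :
    IsPositivePiece Ω (fun x => ⟪∇ u x, e⟫) (Ω₀.indicator fun x => max ⟪Du x, e⟫ 0) := by
  have hgrad : ContDiffOn ℝ 1 (∇ u) Ω := contDiffOn_gradient hΩ hu (by norm_num)
  exact isPositivePiece_indicator hΩ hsub
    (locallyLipschitzOn_of_contDiffOn hΩ (hgrad.inner ℝ contDiffOn_const))
    (hDuc.inner continuousOn_const) (fun x hx => by rw [hDu hx])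
    fun x hx => by rw [hbd x hx, inner_zero_left]

theorem IsStable.dirichletForm_indicator_eq_zero (hstab : IsStable a f Ω u)
    (hsol : IsWeakSolution a f Ω u) (hΩ : IsOpen Ω) (ha : C11Loc a) (hpos : ∀ t ≥ (0 : ℝ), 0 < a t)
    (hlam : ∀ t ≥ (0 : ℝ), 0 < lam1 a t) (hf : ContDiff ℝ 1 f) (hu : ContDiffOn ℝ 2 u Ω)
    (hucl : ContinuousOn u (closure Ω)) (hDu : EqOn Du (∇ u) Ω) (hDuc : ContinuousOn Du (closure Ω))
    (hΩ₀ : IsOpen Ω₀) (hsub : Ω₀ ⊆ Ω) (hbd : ∀ p ∈ frontier Ω₀, Du p = 0)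
    (hmeg : ModerateEnergyGrowth a u Ω₀) (he : ‖e‖ ≤ 1) {ζ : 𝔼(n) → ℝ} (hζ : IsTestOn Ω ζ) :
    dirichletForm (fun x => fluxDeriv a (∇ u x)) (fun x => deriv f (u x)) Ω
      (Ω₀.indicator fun x => max ⟪Du x, e⟫ 0) ζ = 0 := by
  obtain ⟨φ, hφ_lip, hφ_supp, -, hφ_lim, hφ_energy⟩ := hmeg
  have hφ j : LocallyLipschitz (φ j) := (hφ_lip j).choose_spec.locallyLipschitz
  have hA : ContinuousOn (fun x => fluxDeriv a (Du x)) (closure Ω) :=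
    ha.locallyLipschitz_fluxDeriv.continuous.comp_continuousOn hDuc
  have hcongr := dirichletForm_congr_of_eqOn hΩ
    (fun x hx => congrArg (fluxDeriv a) (hDu hx) : EqOn (fun x => fluxDeriv a (Du x)) _ Ω)
    (fun x => deriv f (u x))
  have hv : LocallyLipschitzOn Ω fun x => ⟪∇ u x, e⟫ := locallyLipschitzOn_of_contDiffOn hΩ
    ((contDiffOn_gradient (m := 1) hΩ hu (by norm_num)).inner ℝ contDiffOn_const)
  have hnonneg x p : 0 ≤ ⟪fluxDeriv a (Du x) p, p⟫ := inner_fluxDeriv_self_nonneg hpos hlam _ _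
  have hsupp : tsupport (Ω₀.indicator fun x => max ⟪Du x, e⟫ 0) ⊆ closure Ω₀ :=
    closure_mono support_indicator_subset
  rw [← hcongr]
  refine (isPositivePiece_indicator_inner hΩ hsub hu hDu hDuc hbd
    e).dirichletForm_eq_zero_of_stable hΩ hA
    (hf.continuous_deriv_one.comp_continuousOn hucl) (fun x => inner_fluxDeriv_comm a (Du x))
    hnonneg (fun ψ hψ => ?_) hv (fun ψ hψ => ?_) hφ hφ_supp
    (fun K hK hKw => hφ_lim K hK (hKw.trans hsupp)) ?_ hζ
  · rw [hcongr]
    exact hstab.dirichletForm_self_nonneg hΩ ha hf (hu.of_le one_le_two) hψ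
  · rw [hcongr]
    exact hsol.dirichletForm_inner_gradient_eq_zero hΩ ha hf hu e hψ
  refine squeeze_zero (fun j => integral_nonneg fun x => mul_nonneg (sq_nonneg _) (hnonneg _ _))
    (fun j => ?_) hφ_energy
  refine (setIntegral_indicator_sq_mul_le hΩ hΩ₀ hsub (hDuc.mono (closure_mono hsub))
    (hA.mono (closure_mono hsub)) hnonneg he (hφ j) (hφ_supp j)).trans_eq ?_
  exact setIntegral_congr_fun hΩ₀.measurableSet fun x hx => by
    simp only [hDu (hsub hx), fluxDeriv_eq_Aop]

theorem IsStable.indicator_pos (hstab : IsStable a f Ω u)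
    (hsol : IsWeakSolution a f Ω u) (hΩ : IsOpen Ω) (hconn : IsPreconnected Ω) (ha : C11Loc a)
    (hpos : ∀ t ≥ (0 : ℝ), 0 < a t) (hlam : ∀ t ≥ (0 : ℝ), 0 < lam1 a t) (hf : ContDiff ℝ 1 f)
    (hu : ContDiffOn ℝ 2 u Ω) (hucl : ContinuousOn u (closure Ω)) (hDu : EqOn Du (∇ u) Ω)
    (hDuc : ContinuousOn Du (closure Ω)) (hΩ₀ : IsOpen Ω₀) (hsub : Ω₀ ⊆ Ω)
    (hbd : ∀ p ∈ frontier Ω₀, Du p = 0) (hmeg : ModerateEnergyGrowth a u Ω₀) (he : ‖e‖ ≤ 1)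
    (hne : ∃ x ∈ Ω₀, 0 < ⟪Du x, e⟫) : ∀ x ∈ Ω, 0 < Ω₀.indicator (fun x => max ⟪Du x, e⟫ 0) x := by
  have hA : LocallyLipschitzOn Ω fun x => fluxDeriv a (∇ u x) :=
    locallyLipschitzOn_comp ha.locallyLipschitz_fluxDeriv.locallyLipschitzOn
      (locallyLipschitzOn_of_contDiffOn hΩ (contDiffOn_gradient hΩ hu (by norm_num)))
      (mapsTo_univ _ _)
  have hw := isPositivePiece_indicator_inner hΩ hsub hu hDu hDuc hbd e
  obtain ⟨x₀, hx₀, hpos₀⟩ := hne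
  refine pos_of_supersolution hΩ hconn hA (fun x v => inner_fluxDeriv_self_pos hpos hlam (∇ u x))
    (hf.continuous_deriv_one.comp_continuousOn hu.continuousOn) hw.locallyLipschitzOn
    (fun x _ => hw.nonneg x) (fun ψ hψ _ => ?_) ⟨x₀, hsub hx₀, ?_⟩
  · exact (hstab.dirichletForm_indicator_eq_zero hsol hΩ ha hpos hlam hf hu hucl hDu hDuc hΩ₀ hsub
      hbd hmeg he hψ).ge
  · rw [indicator_of_mem hx₀]
    exact lt_max_of_lt_left hpos₀

theorem no_critical_points_from_vanishing_boundary_gradient_general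
    (hΩ : IsOpen Ω) (hconn : IsPreconnected Ω) (ha : C11Loc a) (hapos : ∀ t ≥ (0 : ℝ), 0 < a t)
    (hlam : ∀ t ≥ (0 : ℝ), 0 < lam1 a t) (hf : ContDiff ℝ 1 f) (hu : ContDiffOn ℝ 2 u Ω)
    (hucl : ContinuousOn u (closure Ω)) (hDu : EqOn Du (∇ u) Ω) (hDuc : ContinuousOn Du (closure Ω))
    (hnc : ¬ ∃ c : ℝ, ∀ x ∈ Ω, u x = c) (hsol : IsWeakSolution a f Ω u)
    (hstab : IsStable a f Ω u) (hΩ₀ : IsOpen Ω₀) (hne : Ω₀.Nonempty) (hsub : Ω₀ ⊆ Ω)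
    (hbd : ∀ p ∈ frontier Ω₀, Du p = 0) (hmeg : ModerateEnergyGrowth a u Ω₀) :
    Ω₀ = Ω ∧ (∀ x ∈ Ω, ∇ u x ≠ 0) ∧ ∃ e : 𝔼(n), ‖e‖ = 1 ∧ ∀ x ∈ Ω, 0 < ⟪∇ u x, e⟫ := by
  obtain ⟨x₁, hx₁, hgrad⟩ : ∃ x ∈ Ω₀, ∇ u x ≠ 0 := by
    by_contra! h
    exact hnc (hsol.exists_forall_eq_of_gradient_eqOn_zero hΩ hconn ha hapos hf hu hΩ₀ hsub hne h)
  obtain ⟨e, he, hpos₁⟩ : ∃ e : 𝔼(n), ‖e‖ = 1 ∧ 0 < ⟪∇ u x₁, e⟫ := by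
    refine ⟨‖∇ u x₁‖⁻¹ • ∇ u x₁, norm_smul_inv_norm hgrad, ?_⟩
    rw [real_inner_smul_right]
    exact mul_pos (inv_pos.2 (norm_pos_iff.2 hgrad)) (real_inner_self_pos.2 hgrad)
  have hw := hstab.indicator_pos hsol hΩ hconn ha hapos hlam hf hu hucl hDu hDuc hΩ₀ hsub hbd
    hmeg he.le ⟨x₁, hx₁, by rwa [hDu (hsub hx₁)]⟩
  have hmem x (hx : x ∈ Ω) : x ∈ Ω₀ := mem_of_indicator_ne_zero (hw x hx).ne'
  have hmono x (hx : x ∈ Ω) : 0 < ⟪∇ u x, e⟫ := by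
    simpa [hmem x hx, hDu hx] using hw x hx
  refine ⟨hsub.antisymm hmem, fun x hx h => ?_, e, he, hmono⟩
  simpa [h] using hmono x hx

end MonotoneDirection

/-- Lemma 5.2 of the paper: if `∇u` vanishes on the whole boundary of a connected open
`Ω₀ ⊆ Ω` and `u` has moderate energy growth in `Ω₀`, then `Ω₀ = Ω`, `u` has no interior
critical points, and `u` is strictly monotone in some direction `e`. -/
theorem no_critical_points_from_vanishing_boundary_gradient
    (n : ℕ) (Ω : Set (EuclideanSpace ℝ (Fin n)))
    (hΩ : IsCkDomain 1 Ω)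
    (a : ℝ → ℝ) (ha : C11Loc a)
    (hapos : ∀ t ≥ (0 : ℝ), 0 < a t) (hlam : ∀ t ≥ (0 : ℝ), 0 < lam1 a t)
    (f : ℝ → ℝ) (hf : ContDiff ℝ 1 f)
    (u : EuclideanSpace ℝ (Fin n) → ℝ)
    (hu3 : ContDiffOn ℝ 3 u Ω) (hucl : ContinuousOn u (closure Ω))
    (Du : EuclideanSpace ℝ (Fin n) → EuclideanSpace ℝ (Fin n))
    (hDu : ∀ x ∈ Ω, Du x = gradient u x) (hDuc : ContinuousOn Du (closure Ω))
    (hnc : ¬ ∃ c : ℝ, ∀ x ∈ Ω, u x = c)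
    (hsol : IsWeakSolution a f Ω u) (hstab : IsStable a f Ω u)
    (Ω₀ : Set (EuclideanSpace ℝ (Fin n)))
    (hΩ₀o : IsOpen Ω₀) (hΩ₀c : IsConnected Ω₀) (hΩ₀sub : Ω₀ ⊆ Ω)
    (hbd : ∀ p ∈ frontier Ω₀, Du p = 0)
    (hmeg : ModerateEnergyGrowth a u Ω₀) :
    Ω₀ = Ω ∧ (∀ x ∈ Ω, gradient u x ≠ 0) ∧
      ∃ e : EuclideanSpace ℝ (Fin n), ‖e‖ = 1 ∧ ∀ x ∈ Ω, 0 < ⟪gradient u x, e⟫ :=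
  no_critical_points_from_vanishing_boundary_gradient_general hΩ.2.1 hΩ.2.2.1.isPreconnected ha
    hapos hlam hf (hu3.of_le (by norm_num)) hucl hDu hDuc hnc hsol hstab hΩ₀o hΩ₀c.nonempty hΩ₀sub
    hbd hmeg
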